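/- There exists a constant δ > 0 and N ∈ ℕ such that for all n ≥ N, n!·(c − exp(−δ·(log n · log log n)^{1/2}))^n ≤ C(n) ≤ n!·(c + exp(−δ·(log n · log log n)^{1/2}))^n. In other words, C(n) = n!·(c + exp(−Ω((log n · log log n)^{1/2})))^n. -/

import Mathlib

open Real Filter

/-- `C(n)`: the number of coprime permutations of `{1, …, n}`,
i.e. permutations `σ` with `gcd(m, σ(m)) = 1` for all `m ∈ {1, …, n}`. -/
noncomputable def coprimePermCount (n : ℕ) : ℕ :=
  Nat.card {σ : Equiv.Perm (Fin n) // ∀ m : Fin n, Nat.gcd (m.1 + 1) ((σ m).1 + 1) = 1}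

/-- The constant `c = ∏_p (p-1)^{2(1-1/p)} / (p · (p-2)^{1-2/p})`, where the factor at
`p = 2` is `1/2` (real powers, with `(0:ℝ) ^ (0:ℝ) = 1`). -/
noncomputable def coprimeConst : ℝ :=
  ∏' p : Nat.Primes,
    (((p : ℕ) : ℝ) - 1) ^ (2 * (1 - 1 / ((p : ℕ) : ℝ))) /
      (((p : ℕ) : ℝ) * (((p : ℕ) : ℝ) - 2) ^ (1 - 2 / ((p : ℕ) : ℝ)))

theorem div_exp_pow_le_factorial (n : ℕ) : ((n : ℝ) / exp 1) ^ n ≤ n.factorial := by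
  have h := Real.pow_div_factorial_le_exp (x := n) (by positivity) n
  rw [div_pow, ← exp_nat_mul, mul_one, div_le_iff₀ (exp_pos _)]
  rw [div_le_iff₀ (by positivity)] at h
  linarith

theorem factorial_le_mul_div_exp_pow (n : ℕ) (hn : 1 ≤ n) :
    (n.factorial : ℝ) ≤ exp 1 * n * ((n : ℝ) / exp 1) ^ n := by
  induction n, hn using Nat.le_induction with
  | base => simp [div_eq_mul_inv]
  | succ n hn ih =>
    have hn0 : (0 : ℝ) < n := by exact_mod_cast hn
    have key : exp 1 * (n : ℝ) ^ (n + 1) ≤ ((n : ℝ) + 1) ^ (n + 1) := by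
      have h1 : 1 - (((n : ℝ) + 1) / n)⁻¹ ≤ log (((n : ℝ) + 1) / n) :=
        one_sub_inv_le_log_of_pos (by positivity)
      have h2 : 1 - (((n : ℝ) + 1) / n)⁻¹ = 1 / (n + 1) := by field_simp; ring
      have h3 : exp 1 ≤ (((n : ℝ) + 1) / n) ^ (n + 1) := by
        rw [← exp_log (show 0 < (((n : ℝ) + 1) / n) by positivity), ← exp_nat_mul]
        apply exp_le_exp.2
        rw [h2, div_le_iff₀ (by positivity)] at h1
        push_cast
        linarith
      rw [div_pow, le_div_iff₀ (by positivity)] at h3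
      exact h3
    have e0 := exp_pos 1
    rw [Nat.factorial_succ]
    push_cast
    calc ((n : ℝ) + 1) * n.factorial
        ≤ (n + 1) * (exp 1 * n * ((n : ℝ) / exp 1) ^ n) := by gcongr
      _ = (n + 1) * (exp 1 * (n : ℝ) ^ (n + 1)) / exp 1 ^ n := by
          rw [div_pow]; ring
      _ ≤ (n + 1) * (((n : ℝ) + 1) ^ (n + 1)) / exp 1 ^ n := by gcongr
      _ = _ := by rw [div_pow]; field_simp; ring

theorem factorial_le_mul_div_exp_pow_of_le {n h : ℕ} (hn : n ≤ h) (hh : 1 ≤ h) :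
    (n.factorial : ℝ) ≤ exp 1 * h * ((n : ℝ) / exp 1) ^ n := by
  rcases Nat.eq_zero_or_pos n with rfl | hpos
  · have : (1 : ℝ) ≤ h := by exact_mod_cast hh
    have := add_one_le_exp (1 : ℝ)
    simp
    nlinarith
  · refine (factorial_le_mul_div_exp_pow n hpos).trans ?_
    have : (n : ℝ) ≤ h := by exact_mod_cast hn
    gcongr

theorem div_exp_pow_le_descFactorial {n r : ℕ} (hr : r ≤ n) :
    ((n : ℝ) / exp 1) ^ r ≤ n.descFactorial r := by
  obtain ⟨m, rfl⟩ := Nat.exists_eq_add_of_le' hr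
  have key : ∀ r : ℕ, ((m + r : ℕ) : ℝ) ^ r * m.factorial ≤ exp r * (m + r).factorial := by
    intro r
    induction r with
    | zero => simp
    | succ r ih =>
      rcases Nat.eq_zero_or_pos (m + r) with h0 | hpos
      · obtain ⟨rfl, rfl⟩ : m = 0 ∧ r = 0 := by omega
        simp
      · have hp : (0 : ℝ) < ((m + r : ℕ) : ℝ) := by exact_mod_cast hpos
        have h1 : (((m + r : ℕ) : ℝ) + 1) ^ r ≤ exp 1 * ((m + r : ℕ) : ℝ) ^ r := by
          have h2 : (((m + r : ℕ) : ℝ) + 1) / ((m + r : ℕ) : ℝ) ≤ exp (1 / ((m + r : ℕ) : ℝ)) := by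
            have := add_one_le_exp (1 / ((m + r : ℕ) : ℝ))
            rw [add_div, div_self hp.ne']; linarith
          have h3 := pow_le_pow_left₀ (by positivity) h2 r
          rw [← exp_nat_mul, div_pow, div_le_iff₀ (by positivity)] at h3
          refine h3.trans ?_
          gcongr
          rw [mul_one_div, div_le_one hp]
          push_cast; linarith [(Nat.cast_nonneg m : (0 : ℝ) ≤ m)]
        rw [← Nat.add_assoc, Nat.factorial_succ, pow_succ]
        push_cast at *
        rw [exp_add]
        have := mul_le_mul_of_nonneg_left ih (exp_pos 1).le
        have hm : (0 : ℝ) ≤ m.factorial := by positivity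
        have h4 := mul_le_mul_of_nonneg_right h1 hm
        have h5 : (0 : ℝ) ≤ (m : ℝ) + r + 1 := by positivity
        nlinarith [mul_le_mul_of_nonneg_left (h4.trans (by linarith :
          exp 1 * ((m : ℝ) + r) ^ r * m.factorial ≤ exp 1 * (exp r * (m + r).factorial))) h5]
  have h := key r
  have h2 : m.factorial * (m + r).descFactorial r = (m + r).factorial := by
    have := Nat.factorial_mul_descFactorial hr
    rwa [Nat.add_sub_cancel] at this
  rw [← h2] at h
  push_cast at h ⊢
  have hm : (0 : ℝ) < m.factorial := by positivity
  rw [div_pow, ← exp_nat_mul, mul_one, div_le_iff₀ (exp_pos _)]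
  nlinarith

/-- Permutations whose composite with `c` is a given word: at most as many as permutations
preserving `c`. -/
theorem card_perm_comp_eq_le {α τ : Type*} [Fintype α] [DecidableEq α] [DecidableEq τ]
    (c w : α → τ) :
    (Finset.univ.filter fun f : Equiv.Perm α => c ∘ f = w).card ≤
      ∏ t ∈ Finset.univ.image c, (Finset.univ.filter fun a => c a = t).card.factorial := by
  have h := DomMulAct.stabilizer_card' c
  simp only [Fintype.card_subtype] at h
  rw [← h]
  rcases (Finset.univ.filter fun f : Equiv.Perm α => c ∘ f = w).eq_empty_or_nonempty with h0 | ⟨f₀, hf₀⟩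
  · rw [h0]; simp
  · refine Finset.card_le_card_of_injOn (fun f => f * f₀⁻¹) ?_ ?_
    · intro f hf
      simp only [Finset.coe_filter, Finset.mem_univ, true_and, Set.mem_ofPred_eq, Finset.mem_filter] at hf hf₀ ⊢
      ext a
      have h1 := congrFun (hf.trans hf₀.symm) (f₀.symm a)
      simpa using h1
    · intro f _ g _ hfg
      simpa using hfg

/-- Upper bound for the number of permutations compatible with a relation between rows and
column classes, in terms of weights on the columns depending on the class only. -/
theorem card_perm_mul_prod_le {h : ℕ} {τ : Type*} [DecidableEq τ] (hh : 1 ≤ h)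
    (A : Fin h → τ → Prop) (c : Fin h → τ) [∀ i t, Decidable (A i t)] (g : τ → ℝ)
    (hg : ∀ t, 0 < g t) :
    ((Finset.univ.filter fun f : Equiv.Perm (Fin h) => ∀ i, A i (c (f i))).card : ℝ) *
        ∏ j, g (c j) ≤
      (exp 1 * h) ^ (Finset.univ.image c).card * exp (-(h : ℝ)) *
        ∏ i, ∑ j with A i (c j), g (c j) := by
  set μ : τ → ℕ := fun t => (Finset.univ.filter fun a => c a = t).card with hμ
  set T := Finset.univ.image c with hT
  set P := Finset.univ.filter fun f : Equiv.Perm (Fin h) => ∀ i, A i (c (f i)) with hP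
  set y : τ → ℝ := fun t => μ t * g t with hy
  have hcard : (P.card : ℝ) ≤ (P.image fun f : Equiv.Perm (Fin h) => c ∘ f).card * ∏ t ∈ T, ((μ t).factorial : ℝ) := by
    have := Finset.card_le_mul_card_image (f := fun f : Equiv.Perm (Fin h) => c ∘ f) P
      (∏ t ∈ T, (μ t).factorial) (by
        intro w _
        refine le_trans (Finset.card_le_card ?_) (card_perm_comp_eq_le c w)
        intro f hf
        simp only [Finset.mem_filter, Finset.mem_univ, true_and] at hf ⊢
        exact hf.2)
    rw [mul_comm]
    exact_mod_cast this
  have hμT : ∀ t ∈ T, 1 ≤ μ t := by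
    intro t ht
    obtain ⟨j, -, rfl⟩ := Finset.mem_image.1 ht
    exact Finset.card_pos.2 ⟨j, by simp⟩
  have hμh : ∀ t, μ t ≤ h := fun t => (Finset.card_le_univ _).trans (by simp)
  have hfib : ∀ F : τ → ℝ, ∏ j, F (c j) = ∏ t ∈ T, F t ^ μ t := by
    intro F
    rw [← Finset.prod_fiberwise_of_maps_to (t := T) (g := c) (fun j _ => Finset.mem_image_of_mem _ (Finset.mem_univ j))]
    refine Finset.prod_congr rfl fun t _ => ?_
    rw [Finset.prod_congr rfl (g := fun _ => F t), Finset.prod_const]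
    intro j hj
    rw [(Finset.mem_filter.1 hj).2]
  have hsum : ∀ i, ∑ j with A i (c j), g (c j) = ∑ t ∈ T with A i t, y t := by
    intro i
    rw [← Finset.sum_fiberwise_of_maps_to (t := T.filter (A i ·)) (g := c)]
    · refine Finset.sum_congr rfl fun t ht => ?_
      rw [Finset.sum_congr rfl (g := fun _ => g t), Finset.sum_const, nsmul_eq_mul]
      · simp only [hy, hμ]
        congr 3
        ext j
        simp only [Finset.mem_filter, Finset.mem_univ, true_and] at ht ⊢
        constructor
        · rintro ⟨_, h⟩; exact h
        · rintro rfl; exact ⟨ht.2, rfl⟩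
      · intro j hj
        rw [(Finset.mem_filter.1 hj).2]
    · intro j hj
      simp only [Finset.mem_filter, Finset.mem_univ, true_and] at hj ⊢
      exact ⟨Finset.mem_image_of_mem _ (Finset.mem_univ j), hj⟩
  have hwords : ((P.image fun f : Equiv.Perm (Fin h) => c ∘ f).card : ℝ) * ∏ j, y (c j) ≤
      ∏ i, ∑ j with A i (c j), g (c j) := by
    simp_rw [hsum]
    rw [Finset.prod_univ_sum, ← nsmul_eq_mul, ← Finset.sum_const]
    have hre : ∀ w ∈ P.image (fun f : Equiv.Perm (Fin h) => c ∘ f), ∏ j, y (c j) = ∏ i, y (w i) := by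
      intro w hw
      obtain ⟨f, -, rfl⟩ := Finset.mem_image.1 hw
      exact (Equiv.prod_comp f (fun j => y (c j))).symm
    rw [Finset.sum_congr rfl hre]
    refine Finset.sum_le_sum_of_subset_of_nonneg ?_ ?_
    · intro w hw
      obtain ⟨f, hf, rfl⟩ := Finset.mem_image.1 hw
      rw [Fintype.mem_piFinset]
      intro i
      simp only [hP, Finset.mem_filter, Finset.mem_univ, true_and] at hf
      simp only [Finset.mem_filter, Function.comp_apply]
      exact ⟨Finset.mem_image_of_mem _ (Finset.mem_univ _), hf i⟩
    · intro w _ _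
      exact Finset.prod_nonneg fun i _ => mul_nonneg (Nat.cast_nonneg _) (hg _).le
  have hy2 : ∏ j, y (c j) = (∏ t ∈ T, (μ t : ℝ) ^ μ t) * ∏ j, g (c j) := by
    rw [← hfib (fun t => (μ t : ℝ)), ← Finset.prod_mul_distrib]
  have hfact : ∏ t ∈ T, ((μ t).factorial : ℝ) ≤
      (exp 1 * h) ^ T.card * exp (-(h : ℝ)) * ∏ t ∈ T, (μ t : ℝ) ^ μ t := by
    have h1 : exp (-(h : ℝ)) = ∏ t ∈ T, (exp (-1)) ^ μ t := by
      rw [← hfib (fun _ => exp (-1))]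
      simp [← exp_nat_mul]
    rw [h1, ← Finset.prod_const, ← Finset.prod_mul_distrib, ← Finset.prod_mul_distrib]
    refine Finset.prod_le_prod (fun _ _ => by positivity) fun t ht => ?_
    refine (factorial_le_mul_div_exp_pow_of_le (hμh t) hh).trans (le_of_eq ?_)
    rw [exp_neg, div_pow, inv_pow]
    ring
  have hG : 0 < ∏ j, g (c j) := Finset.prod_pos fun _ _ => hg _
  have hM : 0 < ∏ t ∈ T, (μ t : ℝ) ^ μ t :=
    Finset.prod_pos fun t ht => pow_pos (by exact_mod_cast hμT t ht) _
  set N : ℝ := ((P.image fun f : Equiv.Perm (Fin h) => c ∘ f).card : ℝ)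
  calc (P.card : ℝ) * ∏ j, g (c j) ≤ (N * ∏ t ∈ T, ((μ t).factorial : ℝ)) * ∏ j, g (c j) := by
        gcongr
    _ ≤ (N * ((exp 1 * h) ^ T.card * exp (-(h : ℝ)) * ∏ t ∈ T, (μ t : ℝ) ^ μ t)) *
          ∏ j, g (c j) := by gcongr
    _ = (exp 1 * h) ^ T.card * exp (-(h : ℝ)) * (N * ∏ j, y (c j)) := by rw [hy2]; ring
    _ ≤ _ := by gcongr

/-- Greedy choice: number of systems of distinct representatives when sets attached to
different classes are disjoint. -/
theorem prod_descFactorial_le_card_injective_fin {J τ : Type*} [Fintype J] [DecidableEq J]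
    [DecidableEq τ] (c : J → τ) (α : τ → ℕ) (m : ℕ) (t : Fin m → τ) (A : Fin m → Finset J)
    (hA : ∀ x, ∀ j ∈ A x, c j = t x) (hα : ∀ x, α (t x) ≤ (A x).card) (G : Finset τ)
    (hG : ∀ x, t x ∈ G) :
    ∏ T ∈ G, (α T).descFactorial (Finset.univ.filter fun x => t x = T).card ≤
      (Finset.univ.filter fun κ : Fin m → J => Function.Injective κ ∧ ∀ x, κ x ∈ A x).card := by
  induction m with
  | zero =>
    simp only [Finset.univ_eq_empty, Finset.filter_empty, Finset.card_empty,
      Nat.descFactorial_zero, Finset.prod_const_one]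
    exact Finset.card_pos.2 ⟨Fin.elim0,
      Finset.mem_filter.2 ⟨Finset.mem_univ _, fun a => a.elim0, fun x => x.elim0⟩⟩
  | succ m ih =>
    have ih' := ih (fun x => t x.succ) (fun x => A x.succ) (fun x => hA _) (fun x => hα _)
      (fun x => hG _)
    set P := Finset.univ.filter fun κ : Fin m → J => Function.Injective κ ∧ ∀ x, κ x ∈ A x.succ
      with hP
    set n₀ := (Finset.univ.filter fun x : Fin m => t x.succ = t 0).card with hn₀
    have hstep : P.card * (α (t 0) - n₀) ≤
        (Finset.univ.filter fun κ : Fin (m + 1) → J =>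
          Function.Injective κ ∧ ∀ x, κ x ∈ A x).card := by
      calc P.card * (α (t 0) - n₀)
          = ∑ κ ∈ P, (α (t 0) - n₀) := by simp
        _ ≤ ∑ κ ∈ P, (A 0 \ Finset.univ.image κ).card := by
            refine Finset.sum_le_sum fun κ hκ => ?_
            simp only [hP, Finset.mem_filter, Finset.mem_univ, true_and] at hκ
            have h1 : (A 0 ∩ Finset.univ.image κ).card ≤ n₀ := by
              refine le_trans (Finset.card_le_card (t := (Finset.univ.filter
                fun x : Fin m => t x.succ = t 0).image κ) ?_) Finset.card_image_le
              intro j hj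
              obtain ⟨hj0, hj1⟩ := Finset.mem_inter.1 hj
              obtain ⟨x, -, rfl⟩ := Finset.mem_image.1 hj1
              refine Finset.mem_image_of_mem _ ?_
              simp [← hA _ _ (hκ.2 x), hA _ _ hj0]
            have h2 := Finset.card_sdiff_add_card_inter (A 0) (Finset.univ.image κ)
            have := hα 0
            omega
        _ = (P.sigma fun κ => A 0 \ Finset.univ.image κ).card := (Finset.card_sigma _ _).symm
        _ ≤ _ := by
            refine Finset.card_le_card_of_injOn
              (fun y : (Σ _ : Fin m → J, J) => (Fin.cons y.2 y.1 : Fin (m + 1) → J)) ?_ ?_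
            · rintro ⟨κ, j⟩ hy
              simp only [hP, Finset.coe_sigma, Set.mem_sigma_iff, Finset.mem_coe, Finset.mem_filter,
                Finset.mem_univ, true_and, Finset.mem_sdiff, Finset.mem_image, not_exists] at hy ⊢
              refine ⟨Fin.cons_injective_iff.2 ⟨?_, hy.1.1⟩, ?_⟩
              · rintro ⟨x, hx⟩; exact hy.2.2 x hx
              · intro x
                refine Fin.cases ?_ (fun x => ?_) x
                · simpa using hy.2.1
                · simpa using hy.1.2 x
            · rintro ⟨κ, j⟩ _ ⟨κ', j'⟩ _ h
              simp only at h
              obtain ⟨h1, h2⟩ := Fin.cons_injective2 h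
              subst h1 h2; rfl
    refine le_trans ?_ ((Nat.mul_le_mul_right _ ih').trans hstep)
    rw [← Finset.mul_prod_erase G _ (hG 0), ← Finset.mul_prod_erase G _ (hG 0)]
    have e0 : (Finset.univ.filter fun x : Fin (m + 1) => t x = t 0).card = n₀ + 1 := by
      rw [Fin.univ_succ, Finset.filter_cons, if_pos rfl, Finset.card_cons, Finset.filter_map,
        Finset.card_map]
      rfl
    have e1 : ∀ T ∈ G.erase (t 0), (Finset.univ.filter fun x : Fin (m + 1) => t x = T).card =
        (Finset.univ.filter fun x : Fin m => t x.succ = T).card := by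
      intro T hT
      rw [Fin.univ_succ, Finset.filter_cons, if_neg (Finset.ne_of_mem_erase hT).symm,
        Finset.filter_map, Finset.card_map]
      rfl
    rw [e0, Nat.descFactorial_succ, Finset.prod_congr rfl fun T hT => by rw [e1 T hT]]
    apply le_of_eq; ring

theorem prod_descFactorial_le_card_injective {I J τ : Type*} [Fintype I] [DecidableEq I]
    [Fintype J] [DecidableEq J]
    [DecidableEq τ] (c : J → τ) (α : τ → ℕ) (t : I → τ) (A : I → Finset J)
    (hA : ∀ x, ∀ j ∈ A x, c j = t x) (hα : ∀ x, α (t x) ≤ (A x).card) (G : Finset τ)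
    (hG : ∀ x, t x ∈ G) :
    ∏ T ∈ G, (α T).descFactorial (Finset.univ.filter fun x => t x = T).card ≤
      (Finset.univ.filter fun κ : I → J => Function.Injective κ ∧ ∀ x, κ x ∈ A x).card := by
  let e := (Fintype.equivFin I).symm
  have h := prod_descFactorial_le_card_injective_fin c α _ (t ∘ e) (A ∘ e) (fun x => hA _)
    (fun x => hα _) G (fun x => hG _)
  have e1 : ∀ T, (Finset.univ.filter fun x => (t ∘ e) x = T).card =
      (Finset.univ.filter fun x => t x = T).card := by
    intro T
    refine Finset.card_bij (fun x _ => e x) ?_ (fun _ _ _ _ h => e.injective h) ?_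
    · intro x hx; simpa using hx
    · intro x hx; exact ⟨e.symm x, by simpa using hx, by simp⟩
  simp_rw [e1] at h
  refine h.trans (Finset.card_le_card_of_injOn (fun κ => κ ∘ e.symm) ?_ ?_)
  · intro κ hκ
    simp only [Finset.coe_filter, Finset.mem_univ, true_and, Set.mem_ofPred_eq] at hκ ⊢
    refine ⟨hκ.1.comp e.symm.injective, fun x => ?_⟩
    simpa using hκ.2 (e.symm x)
  · intro κ _ κ' _ h
    exact (Function.Surjective.injective_comp_right e.symm.surjective) h

/-- Completing a partial matching to a perfect one by means of flexible rows and columns. -/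
theorem exists_perm_extending {I V : Type*} [Fintype I] [Fintype V] [DecidableEq V]
    (OK : V → V → Prop) [∀ i j, Decidable (OK i j)] (R R' : Finset V)
    (hR : ∀ j, (R.filter fun i => ¬ OK i j).card ≤ 1)
    (hR' : ∀ i, (R'.filter fun j => ¬ OK i j).card ≤ 1)
    (ρ κ : I → V) (hρ : Function.Injective ρ) (hκ : Function.Injective κ)
    (hρR : ∀ x, ρ x ∉ R) (hκR : ∀ x, κ x ∉ R') (hOK : ∀ x, OK (ρ x) (κ x))
    (hcard : Fintype.card V + 2 ≤ Fintype.card I + R.card + R'.card) :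
    ∃ σ : Equiv.Perm V, (∀ x, σ (ρ x) = κ x) ∧ ∀ i, OK i (σ i) := by
  classical
  let t : {i : V // i ∉ Set.range ρ} → Finset V := fun i =>
    Finset.univ.filter fun j => j ∉ Set.range κ ∧ OK i j
  have hVρ : (Finset.univ.filter fun i => i ∉ Set.range ρ).card + Fintype.card I = Fintype.card V := by
    have h1 := Finset.card_filter_add_card_filter_not (s := (Finset.univ : Finset V)) (fun i => i ∈ Set.range ρ)
    have h2 : (Finset.univ.filter fun i => i ∈ Set.range ρ) = Finset.univ.image ρ := by
      ext i; simp
    rw [h2, Finset.card_image_of_injective _ hρ, Finset.card_univ, Finset.card_univ] at h1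
    omega
  have hVκ : (Finset.univ.filter fun i => i ∉ Set.range κ).card + Fintype.card I = Fintype.card V := by
    have h1 := Finset.card_filter_add_card_filter_not (s := (Finset.univ : Finset V)) (fun i => i ∈ Set.range κ)
    have h2 : (Finset.univ.filter fun i => i ∈ Set.range κ) = Finset.univ.image κ := by
      ext i; simp
    rw [h2, Finset.card_image_of_injective _ hκ, Finset.card_univ, Finset.card_univ] at h1
    omega
  have hRsub : R ⊆ Finset.univ.filter fun i => i ∉ Set.range ρ := by
    intro i hi
    simp only [Finset.mem_filter, Finset.mem_univ, true_and, Set.mem_range, not_exists]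
    rintro x rfl; exact hρR x hi
  have hR'sub : R' ⊆ Finset.univ.filter fun i => i ∉ Set.range κ := by
    intro i hi
    simp only [Finset.mem_filter, Finset.mem_univ, true_and, Set.mem_range, not_exists]
    rintro x rfl; exact hκR x hi
  obtain ⟨f, hf, hft⟩ := (Finset.all_card_le_biUnion_card_iff_exists_injective t).1 (by
    intro s
    rcases s.eq_empty_or_nonempty with rfl | ⟨i₀, hi₀⟩
    · simp
    set s' : Finset V := s.map (Function.Embedding.subtype _) with hs'
    have hs'card : s'.card = s.card := Finset.card_map _
    have hs'sub : s' ⊆ Finset.univ.filter fun i => i ∉ Set.range ρ := by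
      intro i hi
      obtain ⟨y, -, rfl⟩ := Finset.mem_map.1 hi
      simpa using y.2
    by_cases h2 : 2 ≤ (s' ∩ R).card
    · have : (Finset.univ.filter fun i => i ∉ Set.range κ) ⊆ s.biUnion t := by
        intro j hj
        by_contra hcon
        have : s' ∩ R ⊆ R.filter fun i => ¬ OK i j := by
          intro i hi
          obtain ⟨his, hiR⟩ := Finset.mem_inter.1 hi
          obtain ⟨y, hy, rfl⟩ := Finset.mem_map.1 his
          refine Finset.mem_filter.2 ⟨hiR, fun hok => hcon ?_⟩
          refine Finset.mem_biUnion.2 ⟨y, hy, ?_⟩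
          simp only [t, Finset.mem_filter, Finset.mem_univ, true_and] at hj ⊢
          exact ⟨hj, hok⟩
        have := (Finset.card_le_card this).trans (hR j)
        omega
      have h3 := Finset.card_le_card this
      have h4 := Finset.card_le_card hs'sub
      omega
    · have h3 : s'.card + R.card ≤ (Finset.univ.filter fun i => i ∉ Set.range ρ).card + (s' ∩ R).card := by
        rw [← Finset.card_union_add_card_inter]
        have := Finset.card_le_card (Finset.union_subset hs'sub hRsub)
        omega
      have h4 : (R'.filter fun j => OK i₀ j) ⊆ s.biUnion t := by
        intro j hj
        obtain ⟨hjR, hok⟩ := Finset.mem_filter.1 hj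
        refine Finset.mem_biUnion.2 ⟨i₀, hi₀, ?_⟩
        have := hR'sub hjR
        simp only [t, Finset.mem_filter, Finset.mem_univ, true_and] at this ⊢
        exact ⟨this, hok⟩
      have h5 := Finset.card_le_card h4
      have h6 := Finset.card_filter_add_card_filter_not (s := R') (fun j => OK i₀ j)
      have h7 := hR' i₀
      omega)
  let F : V → V := Function.extend ρ κ fun i => if h : i ∉ Set.range ρ then f ⟨i, h⟩ else i
  have hF1 : ∀ x, F (ρ x) = κ x := fun x => hρ.extend_apply _ _ _
  have hF2 : ∀ i (h : i ∉ Set.range ρ), F i = f ⟨i, h⟩ := by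
    intro i h
    simp only [F]
    rw [Function.extend_apply' _ _ _ h, dif_pos h]
  have hft' : ∀ y, f y ∉ Set.range κ ∧ OK y (f y) := fun y => by simpa [t] using hft y
  have hFinj : Function.Injective F := by
    intro i i' h
    by_cases hi : i ∈ Set.range ρ <;> by_cases hi' : i' ∈ Set.range ρ
    · obtain ⟨x, rfl⟩ := hi
      obtain ⟨x', rfl⟩ := hi'
      rw [hF1, hF1] at h
      rw [hκ h]
    · obtain ⟨x, rfl⟩ := hi
      rw [hF1, hF2 _ hi'] at h
      exact absurd ⟨x, h⟩ (hft' _).1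
    · obtain ⟨x, rfl⟩ := hi'
      rw [hF1, hF2 _ hi] at h
      exact absurd ⟨x, h.symm⟩ (hft' _).1
    · rw [hF2 _ hi, hF2 _ hi'] at h
      simpa using hf h
  refine ⟨Equiv.ofBijective F (Finite.injective_iff_bijective.1 hFinj), fun x => hF1 x, fun i => ?_⟩
  rw [Equiv.ofBijective_apply]
  by_cases hi : i ∈ Set.range ρ
  · obtain ⟨x, rfl⟩ := hi
    rw [hF1]; exact hOK x
  · rw [hF2 _ hi]; exact (hft' ⟨i, hi⟩).2

/-- Lower bound for the number of perfect matchings, given a prescribed number `m S T` of matched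
pairs between the row class `S` and the column class `T`, with flexible rows and columns. -/
theorem prod_descFactorial_le_card_perm {V τ : Type*} [Fintype V] [DecidableEq V] [DecidableEq τ]
    (r c : V → τ)
    (OK : V → V → Prop) [∀ i j, Decidable (OK i j)] (G : Finset τ) (m : τ → τ → ℕ)
    (R R' : Finset V)
    (hR : ∀ j, (R.filter fun i => ¬ OK i j).card ≤ 1)
    (hR' : ∀ i, (R'.filter fun j => ¬ OK i j).card ≤ 1)
    (ν α : τ → ℕ) (hν : ∀ S, ν S ≤ (Finset.univ.filter fun i => r i = S ∧ i ∉ R).card)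
    (hα : ∀ i T, m (r i) T ≠ 0 →
      α T ≤ (Finset.univ.filter fun j => c j = T ∧ j ∉ R' ∧ OK i j).card)
    (hcard : Fintype.card V + 2 ≤ ∑ S ∈ G, ∑ T ∈ G, m S T + R.card + R'.card) :
    (∏ S ∈ G, (ν S).descFactorial (∑ T ∈ G, m S T)) *
        (∏ T ∈ G, (α T).descFactorial (∑ S ∈ G, m S T)) ≤
      (Finset.univ.filter fun σ : Equiv.Perm V => ∀ i, OK i (σ i)).card *
        (Fintype.card V) ^ (Fintype.card V - ∑ S ∈ G, ∑ T ∈ G, m S T) *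
        ∏ S ∈ G, ∏ T ∈ G, (m S T).factorial := by
  classical
  let B := {p : τ × τ // p ∈ G ×ˢ G}
  let I := Σ p : B, Fin (m p.1.1 p.1.2)
  let s : I → τ := fun x => x.1.1.1
  let t : I → τ := fun x => x.1.1.2
  have hsG : ∀ x, s x ∈ G := fun x => (Finset.mem_product.1 x.1.2).1
  have htG : ∀ x, t x ∈ G := fun x => (Finset.mem_product.1 x.1.2).2
  have hI : Fintype.card I = ∑ S ∈ G, ∑ T ∈ G, m S T := by
    rw [Fintype.card_sigma, ← Finset.sum_product', ← Finset.sum_coe_sort (G ×ˢ G)]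
    simp [B]
  have hcnt : ∀ P : τ × τ → Prop, (Finset.univ.filter fun x : I => P x.1.1).card =
      ∑ p ∈ (G ×ˢ G).filter P, m p.1 p.2 := by
    intro P
    have : (Finset.univ.filter fun x : I => P x.1.1) =
        (Finset.univ.filter fun p : B => P p.1).sigma fun _ => Finset.univ := by
      ext x
      rw [Finset.mem_sigma]
      simp only [Finset.mem_filter, Finset.mem_univ, true_and, and_true]
    rw [this, Finset.card_sigma, Finset.sum_filter, Finset.sum_filter,
      ← Finset.sum_coe_sort (G ×ˢ G)]
    simp [B]
  have hs : ∀ S ∈ G, (Finset.univ.filter fun x => s x = S).card = ∑ T ∈ G, m S T := by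
    intro S hS
    have h1 : (Finset.univ.filter fun x => s x = S).card =
        ∑ p ∈ (G ×ˢ G).filter fun p => p.1 = S, m p.1 p.2 := by
      convert hcnt fun p => p.1 = S
    rw [h1, Finset.sum_filter, Finset.sum_product,
      Finset.sum_eq_single_of_mem S hS]
    · simp
    · intro b _ hb; simp [hb]
  have ht : ∀ T ∈ G, (Finset.univ.filter fun x => t x = T).card = ∑ S ∈ G, m S T := by
    intro T hT
    have h1 : (Finset.univ.filter fun x => t x = T).card =
        ∑ p ∈ (G ×ˢ G).filter fun p => p.2 = T, m p.1 p.2 := by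
      convert hcnt fun p => p.2 = T
    rw [h1, Finset.sum_filter, Finset.sum_product_right,
      Finset.sum_eq_single_of_mem T hT]
    · simp
    · intro b _ hb; simp [hb]
  have hm : ∀ x : I, m (s x) (t x) ≠ 0 := fun x h0 => by
    have := x.2.2; simp only [s, t] at h0; omega
  let A : I → Finset V := fun x => Finset.univ.filter fun i => r i = s x ∧ i ∉ R
  let P := Finset.univ.filter fun ρ : I → V => Function.Injective ρ ∧ ∀ x, ρ x ∈ A x
  have hP : ∏ S ∈ G, (ν S).descFactorial (∑ T ∈ G, m S T) ≤ P.card := by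
    refine (Finset.prod_congr rfl fun S hS => by rw [← hs S hS]).trans_le ?_
    exact prod_descFactorial_le_card_injective r ν s A (fun x j hj => by simp [A] at hj; exact hj.1)
      (fun x => hν _) G hsG
  let A' : (I → V) → I → Finset V := fun ρ x =>
    Finset.univ.filter fun j => c j = t x ∧ j ∉ R' ∧ OK (ρ x) j
  let K : (I → V) → Finset (I → V) := fun ρ =>
    Finset.univ.filter fun κ : I → V => Function.Injective κ ∧ ∀ x, κ x ∈ A' ρ x
  have hK : ∀ ρ ∈ P, ∏ T ∈ G, (α T).descFactorial (∑ S ∈ G, m S T) ≤ (K ρ).card := by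
    intro ρ hρ
    simp only [P, A, Finset.mem_filter, Finset.mem_univ, true_and] at hρ
    refine (Finset.prod_congr rfl fun T hT => by rw [← ht T hT]).trans_le ?_
    refine prod_descFactorial_le_card_injective c α t (A' ρ)
      (fun x j hj => by simp [A'] at hj; exact hj.1) (fun x => ?_) G htG
    refine hα (ρ x) (t x) ?_
    rw [(hρ.2 x).1]; exact hm x
  let X := P.sigma K
  have hX : (∏ S ∈ G, (ν S).descFactorial (∑ T ∈ G, m S T)) *
        (∏ T ∈ G, (α T).descFactorial (∑ S ∈ G, m S T)) ≤ X.card := by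
    rw [Finset.card_sigma]
    refine (Nat.mul_le_mul_right _ hP).trans ?_
    rw [← smul_eq_mul, ← Finset.sum_const]
    exact Finset.sum_le_sum hK
  have hXmem : ∀ y ∈ X, (Function.Injective y.1 ∧ ∀ x, r (y.1 x) = s x ∧ y.1 x ∉ R) ∧
      (Function.Injective y.2 ∧ ∀ x, c (y.2 x) = t x ∧ y.2 x ∉ R' ∧ OK (y.1 x) (y.2 x)) := by
    intro y hy
    simpa [X, P, K, A, A'] using hy
  let Φ : (Σ _ : I → V, I → V) → I → V × V := fun y x => (y.1 x, y.2 x)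
  let gr : (Σ _ : I → V, I → V) → Finset (V × V) := fun y => Finset.univ.image (Φ y)
  have hΦ : ∀ y ∈ X, Function.Injective (Φ y) := fun y hy a b hab =>
    (hXmem y hy).1.1 (Prod.ext_iff.1 hab).1
  have hfib : ∀ M ∈ X.image gr, (X.filter fun y => gr y = M).card ≤
      ∏ S ∈ G, ∏ T ∈ G, (m S T).factorial := by
    intro M hM
    obtain ⟨y₀, hy₀, rfl⟩ := Finset.mem_image.1 hM
    have hg : ∀ y, ∃ g : Equiv.Perm I, y ∈ X → gr y = gr y₀ → Φ y = Φ y₀ ∘ g := by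
      intro y
      by_cases hy : y ∈ X ∧ gr y = gr y₀
      · have hrange : Set.range (Φ y) = Set.range (Φ y₀) := by
          have := congrArg (fun M : Finset (V × V) => (M : Set (V × V))) hy.2
          simpa [gr] using this
        refine ⟨((Equiv.ofInjective _ (hΦ y hy.1)).trans (Equiv.setCongr hrange)).trans
          (Equiv.ofInjective _ (hΦ y₀ hy₀)).symm, fun _ _ => ?_⟩
        ext1 x
        simp only [Function.comp_apply, Equiv.trans_apply, Equiv.apply_ofInjective_symm]
        rfl
      · exact ⟨1, fun h1 h2 => absurd ⟨h1, h2⟩ hy⟩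
    choose g hg using hg
    have hst := DomMulAct.stabilizer_card (Sigma.fst : I → B)
    have hst2 : ∏ p : B, (Fintype.card {a : I // a.1 = p}).factorial =
        ∏ S ∈ G, ∏ T ∈ G, (m S T).factorial := by
      rw [← Finset.prod_product', ← Finset.prod_coe_sort (G ×ˢ G)]
      refine Finset.prod_congr rfl fun p _ => ?_
      rw [Fintype.card_congr (Equiv.sigmaSubtype p), Fintype.card_fin]
    rw [← hst2, ← hst, Fintype.card_subtype]
    refine Finset.card_le_card_of_injOn g ?_ ?_
    · intro y hy
      simp only [Finset.coe_filter, Finset.mem_univ, true_and, Set.mem_ofPred_eq] at hy ⊢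
      have h1 := hg y hy.1 hy.2
      ext1 x
      have h2 := congrFun h1 x
      simp only [Φ, Function.comp_apply, Prod.mk.injEq] at h2
      have h3 := (hXmem y hy.1)
      have h4 := (hXmem y₀ hy₀)
      refine Subtype.ext (Prod.ext ?_ ?_)
      · change s (g y x) = s x
        rw [← (h3.1.2 x).1, ← (h4.1.2 _).1, h2.1]
      · change t (g y x) = t x
        rw [← (h3.2.2 x).1, ← (h4.2.2 _).1, h2.2]
    · intro y hy y' hy' hgg
      simp only [Finset.coe_filter, Set.mem_ofPred_eq] at hy hy'
      have h1 := hg y hy.1 hy.2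
      have h2 := hg y' hy'.1 hy'.2
      rw [hgg, ← h2] at h1
      have h3 : y.1 = y'.1 := funext fun x => (Prod.ext_iff.1 (congrFun h1 x)).1
      have h4 : y.2 = y'.2 := funext fun x => (Prod.ext_iff.1 (congrFun h1 x)).2
      cases y; cases y'; simp only at h3 h4; subst h3 h4; rfl
  have hXY := Finset.card_le_mul_card_image (f := gr) X _ hfib
  have hY : (X.image gr).card ≤
      (Finset.univ.filter fun σ : Equiv.Perm V => ∀ i, OK i (σ i)).card *
        (Fintype.card V) ^ (Fintype.card V - ∑ S ∈ G, ∑ T ∈ G, m S T) := by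
    have hsub : X.image gr ⊆ (Finset.univ.filter fun σ : Equiv.Perm V => ∀ i, OK i (σ i)).biUnion
        fun σ => (Finset.univ.image fun i => (i, σ i)).powersetCard (Fintype.card I) := by
      intro M hM
      obtain ⟨y, hy, rfl⟩ := Finset.mem_image.1 hM
      have h1 := hXmem y hy
      obtain ⟨σ, hσ1, hσ2⟩ := exists_perm_extending OK R R' hR hR' y.1 y.2 h1.1.1 h1.2.1
        (fun x => (h1.1.2 x).2) (fun x => (h1.2.2 x).2.1) (fun x => (h1.2.2 x).2.2) (by rw [hI]; exact hcard)
      refine Finset.mem_biUnion.2 ⟨σ, by simpa using hσ2, Finset.mem_powersetCard.2 ⟨?_, ?_⟩⟩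
      · intro q hq
        obtain ⟨x, -, rfl⟩ := Finset.mem_image.1 hq
        refine Finset.mem_image.2 ⟨y.1 x, Finset.mem_univ _, ?_⟩
        simp [Φ, hσ1]
      · rw [Finset.card_image_of_injective _ (hΦ y hy), Finset.card_univ]
    rcases X.eq_empty_or_nonempty with hX0 | ⟨y, hy⟩
    · simp [hX0]
    have hIV : Fintype.card I ≤ Fintype.card V :=
      Fintype.card_le_of_injective _ (hXmem y hy).1.1
    refine (Finset.card_le_card hsub).trans (Finset.card_biUnion_le_card_mul _ _ _ fun σ _ => ?_)
    rw [Finset.card_powersetCard, Finset.card_image_of_injective _ fun a b hab => (Prod.ext_iff.1 hab).1,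
      Finset.card_univ, ← Nat.choose_symm hIV, ← hI]
    exact Nat.choose_le_pow _ _
  calc _ ≤ X.card := hX
    _ ≤ _ := hXY
    _ = (X.image gr).card * ∏ S ∈ G, ∏ T ∈ G, (m S T).factorial := by ring
    _ ≤ _ := Nat.mul_le_mul_right _ hY

/-- The odd primes up to `z`. -/
def oddPrimes (z : ℕ) : Finset ℕ := (Finset.Icc 3 z).filter Nat.Prime

/-- The set of odd primes up to `z` dividing `n`. -/
def smallType (z n : ℕ) : Finset ℕ := (oddPrimes z).filter (· ∣ n)

/-- The weight `∏ (p - 1) / (p - 2)` of a set of odd primes. -/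
noncomputable def primeWeight (t : Finset ℕ) : ℝ := ∏ p ∈ t, ((p : ℝ) - 1) / (p - 2)

/-- Labels that are equidistributed in the residue class `0` modulo every odd number. -/
structure EquiLabels (h : ℕ) (l : Fin h → ℕ) : Prop where
  inj : Function.Injective l
  pos : ∀ j, 1 ≤ l j
  le : ∀ j, l j ≤ 2 * h + 1
  count : ∀ d, Odd d → |((Finset.univ.filter fun j => d ∣ l j).card : ℝ) - h / d| ≤ 1
  count_le : ∀ d, Odd d → ((Finset.univ.filter fun j => d ∣ l j).card : ℝ) ≤ 3 * h / d

theorem mem_oddPrimes {z p : ℕ} : p ∈ oddPrimes z ↔ 3 ≤ p ∧ p ≤ z ∧ p.Prime := by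
  simp [oddPrimes, and_assoc]

theorem three_le_of_mem_oddPrimes {z p : ℕ} (hp : p ∈ oddPrimes z) : (3 : ℝ) ≤ p := by
  exact_mod_cast (mem_oddPrimes.1 hp).1

theorem odd_of_mem_oddPrimes {z p : ℕ} (hp : p ∈ oddPrimes z) : Odd p := by
  obtain ⟨h3, -, hpp⟩ := mem_oddPrimes.1 hp
  exact hpp.odd_of_ne_two (by omega)

theorem smallType_subset (z n : ℕ) : smallType z n ⊆ oddPrimes z := Finset.filter_subset _ _

theorem odd_prod_of_subset {z : ℕ} {t : Finset ℕ} (ht : t ⊆ oddPrimes z) : Odd (∏ p ∈ t, p) :=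
  Finset.prod_induction _ Odd (fun _ _ => Odd.mul) odd_one fun _ hp => odd_of_mem_oddPrimes (ht hp)

theorem subset_smallType_iff {z n : ℕ} {t : Finset ℕ} (ht : t ⊆ oddPrimes z) :
    t ⊆ smallType z n ↔ ∏ p ∈ t, p ∣ n := by
  constructor
  · intro h
    exact Finset.prod_primes_dvd n (fun p hp => (mem_oddPrimes.1 (ht hp)).2.2.prime)
      fun p hp => (Finset.mem_filter.1 (h hp)).2
  · intro h p hp
    exact Finset.mem_filter.2 ⟨ht hp, (Finset.dvd_prod_of_mem _ hp).trans h⟩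

theorem one_le_weight_factor {p : ℕ} (hp : 3 ≤ p) : 1 ≤ ((p : ℝ) - 1) / (p - 2) := by
  have : (3 : ℝ) ≤ p := by exact_mod_cast hp
  rw [le_div_iff₀ (by linarith)]; linarith

theorem one_le_primeWeight {t : Finset ℕ} (ht : ∀ p ∈ t, 3 ≤ p) : 1 ≤ primeWeight t :=
  Finset.prod_induction _ (fun x : ℝ => 1 ≤ x) (fun _ _ => one_le_mul_of_one_le_of_one_le)
    le_rfl fun p hp => one_le_weight_factor (ht p hp)

theorem primeWeight_mono {s t : Finset ℕ} (hst : s ⊆ t) (ht : ∀ p ∈ t, 3 ≤ p) :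
    primeWeight s ≤ primeWeight t := by
  unfold primeWeight
  rw [← Finset.prod_sdiff hst]
  refine le_mul_of_one_le_left (zero_le_one.trans (one_le_primeWeight fun p hp => ht p (hst hp))) ?_
  exact one_le_primeWeight fun p hp => ht p (Finset.sdiff_subset hp)

theorem primeWeight_Icc (z : ℕ) : primeWeight (Finset.Icc 3 (z + 2)) = z + 1 := by
  induction z with
  | zero => simp [primeWeight]
  | succ z ih =>
    unfold primeWeight at ih ⊢
    rw [show z + 1 + 2 = (z + 2) + 1 by ring, Finset.prod_Icc_succ_top (by omega), ih]
    have : (z : ℝ) + 1 ≠ 0 := by positivity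
    push_cast
    rw [show (z : ℝ) + 2 + 1 - 2 = z + 1 by ring, mul_div_cancel₀ _ this]
    ring

theorem three_le_of_subset {z : ℕ} {t : Finset ℕ} (ht : t ⊆ oddPrimes z) : ∀ p ∈ t, 3 ≤ p :=
  fun _ hp => (mem_oddPrimes.1 (ht hp)).1

theorem primeWeight_le {z : ℕ} (hz : 2 ≤ z) {t : Finset ℕ} (ht : t ⊆ oddPrimes z) :
    primeWeight t ≤ z := by
  obtain ⟨w, rfl⟩ := Nat.exists_eq_add_of_le' hz
  have h1 := primeWeight_mono (ht.trans (Finset.filter_subset _ _ : oddPrimes (w + 2) ⊆ _))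
    fun p hp => (Finset.mem_Icc.1 hp).1
  rw [primeWeight_Icc] at h1
  push_cast; linarith

/-- Counting labels with multiplicative weights. -/
theorem EquiLabels.abs_sum_prod_sub_le {h : ℕ} {l : Fin h → ℕ} (hl : EquiLabels h l) (z : ℕ)
    (κ : ℕ → ℝ) :
    |∑ j, ∏ p ∈ smallType z (l j), (1 + κ p) - h * ∏ p ∈ oddPrimes z, (1 + κ p / p)| ≤
      ∏ p ∈ oddPrimes z, (1 + |κ p|) := by
  classical
  have h1 : ∑ j, ∏ p ∈ smallType z (l j), (1 + κ p) =
      ∑ t ∈ (oddPrimes z).powerset,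
        (∏ p ∈ t, κ p) * ((Finset.univ.filter fun j => ∏ p ∈ t, p ∣ l j).card : ℝ) := by
    have h2 : ∀ j, ∏ p ∈ smallType z (l j), (1 + κ p) =
        ∑ t ∈ (oddPrimes z).powerset, if ∏ p ∈ t, p ∣ l j then ∏ p ∈ t, κ p else 0 := by
      intro j
      rw [Finset.prod_one_add, ← Finset.sum_filter]
      refine Finset.sum_congr ?_ fun _ _ => rfl
      ext t
      rw [Finset.mem_powerset, Finset.mem_filter, Finset.mem_powerset]
      constructor
      · intro ht
        have := ht.trans (smallType_subset _ _)
        exact ⟨this, (subset_smallType_iff this).1 ht⟩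
      · rintro ⟨h3, h4⟩
        exact (subset_smallType_iff h3).2 h4
    simp_rw [h2]
    rw [Finset.sum_comm]
    refine Finset.sum_congr rfl fun t _ => ?_
    rw [← Finset.sum_filter, Finset.sum_const, nsmul_eq_mul, mul_comm]
  rw [h1, Finset.prod_one_add, Finset.mul_sum, ← Finset.sum_sub_distrib, Finset.prod_one_add]
  refine (Finset.abs_sum_le_sum_abs _ _).trans (Finset.sum_le_sum fun t ht => ?_)
  rw [Finset.mem_powerset] at ht
  have h3 := hl.count _ (odd_prod_of_subset ht)
  rw [Finset.prod_div_distrib, ← Finset.abs_prod, ← Nat.cast_prod]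
  rw [show ∀ a b c d : ℝ, a * b - c * (a / d) = a * (b - c / d) by intros; ring, abs_mul]
  exact mul_le_of_le_one_right (abs_nonneg _) h3

/-- Upper bound for weighted counts of labels. -/
theorem EquiLabels.sum_pow_card_le {h : ℕ} {l : Fin h → ℕ} (hl : EquiLabels h l) (z : ℕ)
    {y : ℝ} (hy : 1 ≤ y) :
    ∑ j, y ^ (smallType z (l j)).card ≤ 3 * h * exp (y * ∑ p ∈ oddPrimes z, 1 / (p : ℝ)) := by
  classical
  have h1 : ∑ j, y ^ (smallType z (l j)).card =
      ∑ t ∈ (oddPrimes z).powerset,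
        (y - 1) ^ t.card * ((Finset.univ.filter fun j => ∏ p ∈ t, p ∣ l j).card : ℝ) := by
    have h2 : ∀ j, y ^ (smallType z (l j)).card =
        ∑ t ∈ (oddPrimes z).powerset, if ∏ p ∈ t, p ∣ l j then (y - 1) ^ t.card else 0 := by
      intro j
      rw [← Finset.prod_const, show y = 1 + (y - 1) by ring, Finset.prod_one_add,
        ← Finset.sum_filter]
      refine Finset.sum_congr ?_ fun _ _ => by rw [Finset.prod_const, add_sub_cancel]
      ext t
      rw [Finset.mem_powerset, Finset.mem_filter, Finset.mem_powerset]
      constructor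
      · intro ht
        have := ht.trans (smallType_subset _ _)
        exact ⟨this, (subset_smallType_iff this).1 ht⟩
      · rintro ⟨h3, h4⟩
        exact (subset_smallType_iff h3).2 h4
    simp_rw [h2]
    rw [Finset.sum_comm]
    refine Finset.sum_congr rfl fun t _ => ?_
    rw [← Finset.sum_filter, Finset.sum_const, nsmul_eq_mul, mul_comm]
  have h4 : ∏ p ∈ oddPrimes z, (1 + (y - 1) / (p : ℝ)) ≤
      exp (y * ∑ p ∈ oddPrimes z, 1 / (p : ℝ)) := by
    rw [Finset.mul_sum, exp_sum]
    have h5 : ∀ p : ℕ, 0 ≤ (y - 1) / (p : ℝ) := fun p =>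
      div_nonneg (by linarith) (Nat.cast_nonneg p)
    refine Finset.prod_le_prod (fun p _ => by linarith [h5 p]) fun p _ => ?_
    rw [add_comm]
    refine (add_one_le_exp _).trans (exp_le_exp.2 ?_)
    rw [mul_one_div]
    exact div_le_div_of_nonneg_right (by linarith) (Nat.cast_nonneg p)
  rw [h1]
  refine le_trans ?_ (mul_le_mul_of_nonneg_left h4 (by positivity))
  rw [Finset.prod_one_add, Finset.mul_sum]
  refine Finset.sum_le_sum fun t ht => ?_
  rw [Finset.mem_powerset] at ht
  have h3 := hl.count_le _ (odd_prod_of_subset ht)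
  rw [Finset.prod_div_distrib, Finset.prod_const, ← Nat.cast_prod,
    show ∀ a b c : ℝ, a * (b / c) = b * (a / c) by intros; ring]
  exact mul_le_mul_of_nonneg_left h3 (pow_nonneg (by linarith) _)

/-- The partial product `∏ (1 + 1 / (p (p - 2)))` over the odd primes up to `z`. -/
noncomputable def oddConst (z : ℕ) : ℝ := ∏ p ∈ oddPrimes z, (1 + 1 / ((p : ℝ) * (p - 2)))

theorem one_le_oddConst (z : ℕ) : 1 ≤ oddConst z := by
  refine Finset.prod_induction _ (fun x : ℝ => 1 ≤ x) (fun _ _ => one_le_mul_of_one_le_of_one_le)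
    le_rfl fun p hp => ?_
  have := three_le_of_mem_oddPrimes hp
  have : 0 ≤ 1 / ((p : ℝ) * (p - 2)) := by
    have : (0 : ℝ) ≤ p - 2 := by linarith
    positivity
  linarith

/-- Weighted number of columns available to a row of type `S`. -/
theorem EquiLabels.abs_sum_disjoint_sub_le {h : ℕ} {l : Fin h → ℕ} (hl : EquiLabels h l) {z : ℕ}
    (hz : 2 ≤ z) {S : Finset ℕ} (hS : S ⊆ oddPrimes z) :
    |∑ j with Disjoint S (smallType z (l j)), primeWeight (smallType z (l j)) -
      h * (oddConst z / primeWeight S)| ≤ 2 ^ S.card * z := by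
  classical
  have h1 := hl.abs_sum_prod_sub_le z fun p => if p ∈ S then -1 else 1 / ((p : ℝ) - 2)
  have h2 : ∑ j, ∏ p ∈ smallType z (l j), (1 + if p ∈ S then (-1 : ℝ) else 1 / ((p : ℝ) - 2)) =
      ∑ j with Disjoint S (smallType z (l j)), primeWeight (smallType z (l j)) := by
    rw [Finset.sum_filter]
    refine Finset.sum_congr rfl fun j _ => ?_
    split_ifs with hd
    · refine Finset.prod_congr rfl fun p hp => ?_
      rw [if_neg fun h => Finset.disjoint_left.1 hd h hp]
      have := three_le_of_mem_oddPrimes (smallType_subset _ _ hp)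
      have : (p : ℝ) - 2 ≠ 0 := by linarith
      field_simp; ring
    · obtain ⟨p, hp1, hp2⟩ := Finset.not_disjoint_iff.1 hd
      exact Finset.prod_eq_zero hp2 (by simp [hp1])
  have h3 : ∏ p ∈ oddPrimes z, (1 + (if p ∈ S then (-1 : ℝ) else 1 / ((p : ℝ) - 2)) / p) =
      oddConst z / primeWeight S := by
    rw [eq_div_iff (zero_lt_one.trans_le (one_le_primeWeight (three_le_of_subset hS))).ne',
      oddConst, primeWeight,
      ← Finset.inter_eq_right.2 hS, ← Finset.prod_ite_mem, ← Finset.prod_mul_distrib,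
      Finset.inter_eq_right.2 hS]
    refine Finset.prod_congr rfl fun p hp => ?_
    have h3 := three_le_of_mem_oddPrimes hp
    have : (p : ℝ) - 2 ≠ 0 := by linarith
    have : (p : ℝ) ≠ 0 := by linarith
    split_ifs
    · field_simp; ring
    · field_simp
  have h4 : ∏ p ∈ oddPrimes z, (1 + |if p ∈ S then (-1 : ℝ) else 1 / ((p : ℝ) - 2)|) ≤
      2 ^ S.card * z := by
    calc _ ≤ ∏ p ∈ oddPrimes z, (if p ∈ S then (2 : ℝ) else 1) * (((p : ℝ) - 1) / (p - 2)) := by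
          refine Finset.prod_le_prod (fun p _ => by positivity) fun p hp => ?_
          have h3 := three_le_of_mem_oddPrimes hp
          have h5 : (0 : ℝ) < (p : ℝ) - 2 := by linarith
          split_ifs
          · have := one_le_weight_factor (mem_oddPrimes.1 hp).1
            norm_num; linarith
          · rw [abs_of_pos (by positivity)]
            refine le_of_eq ?_
            field_simp; ring
      _ = 2 ^ S.card * primeWeight (oddPrimes z) := by
          rw [Finset.prod_mul_distrib, Finset.prod_ite_mem, Finset.inter_eq_right.2 hS,
            Finset.prod_const]; rfl
      _ ≤ _ := mul_le_mul_of_nonneg_left (primeWeight_le hz subset_rfl) (by positivity)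
  rw [h2, h3] at h1
  exact h1.trans h4

/-- Few labels have many small odd prime factors. -/
theorem EquiLabels.card_many_factors_le {h : ℕ} {l : Fin h → ℕ} (hl : EquiLabels h l) (z k : ℕ)
    {y : ℝ} (hy : 1 ≤ y) :
    ((Finset.univ.filter fun j => k ≤ (smallType z (l j)).card).card : ℝ) ≤
      3 * h * exp (y * ∑ p ∈ oddPrimes z, 1 / (p : ℝ)) / y ^ k := by
  rw [le_div_iff₀ (by positivity)]
  refine le_trans ?_ (hl.sum_pow_card_le z hy)
  rw [← nsmul_eq_mul, ← Finset.sum_const]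
  refine (Finset.sum_le_sum fun j hj => ?_).trans
    (Finset.sum_le_sum_of_subset_of_nonneg (Finset.filter_subset _ _) fun j _ _ => by positivity)
  exact pow_le_pow_right₀ hy (Finset.mem_filter.1 hj).2

theorem prod_le_pow_card_of_subset {z : ℕ} {t : Finset ℕ} (ht : t ⊆ oddPrimes z) :
    ∏ p ∈ t, p ≤ z ^ t.card :=
  Finset.prod_le_pow_card _ _ _ fun _ hp => (mem_oddPrimes.1 (ht hp)).2.1

theorem card_types_le {z k : ℕ} (hz : 1 ≤ z) :
    ((oddPrimes z).powerset.filter fun t => t.card < k).card ≤ z ^ k := by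
  have : z ^ k = (Finset.Icc 1 (z ^ k)).card := by simp
  rw [this]
  refine Finset.card_le_card_of_injOn (fun t => ∏ p ∈ t, p) ?_ ?_
  · intro t ht
    simp only [Finset.coe_filter, Finset.mem_powerset, Set.mem_ofPred_eq] at ht
    rw [Finset.coe_Icc, Set.mem_Icc]
    exact ⟨(odd_prod_of_subset ht.1).pos, (prod_le_pow_card_of_subset ht.1).trans
      (Nat.pow_le_pow_right hz ht.2.le)⟩
  · intro s hs t ht hst
    simp only [Finset.coe_filter, Finset.mem_powerset, Set.mem_ofPred_eq] at hs ht hst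
    have hp : ∀ t ⊆ oddPrimes z, (∏ p ∈ t, p).primeFactors = t := fun t ht =>
      Nat.primeFactors_prod fun p hp => (mem_oddPrimes.1 (ht hp)).2.2
    rw [← hp s hs.1, hst, hp t ht.1]

/-- Few labels share a large prime factor with a given number. -/
theorem EquiLabels.card_conflict_le {h : ℕ} {l : Fin h → ℕ} (hl : EquiLabels h l) {z a : ℕ}
    (hz : 2 ≤ z) (ha : 1 ≤ a) {T : Finset ℕ} (hT : T ⊆ oddPrimes z) :
    ((Finset.univ.filter fun j => smallType z (l j) = T ∧
      ∃ q ∈ a.primeFactors, z < q ∧ q ∣ l j).card : ℝ) ≤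
      (Nat.log 2 a) * (3 * h / (z * ∏ p ∈ T, (p : ℝ))) := by
  classical
  have hcard : (a.primeFactors.filter (z < ·)).card ≤ Nat.log 2 a := by
    refine Nat.le_log_of_pow_le one_lt_two ?_
    calc 2 ^ (a.primeFactors.filter (z < ·)).card ≤ ∏ p ∈ a.primeFactors.filter (z < ·), p :=
          Finset.pow_card_le_prod _ _ _ fun p hp =>
            (Nat.prime_of_mem_primeFactors (Finset.mem_filter.1 hp).1).two_le
      _ ≤ ∏ p ∈ a.primeFactors, p := Finset.prod_le_prod_of_subset_of_one_le' (Finset.filter_subset _ _)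
            fun p hp _ => (Nat.prime_of_mem_primeFactors hp).one_le
      _ ≤ a := Nat.le_of_dvd ha (Nat.prod_primeFactors_dvd a)
  have hsub : (Finset.univ.filter fun j => smallType z (l j) = T ∧
      ∃ q ∈ a.primeFactors, z < q ∧ q ∣ l j) ⊆ (a.primeFactors.filter (z < ·)).biUnion
        fun q => Finset.univ.filter fun j => q * ∏ p ∈ T, p ∣ l j := by
    intro j hj
    obtain ⟨-, rfl, q, hqa, hzq, hql⟩ := Finset.mem_filter.1 hj
    refine Finset.mem_biUnion.2 ⟨q, Finset.mem_filter.2 ⟨hqa, hzq⟩, Finset.mem_filter.2 ⟨Finset.mem_univ _, ?_⟩⟩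
    have hq := Nat.prime_of_mem_primeFactors hqa
    refine Nat.Coprime.mul_dvd_of_dvd_of_dvd ?_ hql
      ((subset_smallType_iff (smallType_subset _ _)).1 subset_rfl)
    refine Nat.Coprime.prod_right fun p hp => ?_
    have hp' := mem_oddPrimes.1 (smallType_subset _ _ hp)
    exact (Nat.coprime_primes hq hp'.2.2).2 (by omega)
  have hprod : 0 < ∏ p ∈ T, (p : ℝ) := by
    rw [← Nat.cast_prod]; exact_mod_cast (odd_prod_of_subset hT).pos
  have hzpos : (0 : ℝ) < z := by exact_mod_cast (by omega : 0 < z)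
  calc _ ≤ (((a.primeFactors.filter (z < ·)).biUnion
        fun q => Finset.univ.filter fun j => q * ∏ p ∈ T, p ∣ l j).card : ℝ) := by
        exact_mod_cast Finset.card_le_card hsub
    _ ≤ ∑ q ∈ a.primeFactors.filter (z < ·),
        ((Finset.univ.filter fun j => q * ∏ p ∈ T, p ∣ l j).card : ℝ) := by
        exact_mod_cast Finset.card_biUnion_le
    _ ≤ ∑ q ∈ a.primeFactors.filter (z < ·), 3 * h / (z * ∏ p ∈ T, (p : ℝ)) := by
        refine Finset.sum_le_sum fun q hq => ?_
        obtain ⟨hq1, hq2⟩ := Finset.mem_filter.1 hq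
        have hodd : Odd q := (Nat.prime_of_mem_primeFactors hq1).odd_of_ne_two (by omega)
        refine (hl.count_le _ (hodd.mul (odd_prod_of_subset hT))).trans ?_
        push_cast
        have : (z : ℝ) ≤ q := by exact_mod_cast hq2.le
        gcongr
    _ ≤ _ := by
        rw [Finset.sum_const, nsmul_eq_mul]
        have : ((a.primeFactors.filter (z < ·)).card : ℝ) ≤ Nat.log 2 a := by exact_mod_cast hcard
        gcongr

theorem sum_mul_card_fiber {V τ : Type*} [Fintype V] [DecidableEq τ] (c : V → τ) (G : Finset τ)
    (F : τ → ℝ) :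
    ∑ T ∈ G, F T * ((Finset.univ.filter fun j => c j = T).card : ℝ) =
      ∑ j with c j ∈ G, F (c j) := by
  rw [Finset.sum_filter]
  have h : ∀ j, (if c j ∈ G then F (c j) else 0) = ∑ T ∈ G, if c j = T then F T else 0 := by
    intro j
    rw [Finset.sum_ite_eq]
  simp_rw [h]
  rw [Finset.sum_comm]
  refine Finset.sum_congr rfl fun T _ => ?_
  rw [← Finset.sum_filter, Finset.sum_const, nsmul_eq_mul, mul_comm]

/-- Integer block sizes with prescribed row and column capacities and small total loss. -/
theorem exists_block_sizes {V τ : Type*} [Fintype V] [DecidableEq τ] (r c : V → τ) (G : Finset τ)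
    (g : τ → ℝ) (hg : ∀ t, 0 ≤ g t) (dis : τ → τ → Prop) [∀ s t, Decidable (dis s t)] (Δ : τ → ℕ)
    {w : ℝ} (hw : 0 < w)
    (hrow : ∀ S ∈ G, g S * ∑ j with dis S (c j), g (c j) ≤ w)
    (hcol : ∀ T ∈ G, g T * ∑ i with dis (r i) T, g (r i) ≤ w) :
    ∃ m : τ → τ → ℕ,
      (∀ S T, m S T ≠ 0 → S ∈ G ∧ T ∈ G ∧ dis S T) ∧
      (∀ S T, (m S T : ℝ) ≤ g S * g T * (Finset.univ.filter fun i => r i = S).card *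
        ((Finset.univ.filter fun j => c j = T).card - Δ T : ℕ) / w) ∧
      (∀ S ∈ G, ∀ T ∈ G, dis S T → g S * g T * (Finset.univ.filter fun i => r i = S).card *
        ((Finset.univ.filter fun j => c j = T).card - Δ T : ℕ) / w ≤ m S T + 1) ∧
      (∀ S ∈ G, ∑ T ∈ G, m S T ≤ (Finset.univ.filter fun i => r i = S).card) ∧
      (∀ T ∈ G, ∑ S ∈ G, m S T ≤ (Finset.univ.filter fun j => c j = T).card - Δ T) ∧
      (∑ i with r i ∈ G, ∑ j with c j ∈ G ∧ dis (r i) (c j), g (r i) * g (c j)) / w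
        - ∑ T ∈ G, (Δ T : ℝ) - (G.card : ℝ) ^ 2 ≤ ∑ S ∈ G, ∑ T ∈ G, (m S T : ℝ) := by
  set ν : τ → ℕ := fun S => (Finset.univ.filter fun i => r i = S).card with hν
  set μ : τ → ℕ := fun T => (Finset.univ.filter fun j => c j = T).card with hμ
  set f : τ → τ → ℝ := fun S T => g S * g T * ν S * (μ T - Δ T : ℕ) / w with hf
  have hf0 : ∀ S T, 0 ≤ f S T := fun S T => by
    have := hg S; have := hg T; simp only [hf]; positivity
  have hrow' : ∀ S, ∑ T ∈ G, (if dis S T then g T * (μ T : ℝ) else 0) =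
      ∑ j with c j ∈ G ∧ dis S (c j), g (c j) := by
    intro S
    have := sum_mul_card_fiber c G fun T => if dis S T then g T else 0
    simp only [ite_mul, zero_mul] at this
    rw [this, ← Finset.sum_filter, Finset.filter_filter]
  have hcol' : ∀ T, ∑ S ∈ G, (if dis S T then g S * (ν S : ℝ) else 0) =
      ∑ i with r i ∈ G ∧ dis (r i) T, g (r i) := by
    intro T
    have := sum_mul_card_fiber r G fun S => if dis S T then g S else 0
    simp only [ite_mul, zero_mul] at this
    rw [this, ← Finset.sum_filter, Finset.filter_filter]
  have hrow2 : ∀ S ∈ G, g S * ∑ T ∈ G, (if dis S T then g T * (μ T : ℝ) else 0) ≤ w := by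
    intro S hS
    rw [hrow']
    refine le_trans (mul_le_mul_of_nonneg_left ?_ (hg S)) (hrow S hS)
    exact Finset.sum_le_sum_of_subset_of_nonneg
      (Finset.monotone_filter_right _ fun _ _ h => h.2) fun _ _ _ => hg _
  have hcol2 : ∀ T ∈ G, g T * ∑ S ∈ G, (if dis S T then g S * (ν S : ℝ) else 0) ≤ w := by
    intro T hT
    rw [hcol']
    refine le_trans (mul_le_mul_of_nonneg_left ?_ (hg T)) (hcol T hT)
    exact Finset.sum_le_sum_of_subset_of_nonneg
      (Finset.monotone_filter_right _ fun _ _ h => h.2) fun _ _ _ => hg _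
  have hα : ∀ T, ((μ T - Δ T : ℕ) : ℝ) ≤ μ T := fun T => by exact_mod_cast Nat.sub_le _ _
  have hα' : ∀ T, (μ T : ℝ) - Δ T ≤ (μ T - Δ T : ℕ) := fun T => by
    rw [sub_le_iff_le_add]; exact_mod_cast le_tsub_add
  classical
  refine ⟨fun S T => if S ∈ G ∧ T ∈ G ∧ dis S T then ⌊f S T⌋₊ else 0, ?_, ?_, ?_, ?_, ?_, ?_⟩
  · intro S T h
    by_contra h'
    simp [h'] at h
  · intro S T
    dsimp only
    split_ifs
    · exact Nat.floor_le (hf0 S T)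
    · simpa using hf0 S T
  · intro S hS T hT hd
    dsimp only
    rw [if_pos ⟨hS, hT, hd⟩]
    exact (Nat.lt_floor_add_one _).le
  · intro S hS
    rw [← Nat.cast_le (α := ℝ)]
    push_cast
    calc _ ≤ ∑ T ∈ G, ν S / w * (g S * if dis S T then g T * (μ T : ℝ) else 0) := by
          refine Finset.sum_le_sum fun T hT => ?_
          by_cases hd : dis S T
          · simp only [hS, hT, hd, and_self, if_true]
            refine (Nat.floor_le (hf0 S T)).trans ?_
            simp only [hf]
            have := hg S; have := hg T; have := hα T
            rw [show ν S / w * (g S * (g T * (μ T : ℝ))) = g S * g T * ν S * μ T / w by ring]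
            gcongr
          · simp [hd]
      _ = ν S / w * (g S * ∑ T ∈ G, if dis S T then g T * (μ T : ℝ) else 0) := by
          rw [← Finset.mul_sum, ← Finset.mul_sum]
      _ ≤ ν S / w * w := mul_le_mul_of_nonneg_left (hrow2 S hS) (by positivity)
      _ = ν S := div_mul_cancel₀ _ hw.ne'
  · intro T hT
    rw [← Nat.cast_le (α := ℝ)]
    rw [Nat.cast_sum]
    calc _ ≤ ∑ S ∈ G, (μ T - Δ T : ℕ) / w * (g T * if dis S T then g S * (ν S : ℝ) else 0) := by
          refine Finset.sum_le_sum fun S hS => ?_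
          by_cases hd : dis S T
          · simp only [hS, hT, hd, and_self, if_true]
            refine (Nat.floor_le (hf0 S T)).trans (le_of_eq ?_)
            simp only [hf]
            ring
          · simp [hd]
      _ = (μ T - Δ T : ℕ) / w * (g T * ∑ S ∈ G, if dis S T then g S * (ν S : ℝ) else 0) := by
          rw [← Finset.mul_sum, ← Finset.mul_sum]
      _ ≤ (μ T - Δ T : ℕ) / w * w := mul_le_mul_of_nonneg_left (hcol2 T hT) (by positivity)
      _ = _ := div_mul_cancel₀ _ hw.ne'
  · have h1 : ∑ i with r i ∈ G, ∑ j with c j ∈ G ∧ dis (r i) (c j), g (r i) * g (c j) =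
        ∑ S ∈ G, ∑ T ∈ G, if dis S T then g S * g T * ν S * μ T else 0 := by
      rw [← sum_mul_card_fiber r G fun S => ∑ j with c j ∈ G ∧ dis S (c j), g S * g (c j)]
      refine Finset.sum_congr rfl fun S _ => ?_
      rw [← Finset.mul_sum, ← hrow', Finset.mul_sum, Finset.sum_mul]
      refine Finset.sum_congr rfl fun T _ => ?_
      split_ifs
      · change _ * (ν S : ℝ) = _
        ring
      · simp
    have h2 : ∑ S ∈ G, ∑ T ∈ G, (if dis S T then g S * g T * ν S * (Δ T : ℝ) else 0) / w ≤
        ∑ T ∈ G, (Δ T : ℝ) := by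
      rw [Finset.sum_comm]
      refine Finset.sum_le_sum fun T hT => ?_
      calc _ = (Δ T : ℝ) / w * (g T * ∑ S ∈ G, if dis S T then g S * (ν S : ℝ) else 0) := by
            rw [Finset.mul_sum, Finset.mul_sum]
            refine Finset.sum_congr rfl fun S _ => ?_
            split_ifs
            · ring
            · simp
        _ ≤ (Δ T : ℝ) / w * w := mul_le_mul_of_nonneg_left (hcol2 T hT) (by positivity)
        _ = _ := div_mul_cancel₀ _ hw.ne'
    have h3 : ∀ S ∈ G, ∀ T ∈ G, (if dis S T then g S * g T * ν S * μ T else 0) / w -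
        (if dis S T then g S * g T * ν S * (Δ T : ℝ) else 0) / w - 1 ≤
        ((if S ∈ G ∧ T ∈ G ∧ dis S T then ⌊f S T⌋₊ else 0 : ℕ) : ℝ) := by
      intro S hS T hT
      by_cases hd : dis S T
      · simp only [hS, hT, hd, and_self, if_true]
        have h4 := (Nat.lt_floor_add_one (f S T)).le
        have h5 : g S * g T * ν S * μ T / w - g S * g T * ν S * (Δ T : ℝ) / w ≤ f S T := by
          rw [← sub_div, ← mul_sub]
          have := hg S; have := hg T; have := hα' T
          simp only [hf]
          gcongr
        linarith
      · simp [hd]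
    have h6 := Finset.sum_le_sum fun S hS => Finset.sum_le_sum fun T hT => h3 S hS T hT
    simp only [Finset.sum_sub_distrib, Finset.sum_const, nsmul_eq_mul, mul_one] at h6
    simp only [← Finset.sum_div] at h6 h2
    rw [h1]
    nlinarith [h6, h2]

theorem prod_pow_card_fiber_le {V τ : Type*} [Fintype V] [DecidableEq τ] (c : V → τ)
    (G : Finset τ) (g : τ → ℝ) (hg : ∀ t, 1 ≤ g t) (k : τ → ℕ)
    (hk : ∀ T ∈ G, k T ≤ (Finset.univ.filter fun j => c j = T).card) :
    ∏ T ∈ G, g T ^ k T ≤ ∏ j, g (c j) := by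
  classical
  calc ∏ T ∈ G, g T ^ k T ≤ ∏ T ∈ G ∪ Finset.univ.image c, g T ^ (Finset.univ.filter fun j => c j = T).card := by
        rw [← Finset.prod_sdiff (Finset.subset_union_left : G ⊆ G ∪ Finset.univ.image c)]
        rw [← one_mul (∏ T ∈ G, g T ^ k T)]
        refine mul_le_mul ?_ ?_ ?_ ?_
        · exact Finset.prod_induction _ (fun x : ℝ => 1 ≤ x)
            (fun _ _ => one_le_mul_of_one_le_of_one_le) le_rfl fun T _ => one_le_pow₀ (hg T)
        · exact Finset.prod_le_prod (fun T _ => pow_nonneg (zero_le_one.trans (hg T)) _)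
            fun T hT => pow_le_pow_right₀ (hg T) (hk T hT)
        · exact Finset.prod_nonneg fun T _ => pow_nonneg (zero_le_one.trans (hg T)) _
        · exact Finset.prod_nonneg fun T _ => pow_nonneg (zero_le_one.trans (hg T)) _
    _ = ∏ j, g (c j) := by
        rw [← Finset.prod_fiberwise_of_maps_to (t := G ∪ Finset.univ.image c) (g := c)
          fun j _ => Finset.mem_union_right _ (Finset.mem_image_of_mem _ (Finset.mem_univ j))]
        refine Finset.prod_congr rfl fun T _ => ?_
        rw [Finset.prod_congr rfl fun j hj => by rw [(Finset.mem_filter.1 hj).2], Finset.prod_const]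

theorem descFactorial_le_pow_mul {n k R N : ℕ} (hR : R ≤ k) (hN : n ≤ N) :
    n.descFactorial k ≤ N ^ R * (n - R).descFactorial (k - R) := by
  rw [← Nat.descFactorial_mul_descFactorial hR, mul_comm]
  exact Nat.mul_le_mul_right _ ((Nat.descFactorial_le_pow _ _).trans (Nat.pow_le_pow_left hN _))

set_option maxHeartbeats 1600000 in
/-- Weighted lower bound for the number of perfect matchings. -/
theorem le_card_perm_of_weights {V τ : Type*} [Fintype V] [DecidableEq V] [DecidableEq τ]
    (r c : V → τ) (OK : V → V → Prop) [∀ i j, Decidable (OK i j)] (G : Finset τ)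
    (g : τ → ℝ) (hg : ∀ t, 1 ≤ g t) (dis : τ → τ → Prop) [∀ s t, Decidable (dis s t)] (Δ : τ → ℕ)
    {w : ℝ} (hw : 0 < w)
    (hrow : ∀ S ∈ G, g S * ∑ j with dis S (c j), g (c j) ≤ w)
    (hcol : ∀ T ∈ G, g T * ∑ i with dis (r i) T, g (r i) ≤ w)
    {t₀ : τ} (ht₀ : t₀ ∈ G) (hdis : dis t₀ t₀) (R R' : Finset V) {k : ℕ}
    (hRk : R.card = k) (hRk' : R'.card = k)
    (hRr : ∀ i ∈ R, r i = t₀) (hRc : ∀ j ∈ R', c j = t₀)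
    (hR : ∀ j, (R.filter fun i => ¬ OK i j).card ≤ 1)
    (hR' : ∀ i, (R'.filter fun j => ¬ OK i j).card ≤ 1)
    (hΔ : ∀ i, ∀ T ∈ G, r i ∈ G → dis (r i) T →
      (Finset.univ.filter fun j => c j = T ∧ ¬ OK i j).card ≤ Δ T)
    (hw3 : w ≤ exp 1 * (3 * Fintype.card V))
    (h00 : (k + 1) * w ≤ (Finset.univ.filter fun i => r i = t₀).card *
        ((Finset.univ.filter fun j => c j = t₀).card - Δ t₀ : ℕ))
    (hG : G.card ^ 2 ≤ k)
    (hL : (Fintype.card V : ℝ) + 2 ≤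
      (∑ i with r i ∈ G, ∑ j with c j ∈ G ∧ dis (r i) (c j), g (r i) * g (c j)) / w
        - ∑ T ∈ G, (Δ T : ℝ) - (G.card : ℝ) ^ 2 + k) :
    (w / exp 1) ^ Fintype.card V ≤
      (Finset.univ.filter fun σ : Equiv.Perm V => ∀ i, OK i (σ i)).card *
        (3 * Fintype.card V : ℝ) ^ (6 * k) * ((∏ i, g (r i)) * ∏ j, g (c j)) := by
  set N := Fintype.card V with hN
  obtain ⟨m, hm1, hm2, hm3, hm4, hm5, hm6⟩ := exists_block_sizes r c G g
    (fun t => zero_le_one.trans (hg t)) dis Δ hw hrow hcol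
  set ν : τ → ℕ := fun S => (Finset.univ.filter fun i => r i = S).card with hν
  set α : τ → ℕ := fun T => (Finset.univ.filter fun j => c j = T).card - Δ T with hα
  have hνN : ∀ S, ν S ≤ N := fun S => Finset.card_le_univ _
  have hαN : ∀ T, α T ≤ N := fun S => (Nat.sub_le _ _).trans (Finset.card_le_univ _)
  set M := ∑ S ∈ G, ∑ T ∈ G, m S T with hM
  have hMk : N + 2 ≤ M + k := by
    have hMr : (M : ℝ) = ∑ S ∈ G, ∑ T ∈ G, (m S T : ℝ) := by rw [hM]; push_cast; rfl
    rw [← Nat.cast_le (α := ℝ)]; push_cast; linarith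
  have hMN : M ≤ N := by
    calc M ≤ ∑ S ∈ G, ν S := Finset.sum_le_sum hm4
      _ ≤ N := by
        have := Finset.card_eq_sum_card_fiberwise (f := r) (s := Finset.univ.filter fun i => r i ∈ G)
          (t := G) fun i hi => (Finset.mem_filter.1 hi).2
        have h2 : ∑ S ∈ G, ν S = (Finset.univ.filter fun i => r i ∈ G).card := by
          rw [this]
          refine Finset.sum_congr rfl fun S hS => congrArg Finset.card ?_
          ext i
          simp only [Finset.mem_filter, Finset.mem_univ, true_and]
          exact ⟨fun h => ⟨h ▸ hS, h⟩, fun h => h.2⟩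
        rw [h2]; exact Finset.card_le_univ _
  have hkm : k ≤ m t₀ t₀ := by
    have h1 := hm3 t₀ ht₀ t₀ ht₀ hdis
    have h2 : (k : ℝ) + 1 ≤ g t₀ * g t₀ * ν t₀ * α t₀ / w := by
      rw [le_div_iff₀ hw]
      refine h00.trans ?_
      have := one_le_mul_of_one_le_of_one_le (hg t₀) (hg t₀)
      rw [mul_assoc]
      exact le_mul_of_one_le_left (by positivity) this
    have h3 : (k : ℝ) ≤ m t₀ t₀ := by linarith
    exact_mod_cast h3
  have hN1 : 1 ≤ N := by
    by_contra h
    have : N = 0 := by omega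
    have : ν t₀ = 0 := by have := hνN t₀; omega
    have h00' : ((k : ℝ) + 1) * w ≤ ν t₀ * α t₀ := h00
    rw [this] at h00'
    have : 0 < ((k : ℝ) + 1) * w := by positivity
    simp at h00'; linarith
  let δ : τ → ℕ := fun S => if S = t₀ then k else 0
  let m' : τ → τ → ℕ := fun S T => m S T - if S = t₀ ∧ T = t₀ then k else 0
  have hm'add : ∀ S T, m' S T + (if S = t₀ ∧ T = t₀ then k else 0) = m S T := by
    intro S T
    refine Nat.sub_add_cancel ?_
    split_ifs with h
    · rw [h.1, h.2]; exact hkm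
    · exact Nat.zero_le _
  have hrow' : ∀ S ∈ G, ∑ T ∈ G, m S T = ∑ T ∈ G, m' S T + δ S := by
    intro S hS
    simp_rw [← hm'add, Finset.sum_add_distrib]
    congr 1
    by_cases h : S = t₀
    · simp [δ, h, ht₀]
    · simp [δ, h]
  have hcol' : ∀ T ∈ G, ∑ S ∈ G, m S T = ∑ S ∈ G, m' S T + δ T := by
    intro T hT
    simp_rw [← hm'add, Finset.sum_add_distrib]
    congr 1
    by_cases h : T = t₀
    · simp [δ, h, ht₀]
    · simp [δ, h]
  have hM' : M = ∑ S ∈ G, ∑ T ∈ G, m' S T + k := by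
    rw [hM, Finset.sum_congr rfl hrow', Finset.sum_add_distrib]
    simp [δ, ht₀]
  have hcardR : ∀ S, (Finset.univ.filter fun i => r i = S ∧ i ∈ R).card ≤ δ S := by
    intro S
    simp only [δ]
    split_ifs with h
    · rw [← hRk]
      exact Finset.card_le_card fun i hi => (Finset.mem_filter.1 hi).2.2
    · rw [Nat.le_zero, Finset.card_eq_zero, Finset.filter_eq_empty_iff]
      rintro i - ⟨h1, h2⟩
      exact h (h1 ▸ hRr i h2)
  have hcardR' : ∀ T, (Finset.univ.filter fun j => c j = T ∧ j ∈ R').card ≤ δ T := by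
    intro S
    simp only [δ]
    split_ifs with h
    · rw [← hRk']
      exact Finset.card_le_card fun i hi => (Finset.mem_filter.1 hi).2.2
    · rw [Nat.le_zero, Finset.card_eq_zero, Finset.filter_eq_empty_iff]
      rintro i - ⟨h1, h2⟩
      exact h (h1 ▸ hRc i h2)
  have hC := prod_descFactorial_le_card_perm r c OK G m' R R' hR hR'
    (fun S => ν S - δ S) (fun T => α T - δ T) ?_ ?_ ?_
  rotate_left
  · intro S
    refine Nat.sub_le_iff_le_add.2 ((le_trans ?_ (Nat.add_le_add_left (hcardR S) _)))
    refine (Finset.card_le_card fun i hi => ?_).trans (Finset.card_union_le _ _)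
    simp only [Finset.mem_union, Finset.mem_filter, Finset.mem_univ, true_and] at hi ⊢
    tauto
  · intro i T hmT
    have hmT' : m (r i) T ≠ 0 := fun h => hmT (by simp [m', h])
    obtain ⟨hS, hT, hd⟩ := hm1 _ _ hmT'
    have h1 := hΔ i T hT hS hd
    have h2 := hcardR' T
    have h3 : (Finset.univ.filter fun j => c j = T).card ≤
        (Finset.univ.filter fun j => c j = T ∧ j ∉ R' ∧ OK i j).card +
        ((Finset.univ.filter fun j => c j = T ∧ ¬ OK i j).card +
        (Finset.univ.filter fun j => c j = T ∧ j ∈ R').card) := by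
      refine le_trans (Finset.card_le_card fun j hj => ?_)
        ((Finset.card_union_le _ _).trans (Nat.add_le_add_left (Finset.card_union_le _ _) _))
      simp only [Finset.mem_union, Finset.mem_filter, Finset.mem_univ, true_and] at hj ⊢
      tauto
    simp only [hα]
    omega
  · rw [hRk, hRk']; omega
  have hX : ∏ S ∈ G, (ν S).descFactorial (∑ T ∈ G, m S T) ≤
      N ^ k * ∏ S ∈ G, (ν S - δ S).descFactorial (∑ T ∈ G, m' S T) := by
    have : ∏ S ∈ G, N ^ δ S = N ^ k := by
      rw [Finset.prod_pow_eq_pow_sum]; simp [δ, ht₀]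
    rw [← this, ← Finset.prod_mul_distrib]
    refine Finset.prod_le_prod' fun S hS => ?_
    have h1 := hrow' S hS
    have := descFactorial_le_pow_mul (k := ∑ T ∈ G, m S T) (R := δ S) (by omega) (hνN S)
    rwa [show ∑ T ∈ G, m S T - δ S = ∑ T ∈ G, m' S T by omega] at this
  have hY : ∏ T ∈ G, (α T).descFactorial (∑ S ∈ G, m S T) ≤
      N ^ k * ∏ T ∈ G, (α T - δ T).descFactorial (∑ S ∈ G, m' S T) := by
    have : ∏ S ∈ G, N ^ δ S = N ^ k := by
      rw [Finset.prod_pow_eq_pow_sum]; simp [δ, ht₀]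
    rw [← this, ← Finset.prod_mul_distrib]
    refine Finset.prod_le_prod' fun T hT => ?_
    have h1 := hcol' T hT
    have := descFactorial_le_pow_mul (k := ∑ S ∈ G, m S T) (R := δ T) (by omega) (hαN T)
    rwa [show ∑ S ∈ G, m S T - δ T = ∑ S ∈ G, m' S T by omega] at this
  set E := (Finset.univ.filter fun σ : Equiv.Perm V => ∀ i, OK i (σ i)).card with hE
  set Pm := ∏ S ∈ G, ∏ T ∈ G, (m S T).factorial with hPm
  have hPm0 : 0 < Pm := Finset.prod_pos fun S _ => Finset.prod_pos fun T _ => Nat.factorial_pos _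
  have hPm' : ∏ S ∈ G, ∏ T ∈ G, (m' S T).factorial ≤ Pm :=
    Finset.prod_le_prod' fun S _ => Finset.prod_le_prod' fun T _ =>
      Nat.factorial_le (by have := hm'add S T; omega)
  have hXY : (∏ S ∈ G, (ν S).descFactorial (∑ T ∈ G, m S T)) *
      ∏ T ∈ G, (α T).descFactorial (∑ S ∈ G, m S T) ≤ E * N ^ (4 * k) * Pm := by
    calc _ ≤ (N ^ k * ∏ S ∈ G, (ν S - δ S).descFactorial (∑ T ∈ G, m' S T)) *
          (N ^ k * ∏ T ∈ G, (α T - δ T).descFactorial (∑ S ∈ G, m' S T)) := Nat.mul_le_mul hX hY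
      _ = N ^ (2 * k) * ((∏ S ∈ G, (ν S - δ S).descFactorial (∑ T ∈ G, m' S T)) *
          (∏ T ∈ G, (α T - δ T).descFactorial (∑ S ∈ G, m' S T))) := by ring
      _ ≤ N ^ (2 * k) * (E * N ^ (N - ∑ S ∈ G, ∑ T ∈ G, m' S T) *
          ∏ S ∈ G, ∏ T ∈ G, (m' S T).factorial) := Nat.mul_le_mul_left _ hC
      _ ≤ N ^ (2 * k) * (E * N ^ (2 * k) * Pm) := by
          refine Nat.mul_le_mul_left _ (Nat.mul_le_mul (Nat.mul_le_mul_left _ ?_) hPm')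
          exact Nat.pow_le_pow_right hN1 (by omega)
      _ = _ := by ring
  have hpair : ∀ S ∈ G, ∀ T ∈ G, ((m S T).factorial : ℝ) * (w / exp 1) ^ m S T ≤
      (exp 1 * N) * (((ν S / exp 1) * (α T / exp 1)) ^ m S T * (g S ^ m S T * g T ^ m S T)) := by
    intro S hS T hT
    have hmν : m S T ≤ N := ((Finset.single_le_sum (f := fun T => m S T)
      (fun _ _ => Nat.zero_le _) hT).trans (hm4 S hS)).trans (hνN S)
    have h1 := factorial_le_mul_div_exp_pow_of_le hmν hN1
    have h2 := hm2 S T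
    rw [le_div_iff₀ hw] at h2
    have he := exp_pos 1
    calc _ ≤ (exp 1 * N * (m S T / exp 1) ^ m S T) * (w / exp 1) ^ m S T := by gcongr
      _ = (exp 1 * N) * ((m S T * w) / (exp 1 * exp 1)) ^ m S T := by
          rw [mul_assoc, ← mul_pow]; congr 2; field_simp
      _ ≤ (exp 1 * N) * ((g S * g T * ν S * α T) / (exp 1 * exp 1)) ^ m S T := by gcongr
      _ = _ := by
          rw [← mul_pow, ← mul_pow]; congr 2; field_simp
  have hprod : (Pm : ℝ) * (w / exp 1) ^ M ≤ (exp 1 * N) ^ (G.card ^ 2) *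
      (((∏ S ∈ G, (ν S).descFactorial (∑ T ∈ G, m S T) : ℕ) *
      (∏ T ∈ G, (α T).descFactorial (∑ S ∈ G, m S T) : ℕ)) *
      ((∏ i, g (r i)) * ∏ j, g (c j))) := by
    calc (Pm : ℝ) * (w / exp 1) ^ M
        = ∏ S ∈ G, ∏ T ∈ G, (((m S T).factorial : ℝ) * (w / exp 1) ^ m S T) := by
          simp only [Finset.prod_mul_distrib, Finset.prod_pow_eq_pow_sum, hPm]
          push_cast; rfl
      _ ≤ ∏ S ∈ G, ∏ T ∈ G, ((exp 1 * N) *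
          (((ν S / exp 1) * (α T / exp 1)) ^ m S T * (g S ^ m S T * g T ^ m S T))) := by
          have he := exp_pos 1
          refine Finset.prod_le_prod (fun S _ => Finset.prod_nonneg fun T _ => by positivity)
            fun S hS => Finset.prod_le_prod (fun T _ => by positivity) fun T hT => hpair S hS T hT
      _ = (exp 1 * N) ^ (G.card ^ 2) *
          (((∏ S ∈ G, (ν S / exp 1) ^ (∑ T ∈ G, m S T)) *
          ∏ T ∈ G, (α T / exp 1) ^ (∑ S ∈ G, m S T)) *
          ((∏ S ∈ G, g S ^ (∑ T ∈ G, m S T)) * ∏ T ∈ G, g T ^ (∑ S ∈ G, m S T))) := by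
          simp only [mul_pow _ _ (m _ _), Finset.prod_mul_distrib, Finset.prod_const]
          rw [Finset.prod_comm (f := fun S T => (α T / exp 1) ^ m S T),
            Finset.prod_comm (f := fun S T => g T ^ m S T)]
          simp only [Finset.prod_pow_eq_pow_sum]
          ring
      _ ≤ _ := by
          have he := exp_pos 1
          have hg0 : ∀ t, 0 ≤ g t := fun t => zero_le_one.trans (hg t)
          have e1 : ∏ S ∈ G, (ν S / exp 1) ^ (∑ T ∈ G, m S T) ≤
              (∏ S ∈ G, (ν S).descFactorial (∑ T ∈ G, m S T) : ℕ) := by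
            push_cast
            exact Finset.prod_le_prod (fun _ _ => by positivity) fun S hS =>
              div_exp_pow_le_descFactorial (hm4 S hS)
          have e2 : ∏ T ∈ G, (α T / exp 1) ^ (∑ S ∈ G, m S T) ≤
              (∏ T ∈ G, (α T).descFactorial (∑ S ∈ G, m S T) : ℕ) := by
            push_cast
            exact Finset.prod_le_prod (fun _ _ => by positivity) fun T hT =>
              div_exp_pow_le_descFactorial (hm5 T hT)
          have e3 := prod_pow_card_fiber_le r G g hg _ hm4
          have e4 := prod_pow_card_fiber_le c G g hg _ fun T hT => (hm5 T hT).trans (Nat.sub_le _ _)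
          have p1 : 0 ≤ ∏ i, g (r i) := Finset.prod_nonneg fun _ _ => hg0 _
          have p2 : 0 ≤ ∏ T ∈ G, (α T / exp 1) ^ (∑ S ∈ G, m S T) :=
            Finset.prod_nonneg fun _ _ => by positivity
          have p3 : 0 ≤ ∏ T ∈ G, g T ^ (∑ S ∈ G, m S T) :=
            Finset.prod_nonneg fun _ _ => pow_nonneg (hg0 _) _
          have p4 : 0 ≤ ∏ S ∈ G, g S ^ (∑ T ∈ G, m S T) :=
            Finset.prod_nonneg fun _ _ => pow_nonneg (hg0 _) _
          gcongr
  have he3 : exp 1 ≤ 3 := by have := exp_one_lt_d9; linarith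
  have hNR : (1 : ℝ) ≤ N := by exact_mod_cast hN1
  have hgg : 0 ≤ (∏ i, g (r i)) * ∏ j, g (c j) := mul_nonneg
    (Finset.prod_nonneg fun _ _ => zero_le_one.trans (hg _))
    (Finset.prod_nonneg fun _ _ => zero_le_one.trans (hg _))
  have hmain : (w / exp 1) ^ M ≤ (3 * N : ℝ) ^ (5 * k) * (E * ((∏ i, g (r i)) * ∏ j, g (c j))) := by
    have hPmR : (0 : ℝ) < Pm := by exact_mod_cast hPm0
    refine le_of_mul_le_mul_left ?_ hPmR
    have hXYR : (((∏ S ∈ G, (ν S).descFactorial (∑ T ∈ G, m S T) : ℕ) : ℝ) *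
      (∏ T ∈ G, (α T).descFactorial (∑ S ∈ G, m S T) : ℕ)) ≤ E * N ^ (4 * k) * Pm := by
      exact_mod_cast hXY
    calc _ ≤ _ := hprod
      _ ≤ (3 * N : ℝ) ^ k * ((E * (3 * N : ℝ) ^ (4 * k) * Pm) * ((∏ i, g (r i)) * ∏ j, g (c j))) := by
          have hE0 : (exp 1 * N) ^ (G.card ^ 2) ≤ (3 * N : ℝ) ^ k := by
            calc _ ≤ (3 * N : ℝ) ^ (G.card ^ 2) := by gcongr
              _ ≤ _ := pow_le_pow_right₀ (by linarith) hG
          have : (E * N ^ (4 * k) * Pm : ℝ) ≤ E * (3 * N : ℝ) ^ (4 * k) * Pm := by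
            gcongr; linarith
          exact mul_le_mul hE0 (mul_le_mul_of_nonneg_right (hXYR.trans this) hgg)
            (mul_nonneg (by positivity) hgg) (by positivity)
      _ = _ := by ring
  calc (w / exp 1) ^ N = (w / exp 1) ^ M * (w / exp 1) ^ (N - M) := by
        rw [← pow_add]; congr 1; omega
    _ ≤ ((3 * N : ℝ) ^ (5 * k) * (E * ((∏ i, g (r i)) * ∏ j, g (c j)))) * (3 * N : ℝ) ^ k := by
        have h1 : w / exp 1 ≤ 3 * N := by
          rw [div_le_iff₀ (exp_pos 1)]; linarith
        have h2 : (w / exp 1) ^ (N - M) ≤ (3 * N : ℝ) ^ k := by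
          have : 0 < w / exp 1 := div_pos hw (exp_pos 1)
          calc _ ≤ (3 * N : ℝ) ^ (N - M) := by gcongr
            _ ≤ _ := pow_le_pow_right₀ (by linarith) (by omega)
        have : 0 < w / exp 1 := div_pos hw (exp_pos 1)
        gcongr
    _ = _ := by ring

/-- The geometric mean of the weights of random labels. -/
noncomputable def weightRoot (z : ℕ) : ℝ :=
  ∏ p ∈ oddPrimes z, (((p : ℝ) - 1) / (p - 2)) ^ (1 / (p : ℝ))

theorem prod_primeWeight_eq {h : ℕ} (l : Fin h → ℕ) (z : ℕ) :
    ∏ j, primeWeight (smallType z (l j)) = ∏ p ∈ oddPrimes z,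
      (((p : ℝ) - 1) / (p - 2)) ^ (Finset.univ.filter fun j => p ∣ l j).card := by
  unfold primeWeight smallType
  simp_rw [Finset.prod_filter]
  rw [Finset.prod_comm]
  refine Finset.prod_congr rfl fun p _ => ?_
  rw [← Finset.prod_filter, Finset.prod_const]

theorem weightRoot_pow_eq (h z : ℕ) :
    weightRoot z ^ h = ∏ p ∈ oddPrimes z, (((p : ℝ) - 1) / (p - 2)) ^ ((h : ℝ) / p) := by
  unfold weightRoot
  rw [← Finset.prod_pow]
  refine Finset.prod_congr rfl fun p hp => ?_
  have := one_le_weight_factor (mem_oddPrimes.1 hp).1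
  rw [← rpow_mul_natCast (by linarith)]
  congr 1; ring

theorem EquiLabels.prod_primeWeight_le {h : ℕ} {l : Fin h → ℕ} (hl : EquiLabels h l) {z : ℕ}
    (hz : 2 ≤ z) : ∏ j, primeWeight (smallType z (l j)) ≤ weightRoot z ^ h * z := by
  rw [prod_primeWeight_eq, weightRoot_pow_eq]
  have h0 : 0 ≤ ∏ p ∈ oddPrimes z, (((p : ℝ) - 1) / (p - 2)) ^ ((h : ℝ) / p) :=
    Finset.prod_nonneg fun p hp => rpow_nonneg
      (zero_le_one.trans (one_le_weight_factor (mem_oddPrimes.1 hp).1)) _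
  refine le_trans ?_ (mul_le_mul_of_nonneg_left (primeWeight_le hz subset_rfl) h0)
  rw [primeWeight, ← Finset.prod_mul_distrib]
  refine Finset.prod_le_prod (fun p hp => pow_nonneg
      (zero_le_one.trans (one_le_weight_factor (mem_oddPrimes.1 hp).1)) _) fun p hp => ?_
  have h1 := one_le_weight_factor (mem_oddPrimes.1 hp).1
  have h2 := abs_le.1 (hl.count p (odd_of_mem_oddPrimes hp))
  calc _ = (((p : ℝ) - 1) / (p - 2)) ^ ((Finset.univ.filter fun j => p ∣ l j).card : ℝ) :=
        (rpow_natCast _ _).symm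
    _ ≤ (((p : ℝ) - 1) / (p - 2)) ^ ((h : ℝ) / p + 1) :=
        rpow_le_rpow_of_exponent_le h1 (by linarith)
    _ = _ := by rw [rpow_add (by linarith), rpow_one]

theorem EquiLabels.le_prod_primeWeight {h : ℕ} {l : Fin h → ℕ} (hl : EquiLabels h l) {z : ℕ}
    (hz : 2 ≤ z) : weightRoot z ^ h ≤ (∏ j, primeWeight (smallType z (l j))) * z := by
  rw [prod_primeWeight_eq, weightRoot_pow_eq]
  have h0 : 0 ≤ ∏ p ∈ oddPrimes z,
      (((p : ℝ) - 1) / (p - 2)) ^ (Finset.univ.filter fun j => p ∣ l j).card :=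
    Finset.prod_nonneg fun p hp => pow_nonneg
      (zero_le_one.trans (one_le_weight_factor (mem_oddPrimes.1 hp).1)) _
  refine le_trans ?_ (mul_le_mul_of_nonneg_left (primeWeight_le hz subset_rfl) h0)
  rw [primeWeight, ← Finset.prod_mul_distrib]
  refine Finset.prod_le_prod (fun p hp => rpow_nonneg
      (zero_le_one.trans (one_le_weight_factor (mem_oddPrimes.1 hp).1)) _) fun p hp => ?_
  have h1 := one_le_weight_factor (mem_oddPrimes.1 hp).1
  have h2 := abs_le.1 (hl.count p (odd_of_mem_oddPrimes hp))
  calc _ ≤ (((p : ℝ) - 1) / (p - 2)) ^ (((Finset.univ.filter fun j => p ∣ l j).card : ℝ) + 1) :=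
        rpow_le_rpow_of_exponent_le h1 (by linarith)
    _ = _ := by rw [rpow_add (by linarith), rpow_one, rpow_natCast]

theorem prod_Icc_three_le (z : ℕ) :
    ∏ p ∈ Finset.Icc 3 (z + 2), (1 + 1 / ((p : ℝ) * (p - 2))) = 2 * (z + 1) / (z + 2) := by
  induction z with
  | zero => simp
  | succ z ih =>
    rw [show z + 1 + 2 = (z + 2) + 1 by ring, Finset.prod_Icc_succ_top (by omega), ih]
    push_cast
    rw [show (z : ℝ) + 2 + 1 - 2 = z + 1 by ring]
    field_simp
    ring

theorem oddConst_le (z : ℕ) : oddConst z ≤ 2 := by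
  have key : ∀ p ∈ Finset.Icc 3 (z + 2), 1 ≤ 1 + 1 / ((p : ℝ) * (p - 2)) := fun p hp => by
    have : (3 : ℝ) ≤ p := by exact_mod_cast (Finset.mem_Icc.1 hp).1
    have : (0 : ℝ) ≤ p - 2 := by linarith
    have : 0 ≤ 1 / ((p : ℝ) * (p - 2)) := by positivity
    linarith
  have hsub : oddPrimes z ⊆ Finset.Icc 3 (z + 2) := fun p hp => by
    have := mem_oddPrimes.1 hp
    rw [Finset.mem_Icc]; omega
  have h1 : oddConst z ≤ ∏ p ∈ Finset.Icc 3 (z + 2), (1 + 1 / ((p : ℝ) * (p - 2))) := by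
    rw [oddConst, ← Finset.prod_sdiff hsub]
    refine le_mul_of_one_le_left (zero_le_one.trans (one_le_oddConst z)) ?_
    exact Finset.prod_induction _ (fun x : ℝ => 1 ≤ x) (fun _ _ => one_le_mul_of_one_le_of_one_le)
      le_rfl fun p hp => key p (Finset.sdiff_subset hp)
  refine h1.trans ?_
  rw [prod_Icc_three_le, div_le_iff₀ (by positivity)]
  linarith

set_option maxHeartbeats 1600000 in
/-- Lower bound for the number of coprime matchings between two families of labels. -/
theorem le_card_coprime_matching {h : ℕ} {a b : Fin h → ℕ} (ha : EquiLabels h a)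
    (hb : EquiLabels h b) (hbo : ∀ j, Odd (b j)) {z k R : ℕ} (hz : 2 ≤ z) (hk : 1 ≤ k)
    (P : Finset ℕ)
    (hP : ∀ p ∈ P, p.Prime ∧ z < p ∧ 2 * h + 1 < p * p ∧ (∃ i, a i = p) ∧ ∃ j, b j = p)
    (hRP : R ≤ P.card) (he : 2 ^ k * (z : ℝ) ^ 2 ≤ h)
    (hRP' : ((R : ℝ) + 1) * (3 * h) ≤
      P.card * (P.card - Nat.log 2 (2 * h + 1) * (3 * h / (z : ℝ))))
    {y E s : ℝ} (hy : 1 ≤ y) (hs : ∑ p ∈ oddPrimes z, 1 / (p : ℝ) ≤ s)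
    (hE : 3 * h * exp (y * s) / y ^ k ≤ E)
    (hR : 2 * (2 ^ k * (z : ℝ) ^ 2) + (1 + (z : ℝ) ^ 2) * E +
      Nat.log 2 (2 * h + 1) * (3 * h / (z : ℝ)) * exp s + (z : ℝ) ^ (2 * k) + 2 ≤ R) :
    (h * oddConst z / exp 1) ^ h ≤
      (Finset.univ.filter fun σ : Equiv.Perm (Fin h) => ∀ i, Nat.Coprime (a i) (b (σ i))).card *
        (3 * h : ℝ) ^ (6 * R) * ((weightRoot z ^ h * z) * (weightRoot z ^ h * z)) := by
  classical
  set D := oddConst z with hD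
  have hD1 : 1 ≤ D := one_le_oddConst z
  have hD2 : D ≤ 2 := oddConst_le z
  have hzR : (2 : ℝ) ≤ z := by exact_mod_cast hz
  set e₀ : ℝ := 2 ^ k * (z : ℝ) ^ 2 with he₀
  have he₀1 : 1 ≤ e₀ := by
    have : (1 : ℝ) ≤ 2 ^ k := one_le_pow₀ (by norm_num)
    nlinarith
  have hh0 : (0 : ℝ) < h := by linarith
  set w : ℝ := h * D + e₀ with hw
  have hwh : (h : ℝ) ≤ w := by nlinarith
  have hw0 : 0 < w := by linarith
  have hw3 : w ≤ 3 * h := by nlinarith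
  set g : Finset ℕ → ℝ := fun t => max 1 (primeWeight t) with hg
  have hgs : ∀ t ⊆ oddPrimes z, g t = primeWeight t := fun t ht =>
    max_eq_right (one_le_primeWeight (three_le_of_subset ht))
  have hg1 : ∀ t, 1 ≤ g t := fun t => le_max_left _ _
  have hgz : ∀ t ⊆ oddPrimes z, g t ≤ z := fun t ht => by
    rw [hgs t ht]; exact primeWeight_le hz ht
  set G := (oddPrimes z).powerset.filter fun t => t.card < k with hG
  have hGsub : ∀ t ∈ G, t ⊆ oddPrimes z := fun t ht =>
    Finset.mem_powerset.1 (Finset.mem_filter.1 ht).1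
  have hGk : ∀ t ∈ G, t.card < k := fun t ht => (Finset.mem_filter.1 ht).2
  have hGmem : ∀ n, smallType z n ∈ G ↔ (smallType z n).card < k := fun n => by
    simp [hG, smallType_subset]
  set B : ℕ := Nat.log 2 (2 * h + 1) with hB
  let Δ : Finset ℕ → ℕ := fun T => ⌊(B : ℝ) * (3 * h / (z * ∏ p ∈ T, (p : ℝ)))⌋₊
  have hF : ∀ l : Fin h → ℕ, EquiLabels h l → ∀ S ∈ G,
      |g S * ∑ j with Disjoint S (smallType z (l j)), g (smallType z (l j)) - h * D| ≤ e₀ := by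
    intro l hl S hS
    have h1 := hl.abs_sum_disjoint_sub_le hz (hGsub S hS)
    have h2 := one_le_primeWeight (three_le_of_subset (hGsub S hS))
    have h3 := primeWeight_le hz (hGsub S hS)
    rw [hgs S (hGsub S hS), Finset.sum_congr rfl fun j _ => hgs _ (smallType_subset z (l j))]
    calc _ = primeWeight S * |∑ j with Disjoint S (smallType z (l j)), primeWeight (smallType z (l j)) -
          h * (oddConst z / primeWeight S)| := by
          nth_rewrite 2 [← abs_of_pos (zero_lt_one.trans_le h2)]
          rw [← abs_mul]
          congr 1
          have : primeWeight S ≠ 0 := by linarith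
          rw [← hD]
          field_simp
      _ ≤ z * (2 ^ k * z) := by
          refine mul_le_mul h3 (h1.trans ?_) (abs_nonneg _) (by linarith)
          have : (2 : ℝ) ^ S.card ≤ 2 ^ k := pow_le_pow_right₀ (by norm_num) (hGk S hS).le
          gcongr
      _ = e₀ := by rw [he₀]; ring
  have hrow : ∀ l : Fin h → ℕ, EquiLabels h l → ∀ S ∈ G,
      g S * ∑ j with Disjoint S (smallType z (l j)), g (smallType z (l j)) ≤ w := fun l hl S hS => by
    have := (abs_le.1 (hF l hl S hS)).2; linarith
  have hempty : ∀ p, p.Prime → z < p → smallType z p = ∅ := by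
    intro p hp hzp
    refine Finset.filter_eq_empty_iff.2 fun q hq hqp => ?_
    have hq' := mem_oddPrimes.1 hq
    have := (Nat.prime_dvd_prime_iff_eq hq'.2.2 hp).1 hqp
    omega
  have hinv : ∀ l : Fin h → ℕ, EquiLabels h l → ∀ Q ⊆ P, (∀ p ∈ P, ∃ i, l i = p) →
      (Finset.univ.filter fun i => l i ∈ Q).card = Q.card := by
    intro l hl Q hQ hex
    rw [← Finset.card_image_of_injective _ hl.inj]
    congr 1
    ext p
    simp only [Finset.mem_image, Finset.mem_filter, Finset.mem_univ, true_and]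
    constructor
    · rintro ⟨i, hi, rfl⟩; exact hi
    · intro hp
      obtain ⟨i, rfl⟩ := hex p (hQ hp)
      exact ⟨i, hp, rfl⟩
  have hcardempty : ∀ l : Fin h → ℕ, EquiLabels h l → (∀ p ∈ P, ∃ i, l i = p) →
      P.card ≤ (Finset.univ.filter fun i => smallType z (l i) = ∅).card := by
    intro l hl hex
    rw [← hinv l hl P subset_rfl hex]
    refine Finset.card_le_card fun i hi => ?_
    have := hP _ (Finset.mem_filter.1 hi).2
    exact Finset.mem_filter.2 ⟨Finset.mem_univ _, hempty _ this.1 this.2.1⟩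
  have hbad : ∀ l : Fin h → ℕ, EquiLabels h l →
      ((Finset.univ.filter fun j => ¬ smallType z (l j) ∈ G).card : ℝ) ≤ E := by
    intro l hl
    simp_rw [hGmem, not_lt]
    refine (hl.card_many_factors_le z k hy).trans (le_trans ?_ hE)
    gcongr
  have hone : ∀ Q ⊆ P, ∀ l : Fin h → ℕ, EquiLabels h l → ∀ n, 1 ≤ n → n ≤ 2 * h + 1 →
      (((Finset.univ.filter fun i => l i ∈ Q)).filter fun i => ¬ Nat.Coprime (l i) n).card ≤ 1 := by
    intro Q hQ l hl n hn1 hn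
    rw [Finset.card_le_one]
    intro i hi j hj
    simp only [Finset.mem_filter, Finset.mem_univ, true_and] at hi hj
    have hi' := hP _ (hQ hi.1)
    have hj' := hP _ (hQ hj.1)
    have hi2 : l i ∣ n := (Nat.Prime.dvd_iff_not_coprime hi'.1).2 hi.2
    have hj2 : l j ∣ n := (Nat.Prime.dvd_iff_not_coprime hj'.1).2 hj.2
    by_contra hne
    have hne' : l i ≠ l j := fun h => hne (hl.inj h)
    have h1 := Nat.Coprime.mul_dvd_of_dvd_of_dvd ((Nat.coprime_primes hi'.1 hj'.1).2 hne') hi2 hj2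
    have h2 := Nat.le_of_dvd hn1 h1
    have h3 := hi'.2.2.1
    have h4 := hj'.2.2.1
    rcases le_total (l i) (l j) with hle | hle
    · have := Nat.mul_le_mul_left (l i) hle; omega
    · have := Nat.mul_le_mul_right (l j) hle; omega
  obtain ⟨Q, hQP, hQ⟩ := Finset.exists_subset_card_eq hRP
  have hGcard : (G.card : ℝ) ≤ (z : ℝ) ^ k := by
    exact_mod_cast card_types_le (z := z) (k := k) (by omega)
  have hE0 : 0 ≤ E := le_trans (by positivity) hE
  have hΔ0 : ∀ T ⊆ oddPrimes z, (0 : ℝ) < ∏ p ∈ T, (p : ℝ) := fun T hT =>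
    Finset.prod_pos fun p hp => by have := three_le_of_mem_oddPrimes (hT hp); linarith
  have hsumΔ : ∑ T ∈ G, (Δ T : ℝ) ≤ B * (3 * h / (z : ℝ)) * exp s := by
    calc _ ≤ ∑ T ∈ G, B * (3 * h / (z : ℝ)) * ∏ p ∈ T, 1 / (p : ℝ) := by
          refine Finset.sum_le_sum fun T hT => (Nat.floor_le ?_).trans (le_of_eq ?_)
          · have := hΔ0 T (hGsub T hT); positivity
          · rw [Finset.prod_div_distrib, Finset.prod_const_one]
            have := (hΔ0 T (hGsub T hT)).ne'
            field_simp
      _ ≤ B * (3 * h / (z : ℝ)) * ∏ p ∈ oddPrimes z, (1 + 1 / (p : ℝ)) := by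
          rw [← Finset.mul_sum, Finset.prod_one_add]
          refine mul_le_mul_of_nonneg_left ?_ (by positivity)
          exact Finset.sum_le_sum_of_subset_of_nonneg (Finset.filter_subset _ _)
            fun _ _ _ => Finset.prod_nonneg fun _ _ => by positivity
      _ ≤ _ := by
          refine mul_le_mul_of_nonneg_left ?_ (by positivity)
          refine le_trans ?_ (exp_le_exp.2 hs)
          rw [exp_sum]
          refine Finset.prod_le_prod (fun _ _ => by positivity) fun p _ => ?_
          rw [add_comm]; exact add_one_le_exp _
  have hsumgg : ((h : ℝ) - E) * (h * D - e₀) - h * ((z : ℝ) ^ 2 * E) ≤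
      ∑ i with smallType z (a i) ∈ G, ∑ j with smallType z (b j) ∈ G ∧
        Disjoint (smallType z (a i)) (smallType z (b j)),
        g (smallType z (a i)) * g (smallType z (b j)) := by
    have hi : ∀ i, smallType z (a i) ∈ G → (h * D - e₀) - (z : ℝ) ^ 2 * E ≤
        ∑ j with smallType z (b j) ∈ G ∧ Disjoint (smallType z (a i)) (smallType z (b j)),
        g (smallType z (a i)) * g (smallType z (b j)) := by
      intro i hi
      have h1 := (abs_le.1 (hF b hb _ hi)).1
      rw [Finset.mul_sum] at h1
      have h2 : ∑ j with Disjoint (smallType z (a i)) (smallType z (b j)),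
          g (smallType z (a i)) * g (smallType z (b j)) ≤
          ∑ j with smallType z (b j) ∈ G ∧ Disjoint (smallType z (a i)) (smallType z (b j)),
            g (smallType z (a i)) * g (smallType z (b j)) +
          ∑ j with ¬ smallType z (b j) ∈ G, g (smallType z (a i)) * g (smallType z (b j)) := by
        rw [← Finset.sum_union]
        · refine Finset.sum_le_sum_of_subset_of_nonneg (fun j hj => ?_) fun j _ _ =>
            mul_nonneg (zero_le_one.trans (hg1 _)) (zero_le_one.trans (hg1 _))
          simp only [Finset.mem_union, Finset.mem_filter, Finset.mem_univ, true_and] at hj ⊢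
          tauto
        · rw [Finset.disjoint_filter]; tauto
      have h3 : ∑ j with ¬ smallType z (b j) ∈ G, g (smallType z (a i)) * g (smallType z (b j)) ≤
          (z : ℝ) ^ 2 * E := by
        calc _ ≤ ∑ j with ¬ smallType z (b j) ∈ G, (z : ℝ) * z := by
              refine Finset.sum_le_sum fun j _ => mul_le_mul (hgz _ (smallType_subset _ _))
                (hgz _ (smallType_subset _ _)) (zero_le_one.trans (hg1 _)) (by positivity)
          _ ≤ _ := by
              rw [Finset.sum_const, nsmul_eq_mul, mul_comm, ← sq]
              exact mul_le_mul_of_nonneg_left (hbad b hb) (by positivity)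
      linarith
    have h1 := Finset.sum_le_sum fun i (hi' : i ∈ Finset.univ.filter fun i => smallType z (a i) ∈ G) =>
      hi i (Finset.mem_filter.1 hi').2
    refine le_trans ?_ h1
    rw [Finset.sum_const, nsmul_eq_mul]
    have h2 := Finset.card_filter_add_card_filter_not (s := (Finset.univ : Finset (Fin h)))
      fun i => smallType z (a i) ∈ G
    rw [Finset.card_univ, Fintype.card_fin] at h2
    have h3 := hbad a ha
    have h4 : (((Finset.univ.filter fun i => smallType z (a i) ∈ G).card : ℕ) : ℝ) +
      ((Finset.univ.filter fun j => ¬ smallType z (a j) ∈ G).card : ℝ) = h := by exact_mod_cast h2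
    have h5 : 0 ≤ h * D - e₀ := by nlinarith
    have h6 : 0 ≤ (z : ℝ) ^ 2 * E := by positivity
    have h7 : 0 ≤ ((Finset.univ.filter fun j => ¬ smallType z (a j) ∈ G).card : ℝ) := by positivity
    nlinarith
  have hmain := le_card_perm_of_weights (fun i => smallType z (a i)) (fun j => smallType z (b j))
    (fun i j => Nat.Coprime (a i) (b j)) G g hg1 (fun s t => Disjoint s t) Δ hw0
    (hrow b hb) (fun T hT => by
      simp_rw [disjoint_comm (b := T)]; exact hrow a ha T hT) (t₀ := ∅)
    (by simp [hG]; omega) (Finset.disjoint_empty_left _)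
    (Finset.univ.filter fun i => a i ∈ Q) (Finset.univ.filter fun j => b j ∈ Q) (k := R)
    (by rw [hinv a ha Q hQP fun p hp => (hP p hp).2.2.2.1, hQ])
    (by rw [hinv b hb Q hQP fun p hp => (hP p hp).2.2.2.2, hQ])
    (fun i hi => by
      have := hP _ (hQP (Finset.mem_filter.1 hi).2); exact hempty _ this.1 this.2.1)
    (fun i hi => by
      have := hP _ (hQP (Finset.mem_filter.1 hi).2); exact hempty _ this.1 this.2.1)
    (fun j => hone Q hQP a ha (b j) (hb.pos j) (hb.le j))
    (fun i => by
      simp_rw [Nat.coprime_comm (n := a i)]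
      exact hone Q hQP b hb (a i) (ha.pos i) (ha.le i))
    ?_ ?_ ?_ ?_ ?_
  · rw [Fintype.card_fin] at hmain
    have hgg : ∀ l : Fin h → ℕ, EquiLabels h l → ∏ i, g (smallType z (l i)) ≤ weightRoot z ^ h * z := by
      intro l hl
      rw [Finset.prod_congr rfl fun i _ => hgs _ (smallType_subset z (l i))]
      exact hl.prod_primeWeight_le hz
    have hg0 : ∀ l : Fin h → ℕ, 0 ≤ ∏ i, g (smallType z (l i)) := fun l =>
      Finset.prod_nonneg fun i _ => zero_le_one.trans (hg1 _)
    have he := exp_pos 1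
    calc _ ≤ (w / exp 1) ^ h := by
          have : h * D ≤ w := by linarith
          gcongr
      _ ≤ (Finset.univ.filter fun σ : Equiv.Perm (Fin h) => ∀ i, Nat.Coprime (a i) (b (σ i))).card *
        (3 * h : ℝ) ^ (6 * R) * ((∏ i, g (smallType z (a i))) * ∏ j, g (smallType z (b j))) := by
          convert hmain
      _ ≤ _ := by
          refine mul_le_mul_of_nonneg_left
            (mul_le_mul (hgg a ha) (hgg b hb) (hg0 b) (le_trans (hg0 a) (hgg a ha))) ?_
          positivity
  · intro i T hT hi hd
    refine Nat.le_floor ?_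
    have h1 := hb.card_conflict_le hz (ha.pos i) (hGsub T hT)
    have h2 : ((Finset.univ.filter fun j => smallType z (b j) = T ∧ ¬ Nat.Coprime (a i) (b j)).card : ℝ) ≤
      ((Finset.univ.filter fun j => smallType z (b j) = T ∧
      ∃ q ∈ (a i).primeFactors, z < q ∧ q ∣ b j).card : ℝ) := by
      refine Nat.cast_le.2 (Finset.card_le_card fun j hj => ?_)
      simp only [Finset.mem_filter, Finset.mem_univ, true_and] at hj ⊢
      refine ⟨hj.1, ?_⟩
      obtain ⟨q, hq, hqa, hqb⟩ := Nat.Prime.not_coprime_iff_dvd.1 hj.2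
      refine ⟨q, Nat.mem_primeFactors.2 ⟨hq, hqa, by have := ha.pos i; omega⟩, ?_, hqb⟩
      by_contra hzq
      have hq2 : q ≠ 2 := by
        intro hq2
        rw [hq2] at hqb
        exact (Nat.not_even_iff_odd.2 (hbo j)) (even_iff_two_dvd.2 hqb)
      have hq3 : q ∈ oddPrimes z := mem_oddPrimes.2
        ⟨by have := hq.two_le; omega, by omega, hq⟩
      refine (Finset.disjoint_left.1 hd (Finset.mem_filter.2 ⟨hq3, hqa⟩)) ?_
      rw [← hj.1]
      exact Finset.mem_filter.2 ⟨hq3, hqb⟩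
    refine h2.trans (h1.trans ?_)
    have h3 : ((Nat.log 2 (a i) : ℕ) : ℝ) ≤ B := by
      exact_mod_cast Nat.log_mono_right (ha.le i)
    have := hΔ0 T (hGsub T hT)
    gcongr
  · rw [Fintype.card_fin]
    have := exp_one_gt_d9
    nlinarith
  · have h1 := hcardempty a ha fun p hp => (hP p hp).2.2.2.1
    have h2 := hcardempty b hb fun p hp => (hP p hp).2.2.2.2
    have h3 : (Δ ∅ : ℝ) ≤ B * (3 * h / (z : ℝ)) := by
      refine (Nat.floor_le (by positivity)).trans (le_of_eq ?_)
      simp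
    have h4 : (P.card : ℝ) - B * (3 * h / (z : ℝ)) ≤
        ((Finset.univ.filter fun j => smallType z (b j) = ∅).card - Δ ∅ : ℕ) := by
      have h5 : ((Finset.univ.filter fun j => smallType z (b j) = ∅).card : ℝ) ≤
        ((Finset.univ.filter fun j => smallType z (b j) = ∅).card - Δ ∅ : ℕ) + Δ ∅ := by
        exact_mod_cast le_tsub_add
      have h6 : (P.card : ℝ) ≤ (Finset.univ.filter fun j => smallType z (b j) = ∅).card := by
        exact_mod_cast h2
      linarith
    calc ((R : ℝ) + 1) * w ≤ (R + 1) * (3 * h) := by gcongr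
      _ ≤ _ := hRP'
      _ ≤ P.card * ((Finset.univ.filter fun j => smallType z (b j) = ∅).card - Δ ∅ : ℕ) :=
          mul_le_mul_of_nonneg_left h4 (by positivity)
      _ ≤ _ := by
          have : (P.card : ℝ) ≤ (Finset.univ.filter fun j => smallType z (a j) = ∅).card := by
            exact_mod_cast h1
          gcongr
  · have h1 : ((z : ℝ) ^ k) ^ 2 ≤ R := by
      rw [← pow_mul, mul_comm k]
      have : 0 ≤ B * (3 * h / (z : ℝ)) * exp s := by positivity
      have : 0 ≤ (1 + (z : ℝ) ^ 2) * E := by positivity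
      linarith
    have h2 : (G.card : ℝ) ^ 2 ≤ R := le_trans (by gcongr) h1
    exact_mod_cast h2
  · rw [Fintype.card_fin]
    have h1 : (G.card : ℝ) ^ 2 ≤ (z : ℝ) ^ (2 * k) := by
      rw [mul_comm, pow_mul]; gcongr
    have h2 : (h : ℝ) - E - 2 * e₀ - (z : ℝ) ^ 2 * E ≤
        (((h : ℝ) - E) * (h * D - e₀) - h * ((z : ℝ) ^ 2 * E)) / w := by
      rw [le_div_iff₀ hw0]
      have e1 : 0 ≤ (z : ℝ) ^ 2 * E := by positivity
      have e2 : 0 ≤ E * e₀ := by positivity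
      have e3 := mul_le_mul_of_nonneg_right hwh e1
      have e4 := mul_le_mul_of_nonneg_right hwh (show 0 ≤ e₀ by linarith)
      have e5 : (h : ℝ) * D = w - e₀ := by rw [hw]; ring
      rw [e5]
      nlinarith
    have h3 := div_le_div_of_nonneg_right hsumgg hw0.le
    have h4 := h2.trans h3
    linarith

/-- Upper bound for the number of matchings between two families of labels that are coprime
except possibly at one prescribed place. -/
theorem card_coprime_matching_mul_le {h : ℕ} {a b : Fin h → ℕ} (ha : EquiLabels h a)
    (hb : EquiLabels h b) (i₀ : Fin h) {z k E : ℕ} (hz : 2 ≤ z)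
    {y s : ℝ} (hy : 1 ≤ y) (hs : ∑ p ∈ oddPrimes z, 1 / (p : ℝ) ≤ s)
    (hE : 3 * h * exp (y * s) / y ^ k ≤ E) :
    ((Finset.univ.filter fun σ : Equiv.Perm (Fin h) =>
        ∀ i, i = i₀ ∨ Nat.Coprime (a i) (b (σ i))).card : ℝ) * (weightRoot z ^ h * weightRoot z ^ h) ≤
      (exp 1 * h) ^ (z ^ k + E) * exp (-h) * (h * oddConst z + 2 ^ k * (z : ℝ) ^ 2) ^ h *
        (z : ℝ) ^ (2 * E + 4) := by
  classical
  have hh : 1 ≤ h := by have := i₀.2; omega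
  have hhR : (1 : ℝ) ≤ h := by exact_mod_cast hh
  have hzR : (2 : ℝ) ≤ z := by exact_mod_cast hz
  have hD1 : 1 ≤ oddConst z := one_le_oddConst z
  set e₀ : ℝ := 2 ^ k * (z : ℝ) ^ 2 with he₀
  have he₀0 : 0 ≤ e₀ := by positivity
  set w : ℝ := h * oddConst z + e₀ with hw
  have hwh : (h : ℝ) ≤ w := by nlinarith
  set g : Finset ℕ → ℝ := fun t => max 1 (primeWeight t) with hg
  have hgs : ∀ n, g (smallType z n) = primeWeight (smallType z n) := fun n =>
    max_eq_right (one_le_primeWeight (three_le_of_subset (smallType_subset z n)))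
  have hg1 : ∀ t, 1 ≤ g t := fun t => le_max_left _ _
  have hg0 : ∀ t, 0 < g t := fun t => zero_lt_one.trans_le (hg1 t)
  have hgz : ∀ n, g (smallType z n) ≤ z := fun n => by
    rw [hgs]; exact primeWeight_le hz (smallType_subset z n)
  have hbad : ∀ l : Fin h → ℕ, EquiLabels h l →
      (Finset.univ.filter fun j => k ≤ (smallType z (l j)).card).card ≤ E := by
    intro l hl
    have h1 : 3 * h * exp (y * ∑ p ∈ oddPrimes z, 1 / (p : ℝ)) / y ^ k ≤ E := by
      refine le_trans ?_ hE
      gcongr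
    exact_mod_cast (hl.card_many_factors_le z k hy).trans h1
  have hmain := card_perm_mul_prod_le hh
    (fun i t => i = i₀ ∨ Disjoint (smallType z (a i)) t) (fun j => smallType z (b j)) g hg0
  have htypes : (Finset.univ.image fun j => smallType z (b j)).card ≤ z ^ k + E := by
    have hsub : (Finset.univ.image fun j => smallType z (b j)) ⊆
        ((oddPrimes z).powerset.filter fun t => t.card < k) ∪
        (Finset.univ.filter fun j => k ≤ (smallType z (b j)).card).image fun j => smallType z (b j) := by
      intro t ht
      obtain ⟨j, -, rfl⟩ := Finset.mem_image.1 ht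
      rw [Finset.mem_union]
      rcases lt_or_ge (smallType z (b j)).card k with hlt | hge
      · exact Or.inl (Finset.mem_filter.2 ⟨Finset.mem_powerset.2 (smallType_subset z _), hlt⟩)
      · exact Or.inr (Finset.mem_image_of_mem _ (Finset.mem_filter.2 ⟨Finset.mem_univ _, hge⟩))
    refine (Finset.card_le_card hsub).trans ((Finset.card_union_le _ _).trans ?_)
    exact add_le_add (card_types_le (by omega)) (Finset.card_image_le.trans (hbad b hb))
  have hcount : ((Finset.univ.filter fun σ : Equiv.Perm (Fin h) =>
        ∀ i, i = i₀ ∨ Nat.Coprime (a i) (b (σ i))).card : ℝ) ≤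
      (Finset.univ.filter fun σ : Equiv.Perm (Fin h) =>
        ∀ i, i = i₀ ∨ Disjoint (smallType z (a i)) (smallType z (b (σ i)))).card := by
    refine Nat.cast_le.2 (Finset.card_le_card fun σ hσ => ?_)
    simp only [Finset.mem_filter, Finset.mem_univ, true_and] at hσ ⊢
    refine fun i => (hσ i).imp_right fun hc => ?_
    rw [Finset.disjoint_left]
    intro q hq hq'
    have hqp := mem_oddPrimes.1 (Finset.mem_filter.1 hq).1
    exact Nat.not_coprime_of_dvd_of_dvd (by omega) (Finset.mem_filter.1 hq).2
      (Finset.mem_filter.1 hq').2 hc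
  set F : Fin h → ℝ := fun i => ∑ j with i = i₀ ∨ Disjoint (smallType z (a i)) (smallType z (b j)),
    g (smallType z (b j)) with hF
  have hF0 : ∀ i, 0 ≤ F i := fun i => Finset.sum_nonneg fun j _ => (hg0 _).le
  have hgood : ∀ i, i ≠ i₀ → (smallType z (a i)).card < k → F i * g (smallType z (a i)) ≤ w := by
    intro i hi hik
    have h1 := (abs_le.1 (hb.abs_sum_disjoint_sub_le hz (smallType_subset z (a i)))).2
    have h2 := hg1 (smallType z (a i))
    have h3 := hgz (a i)
    have h4 : F i = ∑ j with Disjoint (smallType z (a i)) (smallType z (b j)),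
        primeWeight (smallType z (b j)) := by
      simp only [hF, hi, false_or]
      exact Finset.sum_congr rfl fun j _ => hgs _
    rw [← h4, ← hgs] at h1
    have h5 : (2 : ℝ) ^ (smallType z (a i)).card ≤ 2 ^ k := pow_le_pow_right₀ (by norm_num) hik.le
    have h6 : F i ≤ h * (oddConst z / g (smallType z (a i))) + 2 ^ k * z := by
      have : (2 : ℝ) ^ (smallType z (a i)).card * z ≤ 2 ^ k * z := by gcongr
      linarith
    calc _ ≤ (h * (oddConst z / g (smallType z (a i))) + 2 ^ k * z) * g (smallType z (a i)) := by
          gcongr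
      _ = h * oddConst z + 2 ^ k * z * g (smallType z (a i)) := by
          have := (hg0 (smallType z (a i))).ne'
          field_simp
      _ ≤ h * oddConst z + 2 ^ k * z * z := by gcongr
      _ = w := by rw [hw, he₀]; ring
  have hall : ∀ i, F i * g (smallType z (a i)) ≤ w * (z : ℝ) ^ 2 := by
    intro i
    have h1 : F i ≤ h * z := by
      calc F i ≤ ∑ j, g (smallType z (b j)) :=
            Finset.sum_le_sum_of_subset_of_nonneg (Finset.filter_subset _ _) fun j _ _ => (hg0 _).le
        _ ≤ ∑ _j : Fin h, (z : ℝ) := Finset.sum_le_sum fun j _ => hgz _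
        _ = _ := by simp
    calc _ ≤ ((h : ℝ) * z) * z := mul_le_mul h1 (hgz _) (hg0 _).le (by positivity)
      _ = h * (z : ℝ) ^ 2 := by ring
      _ ≤ _ := by gcongr
  have hprod : (∏ i, F i) * ∏ i, g (smallType z (a i)) ≤ w ^ h * ((z : ℝ) ^ 2) ^ (E + 1) := by
    rw [← Finset.prod_mul_distrib]
    set X := (Finset.univ.filter fun i => i = i₀ ∨ k ≤ (smallType z (a i)).card) with hX
    have hXc : X.card ≤ E + 1 := by
      rw [hX, Finset.filter_or, add_comm]
      refine (Finset.card_union_le _ _).trans (add_le_add ?_ (hbad a ha))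
      rw [Finset.filter_eq' Finset.univ i₀]; simp
    calc _ ≤ ∏ i, w * (if i ∈ X then (z : ℝ) ^ 2 else 1) := by
          refine Finset.prod_le_prod (fun i _ => mul_nonneg (hF0 i) (hg0 _).le) fun i _ => ?_
          split_ifs with hi
          · exact hall i
          · rw [mul_one]
            simp only [hX, Finset.mem_filter, Finset.mem_univ, true_and, not_or, not_le] at hi
            exact hgood i hi.1 hi.2
      _ = w ^ h * ((z : ℝ) ^ 2) ^ X.card := by
          rw [Finset.prod_mul_distrib, Finset.prod_ite_mem, Finset.univ_inter]
          simp
      _ ≤ _ := by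
          have : (1 : ℝ) ≤ (z : ℝ) ^ 2 := one_le_pow₀ (by linarith)
          have := pow_le_pow_right₀ this hXc
          gcongr
  have hwr : ∀ l : Fin h → ℕ, EquiLabels h l →
      weightRoot z ^ h ≤ (∏ j, g (smallType z (l j))) * z := fun l hl => by
    simp_rw [hgs]; exact hl.le_prod_primeWeight hz
  have hwr0 : 0 ≤ weightRoot z ^ h := by
    rw [weightRoot_pow_eq]
    exact Finset.prod_nonneg fun p hp => rpow_nonneg
      (zero_le_one.trans (one_le_weight_factor (mem_oddPrimes.1 hp).1)) _
  have hpos : ∀ l : Fin h → ℕ, 0 ≤ ∏ j, g (smallType z (l j)) := fun l =>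
    Finset.prod_nonneg fun j _ => (hg0 _).le
  have hbase : 1 ≤ exp 1 * h := by nlinarith [exp_one_gt_d9]
  set N : ℝ := ((Finset.univ.filter fun σ : Equiv.Perm (Fin h) =>
        ∀ i, i = i₀ ∨ Disjoint (smallType z (a i)) (smallType z (b (σ i)))).card : ℝ) with hN
  have hN0 : 0 ≤ N := by positivity
  have hmain' : N * ∏ j, g (smallType z (b j)) ≤
      (exp 1 * h) ^ (z ^ k + E) * exp (-h) * ∏ i, F i := by
    refine le_trans (by convert hmain) (le_trans (mul_le_mul_of_nonneg_right
      (mul_le_mul_of_nonneg_right (pow_le_pow_right₀ hbase htypes) (exp_pos _).le)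
      (Finset.prod_nonneg fun i _ => hF0 i)) (le_of_eq ?_))
    rfl
  calc _ ≤ N * (((∏ j, g (smallType z (a j))) * z) * ((∏ j, g (smallType z (b j))) * z)) :=
        mul_le_mul hcount (mul_le_mul (hwr a ha) (hwr b hb) hwr0
          (mul_nonneg (hpos a) (by positivity))) (mul_nonneg hwr0 hwr0) hN0
    _ = (N * ∏ j, g (smallType z (b j))) * (∏ j, g (smallType z (a j))) * (z : ℝ) ^ 2 := by ring
    _ ≤ ((exp 1 * h) ^ (z ^ k + E) * exp (-h) * ∏ i, F i) * (∏ j, g (smallType z (a j))) *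
        (z : ℝ) ^ 2 := by
        have := hpos a
        gcongr
    _ = (exp 1 * h) ^ (z ^ k + E) * exp (-h) * ((∏ i, F i) * (∏ j, g (smallType z (a j)))) *
        (z : ℝ) ^ 2 := by ring
    _ ≤ (exp 1 * h) ^ (z ^ k + E) * exp (-h) * (w ^ h * ((z : ℝ) ^ 2) ^ (E + 1)) *
        (z : ℝ) ^ 2 := by gcongr
    _ = _ := by rw [← pow_mul]; ring

theorem abs_count_modEq_sub_le (h d v : ℕ) (hd : 0 < d) :
    |((Nat.count (· ≡ v [MOD d]) h : ℕ) : ℝ) - h / d| ≤ 1 := by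
  rw [Nat.count_modEq_card h hd v]
  have h1 := Nat.div_add_mod h d
  have h2 := Nat.mod_lt h hd
  have hdR : (0 : ℝ) < d := by exact_mod_cast hd
  have h3 : (h : ℝ) / d = (h / d : ℕ) + ((h % d : ℕ) : ℝ) / d := by
    nth_rewrite 1 [← h1]
    push_cast
    field_simp
  have h4 : ((h % d : ℕ) : ℝ) / d ≤ 1 := by
    rw [div_le_one hdR]; exact_mod_cast h2.le
  have h5 : 0 ≤ ((h % d : ℕ) : ℝ) / d := by positivity
  rw [h3, abs_le]
  push_cast
  split_ifs <;> constructor <;> linarith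

theorem card_fin_filter_eq_count (h : ℕ) (p : ℕ → Prop) [DecidablePred p] :
    (Finset.univ.filter fun i : Fin h => p i).card = Nat.count p h := by
  rw [Nat.count_eq_card_filter_range]
  refine Finset.card_bij (fun i _ => i.1) (fun i hi => ?_) (fun i _ j _ hij => Fin.ext hij)
    fun b hb => ?_
  · exact Finset.mem_filter.2 ⟨Finset.mem_range.2 i.2, (Finset.mem_filter.1 hi).2⟩
  · have := Finset.mem_filter.1 hb
    exact ⟨⟨b, Finset.mem_range.1 this.1⟩, by simpa using this.2, rfl⟩

theorem equiLabels_of_count {h : ℕ} {l : Fin h → ℕ} (hinj : Function.Injective l)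
    (hpos : ∀ j, 1 ≤ l j) (hle : ∀ j, l j ≤ 2 * h + 1)
    (hcount : ∀ d, Odd d → ∃ v, ∀ j : Fin h, d ∣ l j ↔ (j : ℕ) ≡ v [MOD d]) : EquiLabels h l := by
  have key : ∀ d, Odd d → |((Finset.univ.filter fun j => d ∣ l j).card : ℝ) - h / d| ≤ 1 := by
    intro d hd
    obtain ⟨v, hv⟩ := hcount d hd
    simp_rw [hv]
    rw [card_fin_filter_eq_count h (· ≡ v [MOD d])]
    exact abs_count_modEq_sub_le h d v hd.pos
  refine ⟨hinj, hpos, hle, key, fun d hd => ?_⟩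
  have h1 := (abs_le.1 (key d hd)).2
  have hd0 : (0 : ℝ) < d := by exact_mod_cast hd.pos
  rcases (Finset.univ.filter fun j => d ∣ l j).eq_empty_or_nonempty with h0 | ⟨j, hj⟩
  · rw [h0]; simp; positivity
  · have hj' := Nat.le_of_dvd (hpos j) (Finset.mem_filter.1 hj).2
    have hj2 := hle j
    have hh : 1 ≤ h := by have := j.2; omega
    rcases Nat.lt_or_ge (2 * h) d with hdh | hdh
    · have hd2 : d = 2 * h + 1 := by omega
      have hc : (Finset.univ.filter fun j => d ∣ l j).card ≤ 1 := by
        rw [Finset.card_le_one]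
        intro i hi j hj
        have e1 := Nat.le_of_dvd (hpos i) (Finset.mem_filter.1 hi).2
        have e2 := Nat.le_of_dvd (hpos j) (Finset.mem_filter.1 hj).2
        exact hinj (by have := hle i; have := hle j; omega)
      have hc' : ((Finset.univ.filter fun j => d ∣ l j).card : ℝ) ≤ 1 := by exact_mod_cast hc
      refine hc'.trans ?_
      rw [le_div_iff₀ hd0, one_mul]
      exact_mod_cast (show d ≤ 3 * h by omega)
    · have : 1 ≤ 2 * (h : ℝ) / d := by
        rw [le_div_iff₀ hd0, one_mul]; exact_mod_cast hdh
      have e : 3 * (h : ℝ) / d = h / d + 2 * h / d := by ring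
      linarith

theorem equiLabels_succ (h : ℕ) : EquiLabels h fun i => i.1 + 1 := by
  refine equiLabels_of_count (fun i j hij => ?_) (fun j => by omega) (fun j => ?_) fun d hd => ?_
  · simpa [Fin.val_inj] using hij
  · have := j.2; omega
  · refine ⟨d - 1, fun j => ?_⟩
    have hd0 := hd.pos
    rw [← Nat.modEq_zero_iff_dvd]
    constructor
    · intro hj
      refine Nat.ModEq.add_right_cancel' 1 ?_
      rw [Nat.sub_add_cancel hd0]
      exact hj.trans (Nat.modEq_zero_iff_dvd.2 dvd_rfl).symm
    · intro hj
      have := hj.add_right 1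
      rw [Nat.sub_add_cancel hd0] at this
      exact this.trans (Nat.modEq_zero_iff_dvd.2 dvd_rfl)

theorem equiLabels_odd (h e : ℕ) (he : e ≤ 1) : EquiLabels h fun j => 2 * j.1 + 1 + 2 * e := by
  refine equiLabels_of_count (fun i j hij => ?_) (fun j => by omega) (fun j => ?_) fun d hd => ?_
  · exact Fin.ext (by lia)
  · have := j.2; omega
  · obtain ⟨m, hm⟩ := hd
    refine ⟨m + d - e, fun j => ?_⟩
    have e1 : 2 * (m + d - e) + 1 + 2 * e = 3 * d := by omega
    have e2 : 2 * (m + d - e) + 1 + 2 * e ≡ 0 [MOD d] := by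
      rw [e1]; exact Nat.modEq_zero_iff_dvd.2 (dvd_mul_left _ _)
    have hcop : Nat.gcd d 2 = 1 := by
      rw [Nat.gcd_comm]
      exact (Nat.coprime_two_left).2 ⟨m, hm⟩
    rw [← Nat.modEq_zero_iff_dvd]
    constructor
    · intro hj
      have := hj.trans e2.symm
      exact Nat.ModEq.cancel_left_of_coprime hcop
        (Nat.ModEq.add_right_cancel' 1 (Nat.ModEq.add_right_cancel' (2 * e) this))
    · intro hj
      exact (((hj.mul_left 2).add_right 1).add_right (2 * e)).trans e2

/-- The primes whose labels are kept in reserve. -/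
def reservedPrimes (z h : ℕ) : Finset ℕ :=
  (Finset.Icc 1 h).filter fun p => p.Prime ∧ z < p ∧ 2 * h + 1 < p * p

theorem le_card_reservedPrimes (z h : ℕ) :
    (h * log 2 - log (h + 1)) / log h - z - sqrt (2 * h + 1) ≤ ((reservedPrimes z h).card : ℝ) := by
  have h1 := Chebyshev.pi_ge h
  have hsub : Nat.primesBelow (h + 1) ⊆
      reservedPrimes z h ∪ (Finset.Icc 1 z ∪ Finset.Icc 1 (Nat.sqrt (2 * h + 1))) := by
    intro p hp
    have hp1 := Nat.lt_of_mem_primesBelow hp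
    have hp2 := Nat.prime_of_mem_primesBelow hp
    have hp3 := hp2.one_lt
    rw [Finset.mem_union, Finset.mem_union, Finset.mem_Icc, Finset.mem_Icc, Nat.le_sqrt,
      reservedPrimes, Finset.mem_filter, Finset.mem_Icc]
    by_cases h1 : z < p
    · by_cases h2 : 2 * h + 1 < p * p
      · exact Or.inl ⟨⟨by omega, by omega⟩, hp2, h1, h2⟩
      · exact Or.inr (Or.inr ⟨by omega, by omega⟩)
    · exact Or.inr (Or.inl ⟨by omega, by omega⟩)
  have h2 := (Finset.card_le_card hsub).trans ((Finset.card_union_le _ _).trans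
    (Nat.add_le_add_left (Finset.card_union_le _ _) _))
  rw [Nat.primesBelow_card_eq_primeCounting', Nat.card_Icc, Nat.card_Icc] at h2
  have h3 : (Nat.primeCounting h : ℝ) ≤ (reservedPrimes z h).card + (z + Nat.sqrt (2 * h + 1)) := by
    exact_mod_cast h2
  have h4 : (Nat.sqrt (2 * h + 1) : ℝ) ≤ sqrt (2 * h + 1) := by
    have := Real.nat_sqrt_le_real_sqrt (a := 2 * h + 1)
    push_cast at this
    exact this
  linarith

theorem reservedPrimes_spec {z h e p : ℕ} (hz : 2 ≤ z) (he : e ≤ 1) (hp : p ∈ reservedPrimes z h) :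
    p.Prime ∧ z < p ∧ 2 * h + 1 < p * p ∧ (∃ i : Fin h, i.1 + 1 = p) ∧
      ∃ j : Fin h, 2 * j.1 + 1 + 2 * e = p := by
  obtain ⟨h1, h2, h3, h4⟩ := Finset.mem_filter.1 hp
  rw [Finset.mem_Icc] at h1
  refine ⟨h2, h3, h4, ⟨⟨p - 1, by omega⟩, by lia⟩, ?_⟩
  obtain ⟨m, hm⟩ := h2.odd_of_ne_two (by omega)
  exact ⟨⟨m - e, by omega⟩, by lia⟩

theorem sum_inv_oddPrimes_le (L : ℕ) :
    ∑ p ∈ oddPrimes (2 ^ (L + 1)), 1 / (p : ℝ) ≤ 4 * (harmonic L : ℝ) := by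
  induction L with
  | zero =>
    rw [Finset.sum_eq_zero]
    · simp
    · intro p hp; have := mem_oddPrimes.1 hp; omega
  | succ L ih =>
    set X := (Finset.Icc 0 (2 ^ (L + 2))).filter fun p => p.Prime ∧ 2 ^ (L + 1) < p with hX
    have hsub : oddPrimes (2 ^ (L + 1 + 1)) ⊆ oddPrimes (2 ^ (L + 1)) ∪ X := by
      intro p hp
      have := mem_oddPrimes.1 hp
      rw [Finset.mem_union, mem_oddPrimes, hX, Finset.mem_filter, Finset.mem_Icc]
      rcases le_or_gt p (2 ^ (L + 1)) with hl | hl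
      · exact Or.inl ⟨this.1, hl, this.2.2⟩
      · exact Or.inr ⟨⟨by omega, this.2.1⟩, this.2.2, hl⟩
    have hXc : (X.card : ℝ) * ((L + 1) * log 2) ≤ 2 * log 2 * 2 ^ (L + 2) := by
      have h1 := Chebyshev.theta_le_log4_mul_x (x := 2 ^ (L + 2)) (by positivity)
      rw [Chebyshev.theta_eq_sum_Icc] at h1
      have h2 : ⌊(2 : ℝ) ^ (L + 2)⌋₊ = 2 ^ (L + 2) := by
        rw [show (2 : ℝ) ^ (L + 2) = ((2 ^ (L + 2) : ℕ) : ℝ) by push_cast; rfl, Nat.floor_natCast]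
      rw [h2, show (4 : ℝ) = 2 ^ 2 by norm_num, log_pow] at h1
      refine le_trans ?_ h1
      rw [← nsmul_eq_mul]
      refine (Finset.card_nsmul_le_sum X (fun p => log (p : ℝ)) _ fun p hp => ?_).trans
        (Finset.sum_le_sum_of_subset_of_nonneg (fun p hp => ?_) fun p hp _ => ?_)
      · have := (Finset.mem_filter.1 hp).2.2.le
        rw [show ((L : ℝ) + 1) * log 2 = log (2 ^ (L + 1)) by rw [log_pow]; push_cast; rfl]
        exact log_le_log (by positivity) (by exact_mod_cast this)
      · have := Finset.mem_filter.1 hp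
        exact Finset.mem_filter.2 ⟨this.1, this.2.1⟩
      · exact log_natCast_nonneg _
    have hlog : 0 < log 2 := log_pos (by norm_num)
    have hXs : ∑ p ∈ X, 1 / (p : ℝ) ≤ 4 * ((L : ℝ) + 1)⁻¹ := by
      calc _ ≤ ∑ p ∈ X, 1 / (2 : ℝ) ^ (L + 1) := by
            refine Finset.sum_le_sum fun p hp => ?_
            have := (Finset.mem_filter.1 hp).2.2.le
            have : (2 : ℝ) ^ (L + 1) ≤ p := by exact_mod_cast this
            gcongr
        _ = X.card / (2 : ℝ) ^ (L + 1) := by rw [Finset.sum_const, nsmul_eq_mul]; ring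
        _ ≤ _ := by
            rw [div_le_iff₀ (by positivity), ← div_eq_mul_inv, div_mul_eq_mul_div,
              le_div_iff₀ (by positivity)]
            refine le_of_mul_le_mul_right ?_ hlog
            rw [pow_succ] at hXc
            linarith
    calc _ ≤ ∑ p ∈ oddPrimes (2 ^ (L + 1)) ∪ X, 1 / (p : ℝ) :=
          Finset.sum_le_sum_of_subset_of_nonneg hsub fun _ _ _ => by positivity
      _ ≤ _ := by
          rw [← Finset.sum_union_inter]
          exact le_add_of_nonneg_right (Finset.sum_nonneg fun _ _ => by positivity)
      _ ≤ _ := add_le_add ih hXs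
      _ = _ := by rw [harmonic_succ]; push_cast; ring

theorem sum_inv_oddPrimes_le_log (L : ℕ) :
    ∑ p ∈ oddPrimes (2 ^ (L + 1)), 1 / (p : ℝ) ≤ 4 * (1 + log L) := by
  have := harmonic_le_one_add_log L
  have := sum_inv_oddPrimes_le L
  linarith

/-- The local factor of `coprimeConst`. -/
noncomputable def coprimeFactor (n : ℕ) : ℝ :=
  ((n : ℝ) - 1) ^ (2 * (1 - 1 / (n : ℝ))) / ((n : ℝ) * ((n : ℝ) - 2) ^ (1 - 2 / (n : ℝ)))

theorem coprimeFactor_two : coprimeFactor 2 = 1 / 2 := by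
  norm_num [coprimeFactor]

theorem coprimeFactor_eq {n : ℕ} (hn : 3 ≤ n) :
    coprimeFactor n = (1 + 1 / ((n : ℝ) * (n - 2))) * (((n : ℝ) - 1) / (n - 2)) ^ (-(2 / (n : ℝ))) := by
  have h3 : (3 : ℝ) ≤ n := by exact_mod_cast hn
  have h1 : (0 : ℝ) < n - 1 := by linarith
  have h2 : (0 : ℝ) < n - 2 := by linarith
  have h0 : (0 : ℝ) < n := by linarith
  rw [coprimeFactor, div_rpow h1.le h2.le, show 2 * (1 - 1 / (n : ℝ)) = 2 + -(2 / (n : ℝ)) by ring,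
    rpow_add h1, show 1 - 2 / (n : ℝ) = 1 + -(2 / (n : ℝ)) by ring, rpow_add h2, rpow_one, rpow_two]
  have := rpow_pos_of_pos h2 (-(2 / (n : ℝ)))
  field_simp
  ring

theorem coprimeFactor_pos {n : ℕ} (hn : 2 ≤ n) : 0 < coprimeFactor n := by
  rcases hn.eq_or_lt with rfl | hn
  · rw [coprimeFactor_two]; norm_num
  · rw [coprimeFactor_eq hn]
    have h3 : (3 : ℝ) ≤ n := by exact_mod_cast hn
    have h1 : (0 : ℝ) < n - 1 := by linarith
    have h2 : (0 : ℝ) < n - 2 := by linarith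
    have h0 : (0 : ℝ) < n := by linarith
    positivity

theorem log_coprimeFactor_eq {n : ℕ} (hn : 3 ≤ n) : log (coprimeFactor n) =
    log (1 + 1 / ((n : ℝ) * (n - 2))) - 2 / n * log (((n : ℝ) - 1) / (n - 2)) := by
  have h3 : (3 : ℝ) ≤ n := by exact_mod_cast hn
  have h1 : (0 : ℝ) < n - 1 := by linarith
  have h2 : (0 : ℝ) < n - 2 := by linarith
  have h0 : (0 : ℝ) < n := by linarith
  rw [coprimeFactor_eq hn, log_mul (by positivity) (by positivity), log_rpow (by positivity)]
  ring

theorem log_coprimeFactor_nonpos {n : ℕ} (hn : 2 ≤ n) : log (coprimeFactor n) ≤ 0 := by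
  rcases hn.eq_or_lt with rfl | hn
  · rw [coprimeFactor_two]; exact log_nonpos (by norm_num) (by norm_num)
  · rw [log_coprimeFactor_eq hn]
    have h3 : (3 : ℝ) ≤ n := by exact_mod_cast hn
    have h1 : (0 : ℝ) < n - 1 := by linarith
    have h2 : (0 : ℝ) < n - 2 := by linarith
    have h0 : (0 : ℝ) < n := by linarith
    have e1 := log_le_sub_one_of_pos (show 0 < 1 + 1 / ((n : ℝ) * (n - 2)) by positivity)
    have e2 := one_sub_inv_le_log_of_pos (show 0 < ((n : ℝ) - 1) / (n - 2) by positivity)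
    have e3 : 2 / (n : ℝ) * (1 - (((n : ℝ) - 1) / (n - 2))⁻¹) ≤
      2 / n * log (((n : ℝ) - 1) / (n - 2)) := by gcongr
    have e4 : 1 / ((n : ℝ) * (n - 2)) ≤ 2 / (n : ℝ) * (1 - (((n : ℝ) - 1) / (n - 2))⁻¹) := by
      rw [inv_div, one_sub_div h1.ne', div_mul_div_comm, div_le_div_iff₀ (by positivity) (by positivity)]
      have : 0 < (n : ℝ) * (n - 2) := by positivity
      nlinarith
    linarith

theorem neg_log_coprimeFactor_le {n : ℕ} (hn : 3 ≤ n) :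
    -log (coprimeFactor n) ≤ 1 / ((n : ℝ) - 2) - 1 / n := by
  rw [log_coprimeFactor_eq hn]
  have h3 : (3 : ℝ) ≤ n := by exact_mod_cast hn
  have h1 : (0 : ℝ) < n - 1 := by linarith
  have h2 : (0 : ℝ) < n - 2 := by linarith
  have h0 : (0 : ℝ) < n := by linarith
  have e1 : 0 ≤ log (1 + 1 / ((n : ℝ) * (n - 2))) := log_nonneg (by
    have : 0 ≤ 1 / ((n : ℝ) * (n - 2)) := by positivity
    linarith)
  have e2 := log_le_sub_one_of_pos (show 0 < ((n : ℝ) - 1) / (n - 2) by positivity)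
  have e3 : 2 / n * log (((n : ℝ) - 1) / (n - 2)) ≤ 2 / n * (((n : ℝ) - 1) / (n - 2) - 1) := by
    gcongr
  have e4 : 2 / (n : ℝ) * (((n : ℝ) - 1) / (n - 2) - 1) = 1 / ((n : ℝ) - 2) - 1 / n := by
    field_simp; ring
  linarith

/-- The logarithms of the inverse local factors, extended by zero. -/
noncomputable def logDefect (n : ℕ) : ℝ :=
  if n.Prime then -log (coprimeFactor n) else 0

theorem logDefect_nonneg (n : ℕ) : 0 ≤ logDefect n := by
  unfold logDefect
  split_ifs with h
  · have := log_coprimeFactor_nonpos h.two_le; linarith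
  · exact le_rfl

theorem sum_logDefect_le {z : ℕ} (hz : 2 ≤ z) (m : ℕ) :
    ∑ n ∈ Finset.range (z + 1 + m), logDefect n ≤ ∑ n ∈ Finset.range (z + 1), logDefect n +
      (1 / ((z : ℝ) - 1) + 1 / z - 1 / (z + m - 1) - 1 / (z + m)) := by
  have hzR : (2 : ℝ) ≤ z := by exact_mod_cast hz
  induction m with
  | zero => simp
  | succ m ih =>
    rw [← add_assoc, Finset.sum_range_succ]
    have h1 : logDefect (z + 1 + m) ≤ 1 / (((z + 1 + m : ℕ) : ℝ) - 2) - 1 / ((z + 1 + m : ℕ) : ℝ) := by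
      unfold logDefect
      split_ifs with h
      · exact neg_log_coprimeFactor_le (by omega)
      · push_cast
        rw [sub_nonneg]
        exact one_div_le_one_div_of_le (by have : (0 : ℝ) ≤ m := by positivity
                                           linarith) (by linarith)
    push_cast at h1 ⊢
    rw [show (z : ℝ) + 1 + m - 2 = z + m - 1 by ring, show (z : ℝ) + 1 + m = z + (m + 1) by ring] at h1
    rw [show (z : ℝ) + (m + 1) - 1 = z + m by ring]
    linarith

theorem sum_logDefect_le' {z : ℕ} (hz : 2 ≤ z) (N : ℕ) :
    ∑ n ∈ Finset.range N, logDefect n ≤ ∑ n ∈ Finset.range (z + 1), logDefect n +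
      2 / ((z : ℝ) - 1) := by
  have hzR : (2 : ℝ) ≤ z := by exact_mod_cast hz
  have h1 : ∑ n ∈ Finset.range N, logDefect n ≤ ∑ n ∈ Finset.range (z + 1 + N), logDefect n :=
    Finset.sum_le_sum_of_subset_of_nonneg (Finset.range_subset_range.2 (by omega))
      fun n _ _ => logDefect_nonneg n
  refine h1.trans ((sum_logDefect_le hz N).trans ?_)
  have hN : (0 : ℝ) ≤ N := by positivity
  have e1 : 0 ≤ 1 / ((z : ℝ) + N - 1) := one_div_nonneg.2 (by linarith)
  have e2 : 0 ≤ 1 / ((z : ℝ) + N) := by positivity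
  have e3 : 1 / (z : ℝ) ≤ 1 / (z - 1) := one_div_le_one_div_of_le (by linarith) (by linarith)
  have e4 : 2 / ((z : ℝ) - 1) = 1 / (z - 1) + 1 / (z - 1) := by ring
  linarith

theorem summable_logDefect : Summable logDefect :=
  summable_of_sum_range_le logDefect_nonneg (sum_logDefect_le' le_rfl)

theorem coprimeConst_eq : coprimeConst = exp (-∑' n, logDefect n) := by
  have h1 : HasSum (fun p : Nat.Primes => logDefect p) (∑' n, logDefect n) := by
    have := summable_logDefect.hasSum
    refine (hasSum_subtype_iff_of_support_subset (s := {n | n.Prime}) (f := logDefect) ?_).2 this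
    intro n hn
    by_contra h
    exact hn (if_neg h)
  have h2 := h1.neg.rexp
  rw [← h2.tprod_eq]
  unfold coprimeConst
  refine tprod_congr fun p => ?_
  simp only [Function.comp, logDefect, p.2, if_true, neg_neg]
  rw [exp_log (coprimeFactor_pos p.2.two_le), coprimeFactor]

theorem coprimeConst_pos : 0 < coprimeConst := by
  rw [coprimeConst_eq]; exact exp_pos _

theorem coprimeConst_le_one : coprimeConst ≤ 1 := by
  rw [coprimeConst_eq, exp_le_one_iff]
  have : 0 ≤ ∑' n, logDefect n := tsum_nonneg logDefect_nonneg
  linarith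

theorem weightRoot_pos (z : ℕ) : 0 < weightRoot z :=
  Finset.prod_pos fun _ hp => rpow_pos_of_pos
    (zero_lt_one.trans_le (one_le_weight_factor (mem_oddPrimes.1 hp).1)) _

theorem exp_neg_sum_logDefect {z : ℕ} (hz : 2 ≤ z) :
    exp (-∑ n ∈ Finset.range (z + 1), logDefect n) * (2 * weightRoot z ^ 2) = oddConst z := by
  have h1 : exp (-∑ n ∈ Finset.range (z + 1), logDefect n) =
      ∏ n ∈ (Finset.range (z + 1)).filter Nat.Prime, coprimeFactor n := by
    rw [← Finset.sum_neg_distrib, exp_sum, Finset.prod_filter]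
    refine Finset.prod_congr rfl fun n _ => ?_
    unfold logDefect
    split_ifs with h
    · rw [neg_neg, exp_log (coprimeFactor_pos h.two_le)]
    · simp
  have h2 : (Finset.range (z + 1)).filter Nat.Prime = insert 2 (oddPrimes z) := by
    ext p
    rw [Finset.mem_insert, mem_oddPrimes, Finset.mem_filter, Finset.mem_range]
    constructor
    · rintro ⟨hp, hpp⟩
      have := hpp.two_le
      by_cases h : p = 2
      · exact Or.inl h
      · exact Or.inr ⟨by omega, by omega, hpp⟩
    · rintro (rfl | ⟨h1, h2, h3⟩)
      · exact ⟨by omega, Nat.prime_two⟩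
      · exact ⟨by omega, h3⟩
  rw [h1, h2, Finset.prod_insert (by rw [mem_oddPrimes]; omega), coprimeFactor_two]
  have h3 : (∏ p ∈ oddPrimes z, coprimeFactor p) * weightRoot z ^ 2 = oddConst z := by
    unfold weightRoot oddConst
    rw [← Finset.prod_pow, ← Finset.prod_mul_distrib]
    refine Finset.prod_congr rfl fun p hp => ?_
    have h3 := (mem_oddPrimes.1 hp).1
    have h4 := one_le_weight_factor h3
    rw [coprimeFactor_eq h3, mul_assoc, ← rpow_mul_natCast (by linarith), ← rpow_add (by linarith)]
    norm_num
    rw [show -(2 / (p : ℝ)) + (p : ℝ)⁻¹ * 2 = 0 by ring, rpow_zero, mul_one]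
  linarith

theorem coprimeConst_mul_le {z : ℕ} (hz : 2 ≤ z) :
    2 * coprimeConst * weightRoot z ^ 2 ≤ oddConst z := by
  rw [← exp_neg_sum_logDefect hz, coprimeConst_eq]
  have h1 := summable_logDefect.sum_le_tsum (Finset.range (z + 1)) fun n _ => logDefect_nonneg n
  have h2 : exp (-∑' n, logDefect n) ≤ exp (-∑ n ∈ Finset.range (z + 1), logDefect n) :=
    exp_le_exp.2 (by linarith)
  have := mul_le_mul_of_nonneg_right h2 (show 0 ≤ 2 * weightRoot z ^ 2 by positivity)
  linarith

theorem oddConst_le_coprimeConst_mul {z : ℕ} (hz : 2 ≤ z) :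
    oddConst z ≤ 2 * coprimeConst * exp (2 / ((z : ℝ) - 1)) * weightRoot z ^ 2 := by
  rw [← exp_neg_sum_logDefect hz, coprimeConst_eq]
  have h1 := summable_logDefect.tsum_le_of_sum_range_le (sum_logDefect_le' hz)
  have h2 : exp (-∑ n ∈ Finset.range (z + 1), logDefect n) ≤
      exp (-∑' n, logDefect n) * exp (2 / ((z : ℝ) - 1)) := by
    rw [← exp_add]
    exact exp_le_exp.2 (by linarith)
  have := mul_le_mul_of_nonneg_right h2 (show 0 ≤ 2 * weightRoot z ^ 2 by positivity)
  linarith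

theorem exists_perm_half {n : ℕ} (σ : Equiv.Perm (Fin n))
    (hσ : ∀ m : Fin n, Nat.gcd (m.1 + 1) ((σ m).1 + 1) = 1) :
    ∃ f : Equiv.Perm (Fin ((n + 1) / 2)), ∀ (i : Fin ((n + 1) / 2)) (h : 2 * i.1 + 1 < n),
      (σ ⟨2 * i.1 + 1, h⟩).1 = 2 * (f i).1 := by
  classical
  have heven : ∀ (i : ℕ) (h : 2 * i + 1 < n), Even (σ ⟨2 * i + 1, h⟩).1 := by
    intro i h
    by_contra hodd
    rw [Nat.not_even_iff_odd] at hodd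
    have h1 := hσ ⟨2 * i + 1, h⟩
    have h2 : 2 ∣ Nat.gcd (2 * i + 1 + 1) ((σ ⟨2 * i + 1, h⟩).1 + 1) :=
      Nat.dvd_gcd (by omega) (even_iff_two_dvd.1 hodd.add_one)
    rw [h1] at h2
    omega
  let g : Fin ((n + 1) / 2) → Fin ((n + 1) / 2) := fun i =>
    if h : 2 * i.1 + 1 < n then ⟨(σ ⟨2 * i.1 + 1, h⟩).1 / 2, by
      have := (σ ⟨2 * i.1 + 1, h⟩).2; omega⟩ else i
  have hg : ∀ (i : Fin ((n + 1) / 2)) (h : 2 * i.1 + 1 < n),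
      2 * (g i).1 = (σ ⟨2 * i.1 + 1, h⟩).1 := by
    intro i h
    simp only [g, h, dite_true]
    exact Nat.two_mul_div_two_of_even (heven i h)
  obtain ⟨f, hf⟩ := Set.MapsTo.exists_equiv_extend_of_card_eq (t := Finset.univ) (by simp)
    (s := {i : Fin ((n + 1) / 2) | 2 * i.1 + 1 < n}) (f := g) (fun i _ => by simp) (by
      intro i hi j hj hij
      have h1 := hg i hi
      have h2 := hg j hj
      rw [hij, h2] at h1
      have h3 := σ.injective (Fin.ext h1)
      rw [Fin.mk.injEq] at h3
      exact Fin.ext (by omega))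
  refine ⟨f.trans (Equiv.subtypeUnivEquiv fun _ => Finset.mem_univ _), fun i h => ?_⟩
  rw [← hg i h]
  simp only [Equiv.trans_apply, Equiv.subtypeUnivEquiv_apply]
  rw [hf i h]

theorem coprimePermCount_le_sq {n : ℕ} (i₀ : Fin ((n + 1) / 2)) (hi₀ : i₀.1 + 1 = (n + 1) / 2) :
    coprimePermCount n ≤ (Finset.univ.filter fun f : Equiv.Perm (Fin ((n + 1) / 2)) =>
      ∀ i, i = i₀ ∨ Nat.Coprime (i.1 + 1) (2 * (f i).1 + 1 + 2 * 0)).card ^ 2 := by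
  classical
  set W := (Finset.univ.filter fun f : Equiv.Perm (Fin ((n + 1) / 2)) =>
      ∀ i, i = i₀ ∨ Nat.Coprime (i.1 + 1) (2 * (f i).1 + 1 + 2 * 0)) with hW
  let C := {σ : Equiv.Perm (Fin n) // ∀ m : Fin n, Nat.gcd (m.1 + 1) ((σ m).1 + 1) = 1}
  let inv : C → C := fun σ => ⟨σ.1⁻¹, fun m => by
    have := σ.2 (σ.1⁻¹ m)
    rw [Nat.gcd_comm]; simpa using this⟩
  choose F hF using fun σ : C => exists_perm_half σ.1 σ.2
  have hFW : ∀ σ, F σ ∈ W := by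
    intro σ
    refine Finset.mem_filter.2 ⟨Finset.mem_univ _, fun i => ?_⟩
    by_cases hi : i = i₀
    · exact Or.inl hi
    · have hi' : i.1 ≠ i₀.1 := fun h => hi (Fin.ext h)
      have hlt : 2 * i.1 + 1 < n := by have := i.2; omega
      have h1 := σ.2 ⟨2 * i.1 + 1, hlt⟩
      rw [hF σ i hlt] at h1
      refine Or.inr (Nat.Coprime.coprime_dvd_left (Dvd.intro_left 2 ?_) h1)
      simp only; ring
  have hinj : Function.Injective fun σ : C => (F σ, F (inv σ)) := by
    intro σ τ hst
    rw [Prod.mk.injEq] at hst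
    have hodd : ∀ m : Fin n, Odd m.1 → σ.1 m = τ.1 m := by
      rintro ⟨m, hm⟩ ⟨i, hi⟩
      simp only at hi
      subst hi
      have h1 := hF σ ⟨i, by omega⟩ hm
      have h2 := hF τ ⟨i, by omega⟩ hm
      rw [hst.1, ← h2] at h1
      exact Fin.ext h1
    have hinvodd : ∀ m : Fin n, Odd m.1 → σ.1⁻¹ m = τ.1⁻¹ m := by
      rintro ⟨m, hm⟩ ⟨i, hi⟩
      simp only at hi
      subst hi
      have h1 := hF (inv σ) ⟨i, by omega⟩ hm
      have h2 := hF (inv τ) ⟨i, by omega⟩ hm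
      rw [hst.2, ← h2] at h1
      exact Fin.ext h1
    have hD : ∀ m, σ.1 m ≠ τ.1 m → (σ.1 m).1 = 2 * (F σ i₀).1 := by
      intro m hm
      have h1 : ¬ Odd m.1 := fun h => hm (hodd m h)
      have h2 : ¬ Odd (σ.1 m).1 := fun h => hm (by
        have := hinvodd _ h
        rw [Equiv.Perm.eq_inv_iff_eq] at this
        simpa using this.symm)
      rw [Nat.not_odd_iff_even] at h1 h2
      obtain ⟨a, ha⟩ := h1
      obtain ⟨j, hj⟩ := h2
      have hjn : j < (n + 1) / 2 := by have := (σ.1 m).2; omega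
      obtain ⟨i, hi⟩ := (F σ).surjective ⟨j, hjn⟩
      by_cases hlt : 2 * i.1 + 1 < n
      · have h3 := hF σ i hlt
        rw [hi] at h3
        have h4 := σ.1.injective (Fin.ext (show (σ.1 ⟨2 * i.1 + 1, hlt⟩).1 = (σ.1 m).1 by
          rw [h3, hj]; ring))
        have h5 := congrArg Fin.val h4
        simp only at h5
        omega
      · have h3 : i = i₀ := Fin.ext (by have := i.2; omega)
        rw [← h3, hi, hj]; ring
    refine Subtype.ext (Equiv.ext fun m => ?_)
    by_contra hm
    have hm2 : σ.1 (τ.1⁻¹ (σ.1 m)) ≠ τ.1 (τ.1⁻¹ (σ.1 m)) := by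
      intro h
      have h1 : σ.1 (τ.1⁻¹ (σ.1 m)) = σ.1 m := by simpa using h
      have h2 := σ.1.injective h1
      rw [Equiv.Perm.inv_eq_iff_eq] at h2
      exact hm h2
    have h1 := σ.1.injective (Fin.ext ((hD _ hm).trans (hD _ hm2).symm))
    rw [Equiv.Perm.eq_inv_iff_eq] at h1
    exact hm h1.symm
  have hcard : Nat.card C ≤ (W ×ˢ W).card := by
    rw [Nat.card_eq_fintype_card, ← Finset.card_univ]
    exact Finset.card_le_card_of_injOn (fun σ : C => (F σ, F (inv σ)))
      (fun σ _ => Finset.mem_product.2 ⟨hFW _, hFW _⟩) hinj.injOn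
  rw [Finset.card_product, ← sq] at hcard
  exact hcard

/-- Splitting `Fin n` into odd indices, even indices and possibly a leftover index. -/
noncomputable def finSplit (n : ℕ) : (Fin (n / 2) ⊕ Fin (n / 2)) ⊕ Fin (n % 2) ≃ Fin n :=
  Equiv.ofBijective
    (Sum.elim (Sum.elim (fun i => ⟨2 * i.1 + 1, by have := i.2; omega⟩)
      (fun j => ⟨2 * j.1 + 2 * (n % 2), by have := j.2; omega⟩))
      (fun k => ⟨0, by have := k.2; omega⟩)) (by
    rw [Fintype.bijective_iff_injective_and_card]
    constructor
    · have : n % 2 < 2 := Nat.mod_lt _ (by norm_num)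
      rintro ((i | i) | i) ((j | j) | j) hij <;>
        simp only [Sum.elim_inl, Sum.elim_inr, Fin.mk.injEq] at hij <;>
        simp only [Sum.inl.injEq, Sum.inr.injEq, reduceCtorEq] <;>
        first | omega | (have := i.2; have := j.2; omega)
    · simp only [Fintype.card_sum, Fintype.card_fin]; omega)

theorem finSplit_inr {n : ℕ} (k : Fin (n % 2)) : (finSplit n (Sum.inr k)).1 = 0 := rfl

theorem sq_le_coprimePermCount (n : ℕ) :
    (Finset.univ.filter fun f : Equiv.Perm (Fin (n / 2)) =>
      ∀ i, Nat.Coprime (i.1 + 1) (2 * (f i).1 + 1 + 2 * (n % 2))).card ^ 2 ≤ coprimePermCount n := by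
  classical
  set W := (Finset.univ.filter fun f : Equiv.Perm (Fin (n / 2)) =>
      ∀ i, Nat.Coprime (i.1 + 1) (2 * (f i).1 + 1 + 2 * (n % 2))) with hW
  let ψ : Equiv.Perm (Fin (n / 2)) → Equiv.Perm (Fin (n / 2)) →
      Equiv.Perm ((Fin (n / 2) ⊕ Fin (n / 2)) ⊕ Fin (n % 2)) := fun f f' =>
    Equiv.sumCongr ((Equiv.sumCongr f f'.symm).trans (Equiv.sumComm _ _)) (Equiv.refl _)
  have hcop : ∀ f ∈ W, ∀ i, Nat.gcd (2 * i.1 + 1 + 1) (2 * (f i).1 + 2 * (n % 2) + 1) = 1 := by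
    intro f hf i
    have h1 := (Finset.mem_filter.1 hf).2 i
    rw [show 2 * i.1 + 1 + 1 = 2 * (i.1 + 1) by ring,
      show 2 * (f i).1 + 2 * (n % 2) + 1 = 2 * (f i).1 + 1 + 2 * (n % 2) by ring]
    refine Nat.Coprime.mul_left ?_ h1
    rw [Nat.coprime_two_left]
    exact ⟨(f i).1 + n % 2, by ring⟩
  let Φ : W × W → {σ : Equiv.Perm (Fin n) // ∀ m : Fin n, Nat.gcd (m.1 + 1) ((σ m).1 + 1) = 1} :=
    fun p => ⟨((finSplit n).symm.trans (ψ p.1.1 p.2.1)).trans (finSplit n), by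
    intro m
    obtain ⟨x, rfl⟩ := (finSplit n).surjective m
    simp only [Equiv.trans_apply, Equiv.symm_apply_apply]
    rcases x with ((i | j) | k)
    · exact hcop _ p.1.2 i
    · have h1 := hcop _ p.2.2 (p.2.1.symm j)
      rw [Equiv.apply_symm_apply, Nat.gcd_comm] at h1
      exact h1
    · rw [finSplit_inr]; simp⟩
  have hinj : Function.Injective Φ := by
    rintro ⟨⟨f, hf⟩, ⟨f', hf'⟩⟩ ⟨⟨g, hg⟩, ⟨g', hg'⟩⟩ hfg
    have h0 : ∀ x, ψ f f' x = ψ g g' x := fun x => by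
      have := DFunLike.congr_fun (congrArg Subtype.val hfg) (finSplit n x)
      simpa [Φ] using this
    have h1 : f = g := Equiv.ext fun i => by
      simpa [ψ] using h0 (Sum.inl (Sum.inl i))
    have h2 : f'.symm = g'.symm := Equiv.ext fun i => by
      simpa [ψ] using h0 (Sum.inl (Sum.inr i))
    have h3 : f' = g' := by rw [← f'.symm_symm, h2, g'.symm_symm]
    subst h1 h3
    rfl
  have := Nat.card_le_card_of_injective Φ hinj
  rw [Nat.card_prod, Nat.card_eq_fintype_card, Fintype.card_coe, ← sq] at this
  exact this

theorem four_pow_mul_factorial_sq_le {n H : ℕ} (hn : 1 ≤ n) (hH : H = (n + 1) / 2) :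
    4 ^ H * H.factorial ^ 2 ≤ (n + 1) ^ 2 * n.factorial := by
  have h1 := Nat.four_pow_le_two_mul_self_mul_centralBinom H (by omega)
  have h2 := Nat.choose_mul_factorial_mul_factorial (show H ≤ 2 * H by omega)
  rw [← Nat.centralBinom_eq_two_mul_choose, show 2 * H - H = H by omega] at h2
  have h3 : (2 * H).factorial ≤ (n + 1) * n.factorial := by
    rw [← Nat.factorial_succ]; exact Nat.factorial_le (by omega)
  calc _ ≤ (2 * H * H.centralBinom) * H.factorial ^ 2 := Nat.mul_le_mul_right _ h1
    _ = 2 * H * (2 * H).factorial := by rw [← h2]; ring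
    _ ≤ (n + 1) * ((n + 1) * n.factorial) := Nat.mul_le_mul (by omega) h3
    _ = _ := by ring

theorem factorial_le_four_pow_mul {n h : ℕ} (hn : 1 ≤ n) (hh : h = n / 2) :
    n.factorial ≤ n * (4 ^ h * h.factorial ^ 2) := by
  have h1 := Nat.centralBinom_le_four_pow h
  have h2 := Nat.choose_mul_factorial_mul_factorial (show h ≤ 2 * h by omega)
  rw [← Nat.centralBinom_eq_two_mul_choose, show 2 * h - h = h by omega] at h2
  have h3 : n.factorial ≤ n * (2 * h).factorial := by
    rcases (show n = 2 * h ∨ n = 2 * h + 1 by omega) with h3 | h3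
    · rw [← h3]; exact Nat.le_mul_of_pos_left _ hn
    · rw [h3, Nat.factorial_succ]
  calc _ ≤ n * (2 * h).factorial := h3
    _ = n * (h.centralBinom * h.factorial ^ 2) := by rw [← h2]; ring
    _ ≤ _ := by gcongr

theorem coprimePermCount_le {n H z k E : ℕ} (hn : 1 ≤ n) (hH : H = (n + 1) / 2) (hz : 2 ≤ z)
    {y s : ℝ} (hy : 1 ≤ y) (hs : ∑ p ∈ oddPrimes z, 1 / (p : ℝ) ≤ s)
    (hE : 3 * H * exp (y * s) / y ^ k ≤ E) :
    (coprimePermCount n : ℝ) ≤ n.factorial * coprimeConst ^ n *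
      ((n + 1) * ((exp 1 * H) ^ (z ^ k + E) * (z : ℝ) ^ (2 * E + 4) *
        exp (2 * H / ((z : ℝ) - 1) + 2 ^ k * (z : ℝ) ^ 2))) ^ 2 := by
  subst hH
  set H := (n + 1) / 2 with hH
  have hH1 : 1 ≤ H := by omega
  have hHR : (1 : ℝ) ≤ H := by exact_mod_cast hH1
  let i₀ : Fin H := ⟨H - 1, by omega⟩
  have h1 := coprimePermCount_le_sq i₀ (by simp only [i₀]; omega)
  have h2 := card_coprime_matching_mul_le (equiLabels_succ H) (equiLabels_odd H 0 (by norm_num)) i₀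
    hz hy hs hE
  set W := (Finset.univ.filter fun f : Equiv.Perm (Fin ((n + 1) / 2)) =>
      ∀ i, i = i₀ ∨ Nat.Coprime (i.1 + 1) (2 * (f i).1 + 1 + 2 * 0)).card with hW
  change (W : ℝ) * _ ≤ _ at h2
  set c := coprimeConst with hc
  have hc0 : 0 < c := coprimeConst_pos
  have hc1 : c ≤ 1 := coprimeConst_le_one
  set e₀ : ℝ := 2 ^ k * (z : ℝ) ^ 2 with he₀
  have hzR : (2 : ℝ) ≤ z := by exact_mod_cast hz
  have hD1 := one_le_oddConst z
  set ω := weightRoot z with hω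
  have hω0 : 0 < ω := weightRoot_pos z
  set X : ℝ := (exp 1 * H) ^ (z ^ k + E) * (z : ℝ) ^ (2 * E + 4) *
        exp (2 * H / ((z : ℝ) - 1) + e₀) with hX
  have hX0 : 0 < X := by positivity
  have e1 : H * oddConst z + e₀ ≤ H * (2 * c * exp (2 / ((z : ℝ) - 1)) * ω ^ 2) * exp (e₀ / H) := by
    have a1 : e₀ / H + 1 ≤ exp (e₀ / H) := add_one_le_exp _
    have a2 := oddConst_le_coprimeConst_mul hz
    calc H * oddConst z + e₀ ≤ H * oddConst z * (e₀ / H + 1) := by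
          have : 0 ≤ e₀ := by positivity
          field_simp
          nlinarith
      _ ≤ _ := by gcongr
  have e2 : (H * oddConst z + e₀) ^ H ≤
      (H : ℝ) ^ H * (2 * c) ^ H * exp (2 * H / ((z : ℝ) - 1) + e₀) * (ω ^ H * ω ^ H) := by
    refine (pow_le_pow_left₀ (by positivity) e1 H).trans (le_of_eq ?_)
    rw [exp_add, show 2 * (H : ℝ) / ((z : ℝ) - 1) = H * (2 / ((z : ℝ) - 1)) by ring, exp_nat_mul,
      show e₀ = H * (e₀ / H) by field_simp, exp_nat_mul]
    rw [show (H : ℝ) * (e₀ / H) / H = e₀ / H by field_simp]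
    simp only [mul_pow]
    ring
  have e3 : (W : ℝ) ≤ X * (((H : ℝ) / exp 1) ^ H * (2 * c) ^ H) := by
    refine le_of_mul_le_mul_right ?_ (show 0 < ω ^ H * ω ^ H by positivity)
    calc _ ≤ _ := h2
      _ ≤ (exp 1 * H) ^ (z ^ k + E) * exp (-(H : ℝ)) *
          ((H : ℝ) ^ H * (2 * c) ^ H * exp (2 * H / ((z : ℝ) - 1) + e₀) * (ω ^ H * ω ^ H)) *
          (z : ℝ) ^ (2 * E + 4) := by gcongr
      _ = _ := by
          rw [hX, div_pow, ← exp_nat_mul, mul_one, exp_neg]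
          field_simp
  have e4 : (W : ℝ) ≤ X * (H.factorial * (2 * c) ^ H) := by
    refine e3.trans ?_
    have := div_exp_pow_le_factorial H
    gcongr
  have e5 : (4 : ℝ) ^ H * (H.factorial : ℝ) ^ 2 ≤ (n + 1) ^ 2 * n.factorial := by
    exact_mod_cast four_pow_mul_factorial_sq_le hn hH
  have e6 : c ^ (2 * H) ≤ c ^ n := pow_le_pow_of_le_one hc0.le hc1 (by omega)
  calc (coprimePermCount n : ℝ) ≤ (W : ℝ) ^ 2 := by exact_mod_cast h1
    _ ≤ (X * (H.factorial * (2 * c) ^ H)) ^ 2 := by gcongr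
    _ = (4 ^ H * (H.factorial : ℝ) ^ 2) * c ^ (2 * H) * X ^ 2 := by
        rw [show (4 : ℝ) = 2 ^ 2 by norm_num, ← pow_mul, pow_mul c]
        ring
    _ ≤ ((n + 1) ^ 2 * n.factorial) * c ^ n * X ^ 2 := by gcongr
    _ = _ := by ring

theorem le_coprimePermCount {n h z k R : ℕ} (hn : 2 ≤ n) (hh : h = n / 2) (hz : 2 ≤ z) (hk : 1 ≤ k)
    (hRP : R ≤ (reservedPrimes z h).card) (he : 2 ^ k * (z : ℝ) ^ 2 ≤ h)
    (hRP' : ((R : ℝ) + 1) * (3 * h) ≤ (reservedPrimes z h).card *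
      ((reservedPrimes z h).card - Nat.log 2 (2 * h + 1) * (3 * h / (z : ℝ))))
    {y E s : ℝ} (hy : 1 ≤ y) (hs : ∑ p ∈ oddPrimes z, 1 / (p : ℝ) ≤ s)
    (hE : 3 * h * exp (y * s) / y ^ k ≤ E)
    (hR : 2 * (2 ^ k * (z : ℝ) ^ 2) + (1 + (z : ℝ) ^ 2) * E +
      Nat.log 2 (2 * h + 1) * (3 * h / (z : ℝ)) * exp s + (z : ℝ) ^ (2 * k) + 2 ≤ R) :
    n.factorial * coprimeConst ^ n ≤ coprimePermCount n *
      (n * (exp 1 * h * (3 * h : ℝ) ^ (6 * R) * (z : ℝ) ^ 2) ^ 2) := by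
  subst hh
  set h := n / 2 with hh
  have hh1 : 1 ≤ h := by omega
  have hhR : (1 : ℝ) ≤ h := by exact_mod_cast hh1
  have he2 : n % 2 ≤ 1 := by omega
  have h1 := sq_le_coprimePermCount n
  have h2 := le_card_coprime_matching (equiLabels_succ h) (equiLabels_odd h (n % 2) he2)
    (fun j => ⟨j.1 + n % 2, by ring⟩) hz hk (reservedPrimes z h)
    (fun p hp => reservedPrimes_spec hz he2 hp) hRP he hRP' hy hs hE hR
  set V := (Finset.univ.filter fun f : Equiv.Perm (Fin (n / 2)) =>
      ∀ i, Nat.Coprime (i.1 + 1) (2 * (f i).1 + 1 + 2 * (n % 2))).card with hV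
  change _ ≤ (V : ℝ) * _ * _ at h2
  set c := coprimeConst with hc
  have hc0 : 0 < c := coprimeConst_pos
  have hc1 : c ≤ 1 := coprimeConst_le_one
  have hzR : (2 : ℝ) ≤ z := by exact_mod_cast hz
  have hD := coprimeConst_mul_le hz
  set ω := weightRoot z with hω
  have hω0 : 0 < ω := weightRoot_pos z
  have e1 : ((h : ℝ) / exp 1) ^ h * (2 * c) ^ h ≤ V * (3 * h : ℝ) ^ (6 * R) * (z : ℝ) ^ 2 := by
    refine le_of_mul_le_mul_right ?_ (show 0 < ω ^ h * ω ^ h by positivity)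
    calc _ = (h * (2 * c * ω ^ 2) / exp 1) ^ h := by
          simp only [mul_pow, div_pow]; ring
      _ ≤ (h * oddConst z / exp 1) ^ h := by gcongr
      _ ≤ _ := h2
      _ = _ := by ring
  have e2 : (h.factorial : ℝ) * (2 * c) ^ h ≤
      V * (exp 1 * h * (3 * h : ℝ) ^ (6 * R) * (z : ℝ) ^ 2) := by
    calc _ ≤ (exp 1 * h * ((h : ℝ) / exp 1) ^ h) * (2 * c) ^ h := by
          have := factorial_le_mul_div_exp_pow h hh1
          gcongr
      _ = exp 1 * h * (((h : ℝ) / exp 1) ^ h * (2 * c) ^ h) := by ring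
      _ ≤ exp 1 * h * (V * (3 * h : ℝ) ^ (6 * R) * (z : ℝ) ^ 2) := by gcongr
      _ = _ := by ring
  have e3 : (n.factorial : ℝ) ≤ n * (4 ^ h * (h.factorial : ℝ) ^ 2) := by
    exact_mod_cast factorial_le_four_pow_mul (by omega) hh
  have e4 : c ^ n ≤ c ^ (2 * h) := pow_le_pow_of_le_one hc0.le hc1 (by omega)
  have e5 : (V : ℝ) ^ 2 ≤ coprimePermCount n := by exact_mod_cast h1
  calc _ ≤ n * (4 ^ h * (h.factorial : ℝ) ^ 2) * c ^ (2 * h) := by gcongr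
    _ = n * (h.factorial * (2 * c) ^ h) ^ 2 := by
        rw [show (4 : ℝ) = 2 ^ 2 by norm_num, ← pow_mul, pow_mul c]
        ring
    _ ≤ n * (V * (exp 1 * h * (3 * h : ℝ) ^ (6 * R) * (z : ℝ) ^ 2)) ^ 2 := by gcongr
    _ = (V : ℝ) ^ 2 * (n * (exp 1 * h * (3 * h : ℝ) ^ (6 * R) * (z : ℝ) ^ 2) ^ 2) := by ring
    _ ≤ _ := by gcongr

theorem add_one_le_exp_div_eight {m : ℝ} (hm : 1000 ≤ m) : 1 + m ≤ exp (m / 8) := by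
  have := quadratic_le_exp_of_nonneg (x := m / 8) (by linarith)
  nlinarith

theorem exp_le_sqrt_mul_log {l : ℝ} (hl : 0 < l) (hm : 1000 ≤ log l) :
    exp (log l / 2) ≤ sqrt (l * log l) := by
  refine le_sqrt_of_sq_le ?_
  rw [← exp_nat_mul, Nat.cast_ofNat, mul_div_cancel₀ _ (by norm_num : (2 : ℝ) ≠ 0), exp_log hl]
  nlinarith

theorem pow_four_le_sqrt_mul_log {l : ℝ} (hl : 0 < l) (hm : 1000 ≤ log l) :
    (1 + log l) ^ 4 ≤ sqrt (l * log l) := by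
  refine le_trans ?_ (exp_le_sqrt_mul_log hl hm)
  rw [show log l / 2 = (4 : ℕ) * (log l / 8) by push_cast; ring, exp_nat_mul]
  exact pow_le_pow_left₀ (by linarith) (add_one_le_exp_div_eight hm) 4

/-- The scale in which all the error terms are polynomial. -/
noncomputable def errorScale (n : ℕ) : ℝ :=
  exp (sqrt (log n * log (log n)) / 320)

theorem log_log_le_errorScale {n : ℕ} (hm : 1000 ≤ log (log n)) :
    log (log n) / 320 ≤ errorScale n := by
  have hl : 0 < log n := by
    by_contra h
    have : log (n : ℝ) = 0 := le_antisymm (not_lt.1 h) (log_natCast_nonneg n)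
    rw [this] at hm; simp at hm; linarith
  have h1 := pow_four_le_sqrt_mul_log hl hm
  have h2 := add_one_le_exp (sqrt (log n * log (log n)) / 320)
  have h3 : 1 + log (log n) ≤ (1 + log (log n)) ^ 4 := le_self_pow₀ (by linarith) (by norm_num)
  unfold errorScale
  linarith

theorem exists_parameters {n : ℕ} (hm : 1000 ≤ log (log n)) :
    1000 ≤ errorScale n ∧ log n ≤ errorScale n ∧ ∃ (L k : ℕ) (y : ℝ), 1 ≤ k ∧ 1 ≤ y ∧
      errorScale n ^ 19 ≤ 2 ^ (L + 1) ∧ 2 ^ (L + 1) ≤ errorScale n ^ 20 ∧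
      exp (4 * (1 + log L)) ≤ errorScale n ∧
      exp (y * (4 * (1 + log L))) / y ^ k ≤ 1 / errorScale n ^ 80 ∧
      ((2 : ℝ) ^ (L + 1)) ^ (2 * k) * errorScale n ^ 100 ≤ n := by
  have hl : 0 < log n := by
    by_contra h
    have : log (n : ℝ) = 0 := le_antisymm (not_lt.1 h) (log_natCast_nonneg n)
    rw [this] at hm; simp at hm; linarith
  have hn0 : (0 : ℝ) < n := by
    rcases Nat.eq_zero_or_pos n with h | h
    · rw [h] at hl; simp at hl
    · exact_mod_cast h
  have hx4 := pow_four_le_sqrt_mul_log hl hm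
  have hx2 := exp_le_sqrt_mul_log hl hm
  have hu : errorScale n = exp (sqrt (log n * log (log n)) / 320) := rfl
  set l := log (n : ℝ) with hldef
  set m := log l with hmdef
  set x := sqrt (l * m) with hx
  set u := errorScale n with hudef
  have hm0 : 0 < m := by linarith
  have hm4 : 1000 ^ 3 * (1 + m) ≤ x := by
    refine le_trans ?_ hx4
    rw [show (1 + m) ^ 4 = (1 + m) ^ 3 * (1 + m) by ring]
    gcongr
    linarith
  have hx0 : 0 < x := by nlinarith
  have hxx : x * x = l * m := mul_self_sqrt (by positivity)
  have hml : m ≤ l := (log_le_sub_one_of_pos hl).trans (by linarith)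
  have hxl : x ≤ l := by
    rw [hx]; refine sqrt_le_iff.2 ⟨hl.le, ?_⟩; nlinarith
  have hupow : ∀ i : ℕ, u ^ i = exp (i * (x / 320)) := fun i => by rw [hu, exp_nat_mul]
  have hu1 : 1000 ≤ u := by
    have := add_one_le_exp (x / 320)
    rw [hu]; nlinarith
  have hlu : l ≤ u := by
    rw [hu, ← exp_log hl]
    exact exp_le_exp.2 (by linarith)
  have hlog2 := log_two_gt_d9
  have hlog2' := log_two_lt_d9
  have hlog2p : 0 < log 2 := by linarith
  obtain ⟨L, hL⟩ : ∃ L, L + 1 = ⌊x / (16 * log 2)⌋₊ := by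
    refine ⟨⌊x / (16 * log 2)⌋₊ - 1, Nat.sub_add_cancel (Nat.le_floor ?_)⟩
    rw [Nat.cast_one, le_div_iff₀ (by positivity)]
    nlinarith
  have hL1 : ((L : ℝ) + 1) * (16 * log 2) ≤ x := by
    rw [← le_div_iff₀ (by positivity)]
    have := Nat.floor_le (show 0 ≤ x / (16 * log 2) by positivity)
    rw [← hL] at this
    exact_mod_cast this
  have hL2 : x ≤ ((L : ℝ) + 2) * (16 * log 2) := by
    rw [← div_le_iff₀ (by positivity)]
    have := Nat.lt_floor_add_one (x / (16 * log 2))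
    rw [← hL] at this
    push_cast at this
    linarith
  have hzexp : (2 : ℝ) ^ (L + 1) = exp ((L + 1) * log 2) := by
    rw [← exp_log (show (0 : ℝ) < 2 by norm_num), ← exp_nat_mul, exp_log (by norm_num)]
    push_cast; rfl
  have hz20 : (2 : ℝ) ^ (L + 1) ≤ u ^ 20 := by
    rw [hzexp, hupow]
    exact exp_le_exp.2 (by push_cast; linarith)
  have hz19 : u ^ 19 ≤ (2 : ℝ) ^ (L + 1) := by
    rw [hzexp, hupow]
    refine exp_le_exp.2 ?_
    push_cast
    nlinarith
  have hL0 : (1 : ℝ) ≤ L := by nlinarith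
  have hlogL : log L ≤ m := by
    refine log_le_log (by linarith) ?_
    nlinarith
  have hk1 : 1 ≤ ⌊4 * l / x⌋₊ := by
    refine Nat.le_floor ?_
    rw [Nat.cast_one, le_div_iff₀ hx0]
    linarith
  have hk2 : (⌊4 * l / x⌋₊ : ℝ) * x ≤ 4 * l := by
    rw [← le_div_iff₀ hx0]
    exact Nat.floor_le (by positivity)
  have hk3 : 4 * l ≤ ((⌊4 * l / x⌋₊ : ℝ) + 1) * x := by
    rw [← div_le_iff₀ hx0]
    exact (Nat.lt_floor_add_one _).le
  refine ⟨hu1, hlu, L, ⌊4 * l / x⌋₊, exp (m / 8), hk1, one_le_exp (by linarith), hz19, hz20, ?_, ?_, ?_⟩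
  · rw [hu]; exact exp_le_exp.2 (by linarith)
  · set k := ⌊4 * l / x⌋₊
    rw [hupow, ← exp_nat_mul, ← exp_sub, one_div, ← exp_neg]
    refine exp_le_exp.2 ?_
    push_cast
    have e1 : x / 2 - m / 8 ≤ k * (m / 8) := by
      have : 4 * (x * x) ≤ (k + 1) * m * x := by rw [hxx]; nlinarith
      have : 4 * x ≤ (k + 1) * m := by
        refine le_of_mul_le_mul_right ?_ hx0; linarith
      linarith
    have e2 : exp (m / 8) * (4 * (1 + log L)) + m / 8 ≤ x / 4 := by
      have a1 := add_one_le_exp_div_eight hm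
      have a2 : exp (m / 2) = exp (m / 8) ^ 4 := by rw [← exp_nat_mul]; push_cast; ring_nf
      rw [a2] at hx2
      set v := exp (m / 8)
      have a3 : v * (4 * (1 + log L)) ≤ v * (4 * v) := by gcongr; linarith
      have a4 : 1000 * 1000 * (v * v) ≤ v ^ 4 := by
        rw [show v ^ 4 = v * v * (v * v) by ring]
        have : 1000 ≤ v := by linarith
        gcongr
      nlinarith
    linarith
  · set k := ⌊4 * l / x⌋₊
    have e1 : ((2 : ℝ) ^ (L + 1)) ^ (2 * k) ≤ (u ^ 20) ^ (2 * k) := by gcongr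
    rw [← pow_mul u, hupow] at e1
    calc _ ≤ exp ((20 * (2 * k) : ℕ) * (x / 320)) * u ^ 100 := by gcongr
      _ ≤ exp l := by
          rw [hupow, ← exp_add]
          refine exp_le_exp.2 ?_
          push_cast
          linarith
      _ = n := exp_log hn0

theorem exists_scaled_parameters {n : ℕ} (hm : 1000 ≤ log (log n)) :
    1000 ≤ errorScale n ∧ log n ≤ errorScale n ∧ ∃ (L k : ℕ) (y S : ℝ), 1 ≤ k ∧ 1 ≤ y ∧
      errorScale n ^ 19 ≤ 2 ^ (L + 1) ∧ 2 ^ (L + 1) ≤ errorScale n ^ 20 ∧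
      exp (4 * (1 + log L)) ≤ errorScale n ∧
      (∀ H : ℕ, H ≤ n → 3 * H * exp (y * (4 * (1 + log L))) / y ^ k ≤ 3 * S) ∧
      errorScale n ^ 20 ≤ S ∧ ((2 : ℝ) ^ (L + 1)) ^ (2 * k) ≤ S ∧
      2 ^ k * ((2 : ℝ) ^ (L + 1)) ^ 2 ≤ S * errorScale n ^ 20 ∧ n = S * errorScale n ^ 80 := by
  obtain ⟨hu, hlu, L, k, y, hk, hy, hz19, hz20, hs, hE, hzk⟩ := exists_parameters hm
  refine ⟨hu, hlu, L, k, y, n / errorScale n ^ 80, hk, hy, hz19, hz20, hs, ?_⟩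
  set u := errorScale n
  have hu0 : 0 < u := by linarith
  obtain ⟨S, hS⟩ : ∃ S : ℝ, S = n / u ^ 80 := ⟨_, rfl⟩
  rw [← hS]
  have hS' : (n : ℝ) = S * u ^ 80 := by rw [hS]; field_simp
  have hz2 : (2 : ℝ) ≤ 2 ^ (L + 1) := le_self_pow₀ (by norm_num) (by omega)
  set z : ℝ := 2 ^ (L + 1) with hzdef
  have hzkS : z ^ (2 * k) * u ^ 20 ≤ S := by
    refine le_of_mul_le_mul_right ?_ (show 0 < u ^ 80 by positivity)
    rw [← hS']; linarith
  have hz1k : 1 ≤ z ^ (2 * k) := one_le_pow₀ (by linarith)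
  have hu20 : 1 ≤ u ^ 20 := one_le_pow₀ (by linarith)
  refine ⟨fun H hH => ?_, by nlinarith, by nlinarith, ?_, hS'⟩
  · rw [mul_div_assoc]
    calc _ ≤ 3 * (n : ℝ) * (1 / u ^ 80) := by gcongr
      _ = 3 * S := by rw [hS]; ring
  · have e1 : (2 : ℝ) ^ k ≤ z ^ (2 * k) :=
      (pow_le_pow_left₀ (by norm_num) hz2 k).trans (pow_le_pow_right₀ (by linarith) (by omega))
    calc 2 ^ k * z ^ 2 ≤ z ^ (2 * k) * (u ^ 20) ^ 2 := by gcongr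
      _ = z ^ (2 * k) * u ^ 20 * u ^ 20 := by ring
      _ ≤ _ := by gcongr

theorem mul_pow_lt_scale {u S : ℝ} (hu : 1000 ≤ u) (hS : 0 ≤ S) (i j : ℕ) (hij : i < j) :
    1000 * (S * u ^ i) ≤ S * u ^ j := by
  have h1 : u ^ (i + 1) ≤ u ^ j := pow_le_pow_right₀ (by linarith) hij
  calc 1000 * (S * u ^ i) ≤ u * (S * u ^ i) := by gcongr
    _ = S * u ^ (i + 1) := by ring
    _ ≤ _ := by gcongr

theorem le_exp_mul_of_le_pow {u z : ℝ} (hu : 0 ≤ u) (h : z ≤ u ^ 20) : z ≤ exp (20 * u) := by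
  refine h.trans ?_
  have := add_one_le_exp u
  rw [show 20 * u = (20 : ℕ) * u by norm_num, exp_nat_mul]
  gcongr
  linarith

theorem coprimePermCount_le_exp {n : ℕ} (hm : 1000 ≤ log (log n)) :
    (coprimePermCount n : ℝ) ≤
      n.factorial * coprimeConst ^ n * exp (n / (2 * errorScale n)) := by
  obtain ⟨hu, hlu, L, k, y, S, hk, hy, hz19, hz20, -, hE, hSu, hzk, h2k, hS⟩ :=
    exists_scaled_parameters hm
  set u := errorScale n
  have hu0 : 0 < u := by linarith
  have hu1 : 1 ≤ u := by linarith
  have hS1 : 1 ≤ S := (one_le_pow₀ hu1).trans hSu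
  have hn0 : (0 : ℝ) < n := by rw [hS]; positivity
  have hn1 : 1 ≤ n := by exact_mod_cast hn0
  have hz2 : (2 : ℝ) ≤ 2 ^ (L + 1) := le_self_pow₀ (by norm_num) (by omega)
  set H := (n + 1) / 2 with hH
  have hHn : (H : ℝ) ≤ n := by exact_mod_cast (show H ≤ n by omega)
  have hmain := coprimePermCount_le (n := n) (H := H) (z := 2 ^ (L + 1)) (k := k)
    (E := ⌈3 * S⌉₊) hn1 hH (Nat.le_self_pow (by omega) 2) hy (sum_inv_oddPrimes_le_log L)
    ((hE H (by omega)).trans (Nat.le_ceil _))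
  have hES : (⌈3 * S⌉₊ : ℝ) ≤ 4 * S := by
    have := (Nat.ceil_lt_add_one (show 0 ≤ 3 * S by positivity)).le
    linarith
  set E := ⌈3 * S⌉₊
  push_cast at hmain
  set z : ℝ := 2 ^ (L + 1) with hz
  refine hmain.trans ?_
  have hc := coprimeConst_pos
  gcongr
  have hzk' : z ^ k ≤ S :=
    (pow_le_pow_right₀ (by linarith) (show k ≤ 2 * k by omega)).trans hzk
  have hexpn : (n : ℝ) ≤ exp u := by
    rw [← exp_log hn0]; exact exp_le_exp.2 hlu
  have hexp1 : 2 ≤ exp u := by have := add_one_le_exp u; linarith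
  have b1 : (n : ℝ) + 1 ≤ exp (2 * u) := by
    rw [two_mul, exp_add]; nlinarith
  have b2 : exp 1 * H ≤ exp (2 * u) := by
    rw [two_mul, exp_add]; gcongr; linarith
  have b3 := le_exp_mul_of_le_pow hu0.le hz20
  have b4 : 2 * H / (z - 1) ≤ 4 * (S * u ^ 61) := by
    rw [div_le_iff₀ (by linarith)]
    have e : u ^ 19 ≤ 2 * (z - 1) := by linarith
    calc 2 * (H : ℝ) ≤ 2 * (S * u ^ 80) := by rw [← hS]; linarith
      _ = 2 * (S * u ^ 61) * u ^ 19 := by ring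
      _ ≤ 2 * (S * u ^ 61) * (2 * (z - 1)) := by gcongr
      _ = _ := by ring
  calc _ ≤ (exp (2 * u) * (exp (2 * u) ^ (((2 ^ (L + 1)) ^ k + E)) * exp (20 * u) ^ (2 * E + 4) *
        exp (4 * (S * u ^ 61) + S * u ^ 20))) ^ 2 := by
        gcongr
    _ = exp (2 * (2 * u + (z ^ k + E) * (2 * u) + (2 * E + 4) * (20 * u) +
          (4 * (S * u ^ 61) + S * u ^ 20))) := by
        simp only [← exp_nat_mul, ← exp_add]
        push_cast
        rw [hz]
        ring_nf
    _ ≤ _ := by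
        refine exp_le_exp.2 ?_
        rw [le_div_iff₀ (by positivity), hS]
        have g := mul_pow_lt_scale hu (zero_le_one.trans hS1)
        have c1 : 2 * u + (z ^ k + E) * (2 * u) + (2 * E + 4) * (20 * u) ≤ 252 * (S * u ^ 1) := by
          have : 2 + (z ^ k + E) * 2 + (2 * E + 4) * 20 ≤ 252 * S := by linarith
          nlinarith
        calc _ ≤ 2 * (S * u ^ 61 + (4 * (S * u ^ 61) + S * u ^ 61)) * (2 * u) := by
              gcongr ?_ * _
              have := g 1 61 (by norm_num)
              have := g 20 61 (by norm_num)
              have : 0 ≤ S * u ^ 20 := by positivity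
              linarith
          _ = 24 * (S * u ^ 62) := by ring
          _ ≤ _ := by
              have := g 62 80 (by norm_num)
              have : 0 ≤ S * u ^ 62 := by positivity
              linarith

theorem le_card_reservedPrimes_of_scale {n z : ℕ} {u S : ℝ} (hu : 1000 ≤ u) (hSu : u ^ 20 ≤ S)
    (hS : n = S * u ^ 80) (hlu : log n ≤ u) (hz : (z : ℝ) ≤ u ^ 20) :
    S * u ^ 79 / 8 ≤ (reservedPrimes z (n / 2)).card := by
  refine le_trans ?_ (le_card_reservedPrimes z (n / 2))
  have hu1 : 1 ≤ u := by linarith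
  have hS1 : 1 ≤ S := (one_le_pow₀ hu1).trans hSu
  have g := mul_pow_lt_scale hu (zero_le_one.trans hS1)
  have h1 := g 0 80 (by norm_num)
  rw [pow_zero, mul_one, ← hS] at h1
  have hn2 : 1000 ≤ n := by exact_mod_cast (show (1000 : ℝ) ≤ n by linarith)
  have hhn : 2 * ((n / 2 : ℕ) : ℝ) ≤ n := by exact_mod_cast (show 2 * (n / 2) ≤ n by omega)
  have hhn' : (n : ℝ) ≤ 3 * (n / 2 : ℕ) := by exact_mod_cast (show n ≤ 3 * (n / 2) by omega)
  set h : ℝ := ((n / 2 : ℕ) : ℝ)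
  have hlog2 := log_two_gt_d9
  have l0 : 0 < log h := log_pos (by linarith)
  have l1 : log h ≤ u := (log_le_log (by linarith) (by linarith)).trans hlu
  have l2 : log (h + 1) ≤ u := (log_le_log (by linarith) (by linarith)).trans hlu
  have l3 : u ≤ S := (le_self_pow₀ hu1 (by norm_num)).trans hSu
  have l4 : S * u ^ 79 / 5 ≤ (h * log 2 - log (h + 1)) / log h := by
    rw [le_div_iff₀ l0]
    calc S * u ^ 79 / 5 * log h ≤ S * u ^ 79 / 5 * u := by gcongr
      _ = (n : ℝ) / 5 := by rw [hS]; ring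
      _ ≤ _ := by nlinarith
  have l5 : sqrt (2 * h + 1) ≤ S * u ^ 78 := by
    refine sqrt_le_iff.2 ⟨by positivity, ?_⟩
    calc (2 * h + 1 : ℝ) ≤ 1 * (1000 * n) := by linarith
      _ ≤ S * (S * u ^ 156) := by
          rw [hS]
          exact mul_le_mul hS1 (g 80 156 (by norm_num)) (by positivity) (by positivity)
      _ = _ := by ring
  have l6 := g 0 78 (by norm_num)
  rw [pow_zero] at l6
  have l7 := g 78 79 (by norm_num)
  linarith

theorem natLog_le_of_scale {n : ℕ} {u : ℝ} (hu : 1000 ≤ u) (hn : 2 ≤ n) (hlu : log n ≤ u) :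
    (Nat.log 2 (2 * (n / 2) + 1) : ℝ) ≤ 4 * u := by
  have hlog2 := log_two_gt_d9
  have hlog2' := log_two_lt_d9
  have e1 : (Nat.log 2 (2 * (n / 2) + 1) : ℝ) * log 2 ≤ log (2 * n) := by
    rw [← log_pow]
    refine log_le_log (by positivity) ?_
    have := Nat.pow_log_le_self 2 (show 2 * (n / 2) + 1 ≠ 0 by omega)
    exact_mod_cast this.trans (by omega)
  rw [log_mul (by norm_num) (by positivity)] at e1
  nlinarith

theorem le_coprimePermCount_exp {n : ℕ} (hm : 1000 ≤ log (log n)) :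
    n.factorial * coprimeConst ^ n ≤ coprimePermCount n * exp (n / errorScale n) := by
  obtain ⟨hu, hlu, L, k, y, S, hk, hy, hz19, hz20, hs, hE, hSu, hzk, h2k, hS⟩ :=
    exists_scaled_parameters hm
  set u := errorScale n
  have hu0 : 0 < u := by linarith
  have hu1 : 1 ≤ u := by linarith
  have hS1 : 1 ≤ S := (one_le_pow₀ hu1).trans hSu
  have g := mul_pow_lt_scale hu (zero_le_one.trans hS1)
  have hSi : ∀ i : ℕ, 1 ≤ S * u ^ i := fun i => one_le_mul_of_one_le_of_one_le hS1 (one_le_pow₀ hu1)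
  have hn1 := g 0 80 (by norm_num)
  rw [pow_zero, mul_one, ← hS] at hn1
  have hn2 : 1000 ≤ n := by exact_mod_cast (show (1000 : ℝ) ≤ n by linarith)
  have hn0 : (0 : ℝ) < n := by linarith
  have hP := le_card_reservedPrimes_of_scale (z := 2 ^ (L + 1)) hu hSu hS hlu (by exact_mod_cast hz20)
  have hlogb := natLog_le_of_scale hu (by omega) hlu
  have hhn : 2 * ((n / 2 : ℕ) : ℝ) ≤ n := by exact_mod_cast (show 2 * (n / 2) ≤ n by omega)
  have hhn' : (n : ℝ) ≤ 3 * (n / 2 : ℕ) := by exact_mod_cast (show n ≤ 3 * (n / 2) by omega)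
  have h3z : 3 * ((n / 2 : ℕ) : ℝ) / 2 ^ (L + 1) ≤ 3 * (S * u ^ 61) := by
    rw [div_le_iff₀ (by positivity)]
    calc 3 * ((n / 2 : ℕ) : ℝ) ≤ 3 * (S * u ^ 80) := by rw [← hS]; linarith
      _ = 3 * (S * u ^ 61) * u ^ 19 := by ring
      _ ≤ _ := by gcongr
  have hb : Nat.log 2 (2 * (n / 2) + 1) * (3 * ((n / 2 : ℕ) : ℝ) / 2 ^ (L + 1)) ≤
      12 * (S * u ^ 62) := by
    calc _ ≤ 4 * u * (3 * (S * u ^ 61)) := by gcongr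
      _ = _ := by ring
  obtain ⟨R, hR1, hR2⟩ : ∃ R : ℕ, S * u ^ 65 ≤ R ∧ (R : ℝ) ≤ 2 * (S * u ^ 65) :=
    ⟨⌈S * u ^ 65⌉₊, Nat.le_ceil _, by
      have := (Nat.ceil_lt_add_one (show 0 ≤ S * u ^ 65 by positivity)).le
      have := hSi 65
      linarith⟩
  have hmain := le_coprimePermCount (n := n) (h := n / 2) (z := 2 ^ (L + 1)) (k := k) (R := R)
    (y := y) (E := 3 * S) (s := 4 * (1 + log L)) (by omega) rfl
    (Nat.le_self_pow (by omega) 2) hk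
  push_cast at hmain
  set z : ℝ := 2 ^ (L + 1)
  set P := (reservedPrimes (2 ^ (L + 1)) (n / 2)).card
  set b := (Nat.log 2 (2 * (n / 2) + 1) : ℝ) * (3 * ((n / 2 : ℕ) : ℝ) / z)
  have hz1 : 1 ≤ z := one_le_pow₀ (by norm_num)
  have g65 := g 65 77 (by norm_num)
  have g77 := g 77 79 (by norm_num)
  have := hSi 65
  have := hSi 77
  refine (hmain ?_ ?_ ?_ hy (sum_inv_oddPrimes_le_log L) (hE _ (by omega)) ?_).trans ?_
  · exact_mod_cast (show (R : ℝ) ≤ P by linarith)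
  · have := g 20 80 (by norm_num)
    linarith
  · have e1 : S * u ^ 79 / 16 ≤ P - b := by
      have := g 62 79 (by norm_num)
      have := hSi 62
      linarith
    calc ((R : ℝ) + 1) * (3 * (n / 2 : ℕ)) ≤ (3 * (S * u ^ 65)) * (2 * (S * u ^ 80)) :=
          mul_le_mul (by linarith) (by rw [← hS]; linarith) (by positivity) (by positivity)
      _ = 6 * (S * u ^ 65) * (S * u ^ 80) := by ring
      _ ≤ (S * u ^ 78 / 128) * (S * u ^ 80) := by
          gcongr
          have := g 65 78 (by norm_num)
          linarith
      _ = S * u ^ 79 / 8 * (S * u ^ 79 / 16) := by ring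
      _ ≤ _ := by gcongr
  · have e1 : (1 + z ^ 2) * (3 * S) ≤ 6 * (S * u ^ 40) := by
      calc (1 + z ^ 2) * (3 * S) ≤ (u ^ 40 + (u ^ 20) ^ 2) * (3 * S) := by
            gcongr
            exact one_le_pow₀ hu1
        _ = _ := by ring
    have e2 : b * exp (4 * (1 + log L)) ≤ 12 * (S * u ^ 63) := by
      calc _ ≤ 12 * (S * u ^ 62) * u := by gcongr
        _ = _ := by ring
    have := g 20 65 (by norm_num)
    have := g 40 65 (by norm_num)
    have := g 63 65 (by norm_num)
    have h0 := g 0 65 (by norm_num)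
    rw [pow_zero] at h0
    have := hSi 20
    have := hSi 40
    have := hSi 63
    linarith
  · gcongr
    have hexpn : (n : ℝ) ≤ exp u := by
      rw [← exp_log hn0]; exact exp_le_exp.2 hlu
    have hexp1 : exp 1 ≤ exp u := exp_le_exp.2 hu1
    have hexp2 : 3 ≤ exp u := by have := add_one_le_exp u; linarith
    have b2 : exp 1 * (n / 2 : ℕ) ≤ exp (2 * u) := by
      rw [two_mul, exp_add]; gcongr; linarith
    have b2' : 3 * ((n / 2 : ℕ) : ℝ) ≤ exp (2 * u) := by
      rw [two_mul, exp_add]; gcongr; linarith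
    have b3 := le_exp_mul_of_le_pow hu0.le hz20
    calc _ ≤ exp u * (exp (2 * u) * exp (2 * u) ^ (6 * R) * exp (20 * u) ^ 2) ^ 2 := by gcongr
      _ = exp (u + 2 * (2 * u + 6 * R * (2 * u) + 2 * (20 * u))) := by
          simp only [← exp_nat_mul, ← exp_add]
          push_cast
          ring_nf
      _ ≤ _ := by
          refine exp_le_exp.2 ?_
          rw [le_div_iff₀ hu0, hS]
          calc _ ≤ (u + 2 * (2 * u + 6 * (2 * (S * u ^ 65)) * (2 * u) + 2 * (20 * u))) * u := by
                gcongr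
            _ = 85 * u ^ 2 + 48 * (S * u ^ 67) := by ring
            _ ≤ 85 * (S * u ^ 2) + 48 * (S * u ^ 67) := by
                gcongr
                exact le_mul_of_one_le_left (by positivity) hS1
            _ ≤ _ := by
                have := g 2 80 (by norm_num)
                have := g 67 80 (by norm_num)
                have := hSi 80
                linarith

theorem le_log_log_of_exp_exp_le {n : ℕ} {M : ℝ} (h : exp (exp M) ≤ n) : M ≤ log (log n) := by
  have h0 : (0 : ℝ) < n := (exp_pos _).trans_le h
  have h1 : exp M ≤ log n := (le_log_iff_exp_le h0).2 h
  exact (le_log_iff_exp_le ((exp_pos _).trans_le h1)).2 h1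

theorem sub_le_mul_exp_neg {c η : ℝ} (hc0 : 0 ≤ c) (hc1 : c ≤ 1) (hη : 0 ≤ η) :
    c - η ≤ c * exp (-η) := by
  have := add_one_le_exp (-η)
  nlinarith

theorem mul_exp_half_le_add {c η : ℝ} (hc0 : 0 ≤ c) (hc1 : c ≤ 1) (hη : 0 ≤ η) (hη1 : η ≤ 1) :
    c * exp (η / 2) ≤ c + η := by
  have h1 := add_one_le_exp (-(η / 2))
  have h2 : exp (η / 2) * exp (-(η / 2)) = 1 := by rw [← exp_add, add_neg_cancel, exp_zero]
  have h3 := exp_pos (η / 2)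
  have h4 : exp (η / 2) ≤ 1 + η := by
    by_contra! h
    nlinarith
  nlinarith

/-- `C(n) = n! · (c + exp(-Ω((log n · log log n)^{1/2})))^n`: there are `δ > 0` and `N`
such that for all `n ≥ N`,
`n!·(c − exp(−δ√(log n log log n)))^n ≤ C(n) ≤ n!·(c + exp(−δ√(log n log log n)))^n`. -/
theorem coprimePermCount_asymptotic :
    ∃ δ : ℝ, 0 < δ ∧ ∃ N : ℕ, ∀ n : ℕ, N ≤ n →
      (n.factorial : ℝ) *
          (coprimeConst - Real.exp (-δ * Real.sqrt (Real.log n * Real.log (Real.log n)))) ^ n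
        ≤ (coprimePermCount n : ℝ) ∧
      (coprimePermCount n : ℝ) ≤
        (n.factorial : ℝ) *
          (coprimeConst + Real.exp (-δ * Real.sqrt (Real.log n * Real.log (Real.log n)))) ^ n := by
  obtain ⟨N, hN⟩ := exists_nat_ge (exp (exp (max 1000 (320 / coprimeConst))))
  refine ⟨1 / 320, by norm_num, N, fun n hn => ?_⟩
  have hM := le_log_log_of_exp_exp_le (hN.trans (Nat.cast_le.2 hn))
  have hm := (le_max_left _ _).trans hM
  have hu : coprimeConst⁻¹ ≤ errorScale n := by
    have := ((le_max_right _ _).trans hM).trans' (le_of_eq (by ring : 320 * coprimeConst⁻¹ = _))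
    linarith [log_log_le_errorScale hm]
  have hη : exp (-(1 / 320) * sqrt (log n * log (log n))) = (errorScale n)⁻¹ := by
    rw [errorScale, ← exp_neg]
    ring_nf
  rw [hη]
  have hupper := coprimePermCount_le_exp hm
  have hlower := le_coprimePermCount_exp hm
  have hu0 : 0 < errorScale n := exp_pos _
  have hu1 : 1 ≤ errorScale n := one_le_exp (by positivity)
  set η := (errorScale n)⁻¹ with hηdef
  have hc0 := coprimeConst_pos
  have hc1 := coprimeConst_le_one
  have hη0 : 0 ≤ η := by positivity
  have hηc : η ≤ coprimeConst := inv_le_of_inv_le₀ hc0 hu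
  constructor
  · have h1 : (coprimeConst - η) ^ n ≤ (coprimeConst * exp (-η)) ^ n :=
      pow_le_pow_left₀ (by linarith) (sub_le_mul_exp_neg hc0.le hc1 hη0) n
    calc _ ≤ n.factorial * (coprimeConst * exp (-η)) ^ n := by gcongr
      _ = n.factorial * coprimeConst ^ n * exp (-(n / errorScale n)) := by
          rw [mul_pow, ← exp_nat_mul, div_eq_mul_inv, ← hηdef]
          ring_nf
      _ ≤ coprimePermCount n * exp (n / errorScale n) * exp (-(n / errorScale n)) := by gcongr
      _ = _ := by rw [mul_assoc, ← exp_add, add_neg_cancel, exp_zero, mul_one]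
  · have h1 : (coprimeConst * exp (η / 2)) ^ n ≤ (coprimeConst + η) ^ n :=
      pow_le_pow_left₀ (by positivity)
        (mul_exp_half_le_add hc0.le hc1 hη0 (inv_le_one_of_one_le₀ hu1)) n
    refine hupper.trans ?_
    calc _ = n.factorial * (coprimeConst * exp (η / 2)) ^ n := by
          rw [mul_pow, ← exp_nat_mul, hηdef, mul_assoc]
          ring_nf
      _ ≤ _ := by gcongr
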